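/- Let ω^T ∈ A^{[AB]}(T) and let u* be the backward-forward solution associated to ω^T. Then the initial positions of the AB-genuine/interface characteristics of u* cover the whole line: ℝ = ∪_{x ∈ ℝ} C_0(u*, x). -/

import Mathlib

open MeasureTheory Set Filter

noncomputable section

/-- The discontinuous flux `f(x,u) = f_l(u)` for `x < 0`, `f_r(u)` for `x > 0`
(the value at the interface is taken to be `f_r(u)`). -/
def dflux (fl fr : ℝ → ℝ) (x u : ℝ) : ℝ := if x < 0 then fl u else fr u

/-- The connection function `c^{AB}`. -/
def cAB (A B : ℝ) (x : ℝ) : ℝ := if x ≤ 0 then A else B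

/-- An `AB`-entropy solution of `u_t + f(x,u)_x = 0` on `ℝ × [0,∞)` with
initial datum `u0`, for the flux `f(x,·) = fl` on `x<0` and `fr` on `x>0`,
relative to the connection `(A,B)`.  The structure bundles the solution `u`
(as a function of `(x,t)`), its one-sided spatial limits `um x t = u(x-,t)` and
`up x t = u(x+,t)` (for `t > 0`), the weak (distributional) formulation, the
Kružkov entropy inequalities away from the interface, the `AB`-interface
entropy inequality, `L¹_loc`-continuity in time and the initial condition. -/
structure ABSol (fl fr : ℝ → ℝ) (A B : ℝ) (u0 : ℝ → ℝ) where
  u : ℝ → ℝ → ℝ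
  meas : Measurable (Function.uncurry u)
  bdd : ∃ M : ℝ, ∀ x t, |u x t| ≤ M
  um : ℝ → ℝ → ℝ
  up : ℝ → ℝ → ℝ
  um_spec : ∀ x t, 0 < t →
    Tendsto (fun y => u y t) (nhdsWithin x (Iio x)) (nhds (um x t))
  up_spec : ∀ x t, 0 < t →
    Tendsto (fun y => u y t) (nhdsWithin x (Ioi x)) (nhds (up x t))
  weak : ∀ φ : ℝ → ℝ → ℝ,
    ContDiff ℝ 1 (fun p : ℝ × ℝ => φ p.1 p.2) →
    HasCompactSupport (fun p : ℝ × ℝ => φ p.1 p.2) →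
    (∀ x t, t ≤ 0 → φ x t = 0) →
    (∫ p : ℝ × ℝ, (u p.1 p.2 * deriv (fun s => φ p.1 s) p.2 +
        dflux fl fr p.1 (u p.1 p.2) * deriv (fun y => φ y p.2) p.1)) = 0
  kruzkov_l : ∀ (k : ℝ) (φ : ℝ → ℝ → ℝ),
    ContDiff ℝ 1 (fun p : ℝ × ℝ => φ p.1 p.2) →
    HasCompactSupport (fun p : ℝ × ℝ => φ p.1 p.2) →
    (∀ x t, 0 ≤ φ x t) →
    (∀ x t, 0 ≤ x ∨ t ≤ 0 → φ x t = 0) →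
    0 ≤ ∫ p : ℝ × ℝ, (|u p.1 p.2 - k| * deriv (fun s => φ p.1 s) p.2 +
        Real.sign (u p.1 p.2 - k) * (fl (u p.1 p.2) - fl k) *
          deriv (fun y => φ y p.2) p.1)
  kruzkov_r : ∀ (k : ℝ) (φ : ℝ → ℝ → ℝ),
    ContDiff ℝ 1 (fun p : ℝ × ℝ => φ p.1 p.2) →
    HasCompactSupport (fun p : ℝ × ℝ => φ p.1 p.2) →
    (∀ x t, 0 ≤ φ x t) →
    (∀ x t, x ≤ 0 ∨ t ≤ 0 → φ x t = 0) →
    0 ≤ ∫ p : ℝ × ℝ, (|u p.1 p.2 - k| * deriv (fun s => φ p.1 s) p.2 +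
        Real.sign (u p.1 p.2 - k) * (fr (u p.1 p.2) - fr k) *
          deriv (fun y => φ y p.2) p.1)
  interfaceEntropy : ∀ φ : ℝ → ℝ → ℝ,
    ContDiff ℝ 1 (fun p : ℝ × ℝ => φ p.1 p.2) →
    HasCompactSupport (fun p : ℝ × ℝ => φ p.1 p.2) →
    (∀ x t, 0 ≤ φ x t) →
    (∀ x t, t ≤ 0 → φ x t = 0) →
    0 ≤ ∫ p : ℝ × ℝ, (|u p.1 p.2 - cAB A B p.1| * deriv (fun s => φ p.1 s) p.2 +
        Real.sign (u p.1 p.2 - cAB A B p.1) *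
          (dflux fl fr p.1 (u p.1 p.2) - dflux fl fr p.1 (cAB A B p.1)) *
          deriv (fun y => φ y p.2) p.1)
  timeCont : ∀ (r t₀ : ℝ), 0 ≤ t₀ →
    Tendsto (fun t => ∫ x in Icc (-r) r, |u x t - u x t₀|)
      (nhdsWithin t₀ (Ici 0)) (nhds 0)
  init : ∀ᵐ x : ℝ ∂volume, u x 0 = u0 x

/-- `AB`-genuine/interface characteristic for the `AB`-entropy solution `sol`,
on the time interval `[0,T]`, where `γ = f_l(A) = f_r(B)`. -/
def IsABgic (T : ℝ) (fl fr : ℝ → ℝ) (γ : ℝ) {A B : ℝ} {u0 : ℝ → ℝ}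
    (sol : ABSol fl fr A B u0) (ζ : ℝ → ℝ) : Prop :=
  (∃ K : NNReal, LipschitzOnWith K ζ (Icc 0 T)) ∧
  (∀ᵐ t ∂(volume.restrict (Icc 0 T)),
    (ζ t < 0 → HasDerivAt ζ (deriv fl (sol.um (ζ t) t)) t ∧
      deriv fl (sol.um (ζ t) t) = deriv fl (sol.up (ζ t) t)) ∧
    (0 < ζ t → HasDerivAt ζ (deriv fr (sol.um (ζ t) t)) t ∧
      deriv fr (sol.um (ζ t) t) = deriv fr (sol.up (ζ t) t)) ∧
    (ζ t = 0 → fl (sol.um 0 t) = γ ∧ fr (sol.up 0 t) = γ))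

/-- `C(u,x)`: the set of `AB`-genuine/interface characteristics of `sol`
reaching `x` at time `T`. -/
def charSet (T : ℝ) (fl fr : ℝ → ℝ) (γ : ℝ) {A B : ℝ} {u0 : ℝ → ℝ}
    (sol : ABSol fl fr A B u0) (x : ℝ) : Set (ℝ → ℝ) :=
  {ζ | IsABgic T fl fr γ sol ζ ∧ ζ T = x}

/-- `C₀(u,x)`: the set of initial positions `ζ(0)` of characteristics in `C(u,x)`. -/
def charSet0 (T : ℝ) (fl fr : ℝ → ℝ) (γ : ℝ) {A B : ℝ} {u0 : ℝ → ℝ}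
    (sol : ABSol fl fr A B u0) (x : ℝ) : Set ℝ :=
  (fun ζ : ℝ → ℝ => ζ 0) '' charSet T fl fr γ sol x

/-- Membership in `L^∞(ℝ)`: measurable and (essentially) bounded. -/
def IsLinf (g : ℝ → ℝ) : Prop :=
  Measurable g ∧ ∃ M : ℝ, ∀ᵐ x : ℝ ∂volume, |g x| ≤ M

/-- `ω ∈ A^{[AB]}(T)`: the profile `ω` is attainable at time `T`. -/
def Attainable (T : ℝ) (fl fr : ℝ → ℝ) (A B : ℝ) (ω : ℝ → ℝ) : Prop :=
  ∃ u0 : ℝ → ℝ, IsLinf u0 ∧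
    ∃ sol : ABSol fl fr A B u0, ∀ᵐ x : ℝ ∂volume, sol.u x T = ω x

/-- `I_T^{[AB]}(ω)`: the set of (bounded) initial data whose `AB`-entropy
solution coincides a.e. with `ω` at time `T`. -/
def InitialSet (T : ℝ) (fl fr : ℝ → ℝ) (A B : ℝ) (ω : ℝ → ℝ) : Set (ℝ → ℝ) :=
  {u0 | IsLinf u0 ∧
    ∃ sol : ABSol fl fr A B u0, ∀ᵐ x : ℝ ∂volume, sol.u x T = ω x}

/-- `x` is a point of continuity of `ω`: the one-sided limits exist and coincide. -/
def ContinuityPt (ω : ℝ → ℝ) (x : ℝ) : Prop :=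
  ∃ l : ℝ, Tendsto ω (nhdsWithin x (Iio x)) (nhds l) ∧
    Tendsto ω (nhdsWithin x (Ioi x)) (nhds l)

section
/-- uniform convexity -/
structure UC (f : ℝ → ℝ) (a : ℝ) : Prop where
  C : ContDiff ℝ 2 f
  pos : 0 < a
  le : ∀ w, a ≤ deriv (deriv f) w

/-- inverse of the derivative -/
def ginv (f : ℝ → ℝ) (p : ℝ) : ℝ := Function.invFun (deriv f) p

/-- Legendre conjugate -/
def conj (f : ℝ → ℝ) (p : ℝ) : ℝ := p * ginv f p - f (ginv f p)

namespace UC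
variable {f : ℝ → ℝ} {a : ℝ} (h : UC f a)
include h

lemma diff : Differentiable ℝ f := h.C.differentiable (by norm_num)
lemma diff' : Differentiable ℝ (deriv f) := by
  have := h.C
  have h2 : ContDiff ℝ 1 (deriv f) := (contDiff_succ_iff_deriv (n := 1)).1 (by simpa using! this) |>.2.2
  exact h2.differentiable (by norm_num)
lemma cont : Continuous f := h.diff.continuous
lemma cont' : Continuous (deriv f) := h.diff'.continuous

lemma mono_sub {x y : ℝ} (hxy : x ≤ y) : a * (y - x) ≤ deriv f y - deriv f x := by
  have := Convex.mul_sub_le_image_sub_of_le_deriv (f := deriv f) (D := univ) convex_univ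
    h.cont'.continuousOn h.diff'.differentiableOn (C := a) (fun x _ => h.le x) x (mem_univ _) y (mem_univ _) hxy
  simpa using this

lemma smono : StrictMono (deriv f) := by
  intro x y hxy
  have := h.mono_sub hxy.le
  nlinarith [h.pos, mul_pos h.pos (sub_pos.2 hxy)]

lemma surj : Function.Surjective (deriv f) := by
  apply h.cont'.surjective
  · apply tendsto_atTop_mono' _ (f₁ := fun x => a * x + deriv f 0)
    · filter_upwards [eventually_ge_atTop 0] with x hx
      have := h.mono_sub hx; linarith
    · exact tendsto_atTop_add_const_right _ _ (tendsto_id.const_mul_atTop h.pos)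
  · apply tendsto_atBot_mono' _ (f₁ := fun x => a * x + deriv f 0)
    · filter_upwards [eventually_le_atBot 0] with x hx
      have := h.mono_sub hx; linarith
    · exact tendsto_atBot_add_const_right _ _ (tendsto_id.const_mul_atBot h.pos)

lemma dg (p : ℝ) : deriv f (ginv f p) = p := Function.invFun_eq (h.surj p)
lemma gd (u : ℝ) : ginv f (deriv f u) = u := Function.leftInverse_invFun h.smono.injective u

lemma conj_eq (q : ℝ) : conj f (deriv f q) = deriv f q * q - f q := by
  simp [conj, h.gd]

lemma tangent_lt {x y : ℝ} (hxy : x ≠ y) : f x + deriv f x * (y - x) < f y := by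
  rcases lt_or_gt_of_ne hxy with hl | hl
  · obtain ⟨c, hc, hc'⟩ := exists_deriv_eq_slope f hl h.cont.continuousOn h.diff.differentiableOn
    have h1 := h.smono hc.1
    rw [hc', lt_div_iff₀ (by linarith)] at h1
    linarith
  · obtain ⟨c, hc, hc'⟩ := exists_deriv_eq_slope f hl h.cont.continuousOn h.diff.differentiableOn
    have h1 := h.smono hc.2
    rw [hc', div_lt_iff₀ (by linarith)] at h1
    linarith

lemma tangent (x y : ℝ) : f x + deriv f x * (y - x) ≤ f y := by
  rcases eq_or_ne x y with rfl | hn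
  · simp
  · exact (h.tangent_lt hn).le

lemma fy (p u : ℝ) : p * u - f u ≤ conj f p := by
  have := h.tangent (ginv f p) u
  rw [h.dg] at this
  unfold conj; linarith

lemma fy_lt {p u : ℝ} (hp : deriv f u ≠ p) : p * u - f u < conj f p := by
  have hn : ginv f p ≠ u := by rintro rfl; exact hp (h.dg p)
  have := h.tangent_lt hn
  rw [h.dg] at this
  unfold conj; linarith

lemma g_lip (p p' : ℝ) : |ginv f p' - ginv f p| ≤ |p' - p| / a := by
  rw [le_div_iff₀ h.pos]
  rcases le_total (ginv f p) (ginv f p') with hl | hl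
  · have := h.mono_sub hl
    rw [h.dg, h.dg] at this
    rw [abs_of_nonneg (by linarith)]
    exact le_trans (by linarith) (le_abs_self _)
  · have := h.mono_sub hl
    rw [h.dg, h.dg] at this
    rw [abs_sub_comm, abs_of_nonneg (by linarith), abs_sub_comm]
    exact le_trans (by linarith) (le_abs_self _)

lemma conj_quad (p p' : ℝ) : conj f p' ≤ conj f p + ginv f p * (p' - p) + (p' - p)^2 / a := by
  have h1 := h.fy p (ginv f p')
  have h2 := h.g_lip p p'
  have h3 : (ginv f p' - ginv f p) * (p' - p) ≤ (p'-p)^2 / a := by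
    calc _ ≤ |(ginv f p' - ginv f p) * (p' - p)| := le_abs_self _
      _ = |ginv f p' - ginv f p| * |p' - p| := abs_mul _ _
      _ ≤ |p' - p| / a * |p' - p| := by gcongr
      _ = _ := by rw [div_mul_eq_mul_div, ← sq, sq_abs]
  have h4 : conj f p' = p' * ginv f p' - f (ginv f p') := rfl
  nlinarith

lemma conj_low (p p' : ℝ) : conj f p + ginv f p * (p' - p) ≤ conj f p' := by
  have := h.fy p' (ginv f p)
  unfold conj at *; linarith

lemma conj_cont : Continuous (conj f) := by
  have hg : Continuous (ginv f) := by
    apply LipschitzWith.continuous (K := ⟨1/a, by have := h.pos; positivity⟩)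
    apply LipschitzWith.of_dist_le_mul
    intro x y
    rw [Real.dist_eq, Real.dist_eq]
    have := h.g_lip y x
    simpa [div_eq_inv_mul] using! this
  unfold conj
  exact (continuous_id.mul hg).sub (h.cont.comp hg)

lemma conj_coer (N : ℝ) : ∃ C, 0 ≤ C ∧ ∀ p, N * |p| - C ≤ conj f p := by
  refine ⟨|f N| + |f (-N)|, by positivity, fun p => ?_⟩
  have h1 := h.fy p N
  have h2 := h.fy p (-N)
  rcases abs_cases p with ⟨hp, _⟩ | ⟨hp, _⟩ <;> rw [hp] <;>
  nlinarith [le_abs_self (f N), le_abs_self (f (-N)), abs_nonneg (f N), abs_nonneg (f (-N))]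

lemma neg : UC (fun x => f (-x)) a := by
  refine ⟨h.C.comp contDiff_neg, h.pos, fun w => ?_⟩
  have : deriv (fun x => f (-x)) = fun x => - deriv f (-x) := by
    ext x; rw [deriv_comp_neg]
  rw [this, deriv.fun_neg, deriv_comp_neg]
  simpa using h.le (-w)

lemma conj_neg (p : ℝ) : conj (fun x => f (-x)) p = conj f (-p) := by
  have h1 : deriv (fun x => f (-x)) (-(ginv f (-p))) = p := by
    rw [deriv_comp_neg]; simp [h.dg]
  have := h.neg.conj_eq (-(ginv f (-p)))
  rw [h1] at this
  rw [this]; simp [conj]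

/-- the perspective upper bound -/
lemma persp {x y y0 τ τ0 : ℝ} (hτ : 0 < τ) (hτ0 : 0 < τ0) :
    τ * conj f ((x - y)/τ) ≤ τ0 * conj f ((x - y0)/τ0)
      - ginv f ((x-y0)/τ0) * (y - y0) + f (ginv f ((x-y0)/τ0)) * (τ0 - τ)
      + ((y - y0) - (x-y0)/τ0 * (τ0 - τ))^2/(a*τ) := by
  have ha := h.pos
  have h1 := h.conj_quad ((x-y0)/τ0) ((x-y)/τ)
  have h2 := mul_le_mul_of_nonneg_left h1 hτ.le
  refine h2.trans (le_of_eq ?_)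
  unfold conj
  generalize ginv f ((x-y0)/τ0) = q
  generalize f q = F
  field_simp
  ring

end UC
end

section
/-- kernel on the unit interval -/
def kk (x : ℝ) : ℝ := max 0 (6 * x * (1 - x))
/-- C1 step -/
def sg (x : ℝ) : ℝ := ∫ y in (0:ℝ)..x, kk y

lemma kk_cont : Continuous kk := by unfold kk; fun_prop
lemma kk_nonneg (x : ℝ) : 0 ≤ kk x := le_max_left _ _
lemma kk_out {x : ℝ} (h : x ∉ Ioo (0:ℝ) 1) : kk x = 0 := by
  unfold kk
  apply max_eq_left
  by_contra hc
  push Not at hc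
  apply h
  constructor <;> nlinarith
lemma kk_supp : HasCompactSupport kk :=
  HasCompactSupport.intro (isCompact_Icc (a := (0:ℝ)) (b := 1))
    (fun x hx => kk_out (fun h => hx (Ioo_subset_Icc_self h)))
lemma kk_int : Integrable kk := kk_cont.integrable_of_hasCompactSupport kk_supp
lemma sg_hasDeriv (x : ℝ) : HasDerivAt sg (kk x) x :=
  (kk_cont.integral_hasStrictDerivAt 0 x).hasDerivAt
lemma sg_contDiff : ContDiff ℝ 1 sg := by
  rw [contDiff_one_iff_deriv]
  refine ⟨fun x => (sg_hasDeriv x).differentiableAt, ?_⟩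
  rw [show deriv sg = kk from funext fun x => (sg_hasDeriv x).deriv]
  exact kk_cont
lemma sg_mono : Monotone sg :=
  monotone_of_deriv_nonneg (fun x => (sg_hasDeriv x).differentiableAt)
    (fun x => by rw [(sg_hasDeriv x).deriv]; exact kk_nonneg x)
lemma sg_one : sg 1 = 1 := by
  have h1 : sg 1 = ∫ y in (0:ℝ)..1, (6 * y - 6 * y^2) := by
    unfold sg
    apply intervalIntegral.integral_congr
    intro x hx
    rw [uIcc_of_le (by norm_num)] at hx
    have : 0 ≤ 6 * x * (1 - x) := by have := hx.1; have := hx.2; apply mul_nonneg <;> linarith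
    simp only [kk, max_eq_right this]; ring
  rw [h1, intervalIntegral.integral_eq_sub_of_hasDerivAt (f := fun y => 3 * y^2 - 2 * y^3)]
  · norm_num
  · intro x _
    have h2 := (((hasDerivAt_id x).pow 2).const_mul (3:ℝ)).sub (((hasDerivAt_id x).pow 3).const_mul (2:ℝ))
    refine h2.congr_deriv ?_
    simp; ring
  · exact Continuous.intervalIntegrable (by fun_prop) _ _
lemma sg_le {x : ℝ} (h : x ≤ 0) : sg x = 0 := by
  unfold sg
  rw [intervalIntegral.integral_symm, intervalIntegral.integral_zero_ae]; · simp
  refine Eventually.of_forall fun y hy => kk_out ?_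
  rw [uIoc_of_le h] at hy
  exact fun h' => absurd h'.1 (not_lt.2 hy.2)
lemma sg_ge {x : ℝ} (h : 1 ≤ x) : sg x = 1 := by
  rw [← sg_one]
  unfold sg
  rw [← intervalIntegral.integral_add_adjacent_intervals (b := 1) (kk_cont.intervalIntegrable _ _)
    (kk_cont.intervalIntegrable _ _)]
  rw [add_eq_left]
  apply intervalIntegral.integral_zero_ae
  refine Eventually.of_forall fun y hy => kk_out ?_
  rw [uIoc_of_le h] at hy
  exact fun h' => absurd h'.2 (not_lt.2 hy.1.le)
lemma sg_nonneg (x : ℝ) : 0 ≤ sg x := by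
  rcases le_total x 0 with h | h
  · rw [sg_le h]
  · rw [← sg_le le_rfl]; exact sg_mono h
lemma sg_le_one (x : ℝ) : sg x ≤ 1 := by
  rcases le_total x 1 with h | h
  · rw [← sg_one]; exact sg_mono h
  · rw [sg_ge h]
lemma kk_integral : ∫ x, kk x = 1 := by
  rw [← sg_one]; unfold sg
  rw [intervalIntegral.integral_of_le (by norm_num)]
  symm
  apply setIntegral_eq_integral_of_forall_compl_eq_zero
  intro x hx
  exact kk_out (fun h => hx (Ioo_subset_Ioc_self h))

/-- scaled step -/
def st (e c δ x : ℝ) : ℝ := sg ((x - c)/δ + e)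
/-- its derivative -/
def ks (e c δ x : ℝ) : ℝ := δ⁻¹ * kk ((x - c)/δ + e)

lemma st_hasDeriv (e c δ x : ℝ) : HasDerivAt (st e c δ) (ks e c δ x) x := by
  have h : HasDerivAt (fun x => (x - c)/δ + e) (1/δ) x :=
    (((hasDerivAt_id x).sub_const c).div_const δ).add_const e
  have := (sg_hasDeriv ((x - c)/δ + e)).comp x h
  refine this.congr_deriv ?_
  rw [one_div, mul_comm, ks]
lemma st_contDiff (e c δ : ℝ) : ContDiff ℝ 1 (st e c δ) := by
  unfold st; exact sg_contDiff.comp (by fun_prop)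
lemma ks_cont (e c δ : ℝ) : Continuous (ks e c δ) := by
  unfold ks; have := kk_cont; fun_prop

/-- two-step bump -/
def bp (e₁ c₁ e₂ c₂ δ x : ℝ) : ℝ := st e₁ c₁ δ x - st e₂ c₂ δ x

lemma bp_out {e₁ c₁ e₂ c₂ δ x : ℝ} (hδ : 0 < δ) (hδ1 : δ ≤ 1) (h1 : 0 ≤ e₁) (h1' : e₁ ≤ 1) (h2 : 0 ≤ e₂)
    (h2' : e₂ ≤ 1) (hc : c₁ ≤ c₂) (hx : x ∉ Icc (c₁ - 1) (c₂ + 1)) : bp e₁ c₁ e₂ c₂ δ x = 0 := by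
  unfold bp st
  rw [mem_Icc, not_and_or] at hx
  push Not at hx
  rcases hx with h | h
  · rw [sg_le, sg_le, sub_zero]
    · have : (x - c₂)/δ ≤ -1 := by rw [div_le_iff₀ hδ]; nlinarith
      linarith
    · have : (x - c₁)/δ ≤ -1 := by rw [div_le_iff₀ hδ]; nlinarith
      linarith
  · rw [sg_ge, sg_ge, sub_self]
    · have : 1 ≤ (x - c₂)/δ := by rw [le_div_iff₀ hδ]; nlinarith
      linarith
    · have : 1 ≤ (x - c₁)/δ := by rw [le_div_iff₀ hδ]; nlinarith
      linarith
lemma bp_nonneg {e₁ c₁ e₂ c₂ δ : ℝ} (hδ : 0 < δ) (he : e₂ ≤ e₁) (hc : c₁ ≤ c₂) (x : ℝ) :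
    0 ≤ bp e₁ c₁ e₂ c₂ δ x := by
  unfold bp st
  rw [sub_nonneg]
  apply sg_mono
  gcongr
lemma bp_abs (e₁ c₁ e₂ c₂ δ x : ℝ) : |bp e₁ c₁ e₂ c₂ δ x| ≤ 1 := by
  unfold bp st
  rw [abs_le]
  constructor <;> linarith [sg_nonneg ((x - c₁)/δ + e₁), sg_nonneg ((x - c₂)/δ + e₂),
    sg_le_one ((x - c₁)/δ + e₁), sg_le_one ((x - c₂)/δ + e₂)]
lemma bp_contDiff (e₁ c₁ e₂ c₂ δ : ℝ) : ContDiff ℝ 1 (bp e₁ c₁ e₂ c₂ δ) :=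
  (st_contDiff _ _ _).sub (st_contDiff _ _ _)
lemma bp_deriv (e₁ c₁ e₂ c₂ δ x : ℝ) : deriv (bp e₁ c₁ e₂ c₂ δ) x = ks e₁ c₁ δ x - ks e₂ c₂ δ x :=
  ((st_hasDeriv _ _ _ _).sub (st_hasDeriv _ _ _ _)).deriv

lemma st_tendsto {e c x : ℝ} (hx : x ≠ c) :
    Tendsto (fun δ => st e c δ x) (nhdsWithin 0 (Ioi 0)) (nhds (if c < x then 1 else 0)) := by
  apply tendsto_const_nhds.congr'
  rcases lt_or_gt_of_ne hx with h | h
  · have h0 : ∀ᶠ δ in nhdsWithin (0:ℝ) (Ioi 0), δ < (c - x)/(|e|+1) :=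
      nhdsWithin_le_nhds (Iio_mem_nhds (by have := sub_pos.2 h; positivity))
    filter_upwards [h0, self_mem_nhdsWithin] with δ h1 h2
    rw [if_neg (by linarith)]
    unfold st
    rw [sg_le]
    rw [lt_div_iff₀ (by positivity)] at h1
    have : (x - c)/δ ≤ -(|e|+1) := by rw [div_le_iff₀ h2]; linarith
    linarith [le_abs_self e]
  · have h0 : ∀ᶠ δ in nhdsWithin (0:ℝ) (Ioi 0), δ < (x - c)/(|e|+1) :=
      nhdsWithin_le_nhds (Iio_mem_nhds (by have := sub_pos.2 h; positivity))
    filter_upwards [h0, self_mem_nhdsWithin] with δ h1 h2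
    rw [if_pos (by linarith)]
    unfold st
    rw [sg_ge]
    rw [lt_div_iff₀ (by positivity)] at h1
    have : (|e|+1) ≤ (x - c)/δ := by rw [le_div_iff₀ h2]; linarith
    linarith [neg_abs_le e]

lemma bp_tendsto {e₁ c₁ e₂ c₂ x : ℝ} (hc : c₁ ≤ c₂) (hx : x ≠ c₁) (hx2 : x ≠ c₂) :
    Tendsto (fun δ => bp e₁ c₁ e₂ c₂ δ x) (nhdsWithin 0 (Ioi 0))
      (nhds ((Ioc c₁ c₂).indicator 1 x)) := by
  have := (st_tendsto (e := e₁) hx).sub (st_tendsto (e := e₂) hx2)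
  unfold bp
  convert this using 2
  simp only [indicator, mem_Ioc, Pi.one_apply]
  grind

/-- abstract one-sided trace -/
def Tr (e : ℝ) (h : ℝ → ℝ) (c l : ℝ) : Prop :=
  ∀ ξ ∈ Ioo (0:ℝ) 1, Tendsto (fun δ => h (c + δ * (ξ - e))) (nhdsWithin 0 (Ioi 0)) (nhds l)

lemma Tr_right {h : ℝ → ℝ} {c l : ℝ} (H : Tendsto h (nhdsWithin c (Ioi c)) (nhds l)) : Tr 0 h c l := by
  intro ξ hξ
  apply H.comp
  rw [tendsto_nhdsWithin_iff]
  constructor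
  · have : Tendsto (fun δ : ℝ => c + δ * (ξ - 0)) (nhds 0) (nhds (c + 0 * (ξ - 0))) :=
      Continuous.tendsto (by fun_prop) 0
    simp only [zero_mul, add_zero] at this
    exact this.mono_left nhdsWithin_le_nhds
  · filter_upwards [self_mem_nhdsWithin] with δ hδ
    have := mul_pos (mem_Ioi.1 hδ) hξ.1
    simp only [mem_Ioi]; linarith
lemma Tr_left {h : ℝ → ℝ} {c l : ℝ} (H : Tendsto h (nhdsWithin c (Iio c)) (nhds l)) : Tr 1 h c l := by
  intro ξ hξ
  apply H.comp
  rw [tendsto_nhdsWithin_iff]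
  constructor
  · have : Tendsto (fun δ : ℝ => c + δ * (ξ - 1)) (nhds 0) (nhds (c + 0 * (ξ - 1))) :=
      Continuous.tendsto (by fun_prop) 0
    simp only [zero_mul, add_zero] at this
    exact this.mono_left nhdsWithin_le_nhds
  · filter_upwards [self_mem_nhdsWithin] with δ hδ
    have := mul_pos (mem_Ioi.1 hδ) (sub_pos.2 hξ.2)
    simp only [mem_Iio]; linarith

lemma ks_subst (e c : ℝ) {δ : ℝ} (hδ : 0 < δ) (h : ℝ → ℝ) :
    ∫ x, h x * ks e c δ x = ∫ ξ, h (c + δ * (ξ - e)) * kk ξ := by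
  have h1 := Measure.integral_comp_mul_left (fun x => h (c + (x - δ * e)) * kk (x/δ)) δ
  have h2 := integral_add_right_eq_self (μ := volume) (fun x => h x * ks e c δ x) (c - δ * e)
  rw [← h2]
  have h3 : (fun ξ => h (c + δ * (ξ - e)) * kk ξ) = fun ξ => h (c + (δ * ξ - δ * e)) * kk (δ * ξ / δ) := by
    ext ξ
    rw [mul_div_cancel_left₀ _ hδ.ne', mul_sub]
  rw [h3, h1, abs_of_pos (by positivity), smul_eq_mul, ← integral_const_mul]
  congr 1
  ext x
  unfold ks
  have : (x + (c - δ * e) - c)/δ + e = x/δ := by field_simp; ring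
  rw [this, show x + (c - δ * e) = c + (x - δ * e) by ring]
  ring

lemma ks_limit {e c l M : ℝ} {h : ℝ → ℝ} (hm : Measurable h) (hb : ∀ x, |h x| ≤ M) (H : Tr e h c l) :
    Tendsto (fun δ => ∫ x, h x * ks e c δ x) (nhdsWithin 0 (Ioi 0)) (nhds l) := by
  have h1 : Tendsto (fun δ => ∫ ξ, h (c + δ * (ξ - e)) * kk ξ) (nhdsWithin 0 (Ioi 0)) (nhds (∫ ξ, l * kk ξ)) := by
    apply tendsto_integral_filter_of_dominated_convergence (fun ξ => M * kk ξ)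
    · refine Eventually.of_forall fun δ => ?_
      exact ((hm.comp (by fun_prop)).mul kk_cont.measurable).aestronglyMeasurable
    · refine Eventually.of_forall fun δ => Eventually.of_forall fun ξ => ?_
      rw [norm_mul, Real.norm_eq_abs, Real.norm_eq_abs, abs_of_nonneg (kk_nonneg ξ)]
      exact mul_le_mul_of_nonneg_right (hb _) (kk_nonneg _)
    · exact kk_int.const_mul _
    · refine Eventually.of_forall fun ξ => ?_
      by_cases hξ : ξ ∈ Ioo (0:ℝ) 1
      · exact (H ξ hξ).mul_const _
      · simp [kk_out hξ]
  rw [integral_const_mul, kk_integral, mul_one] at h1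
  apply h1.congr'
  filter_upwards [self_mem_nhdsWithin] with δ hδ
  rw [ks_subst e c hδ]

lemma ks_bound {e c M δ : ℝ} (hδ : 0 < δ) {h : ℝ → ℝ} (hb : ∀ x, |h x| ≤ M) :
    |∫ x, h x * ks e c δ x| ≤ M := by
  rw [ks_subst e c hδ, ← Real.norm_eq_abs]
  have : ∫ ξ, M * kk ξ = M := by rw [integral_const_mul, kk_integral, mul_one]
  rw [← this]
  apply norm_integral_le_of_norm_le (kk_int.const_mul _)
  refine Eventually.of_forall fun ξ => ?_
  rw [norm_mul, Real.norm_eq_abs, Real.norm_eq_abs, abs_of_nonneg (kk_nonneg ξ)]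
  exact mul_le_mul_of_nonneg_right (hb _) (kk_nonneg _)
end

section
lemma Tr_meas {Q : ℝ → ℝ → ℝ} (hQ : Measurable (Function.uncurry Q)) {e c : ℝ} {l : ℝ → ℝ}
    (H : ∀ t, 0 < t → Tr e (fun x => Q x t) c (l t)) :
    Measurable (fun t => if 0 < t then l t else 0) := by
  refine measurable_of_tendsto_metrizable (f := fun (n:ℕ) t => if 0 < t then Q (c + (1/((n:ℝ)+1)) * (1/2 - e)) t else 0)
    (fun n => ?_) ?_
  · apply Measurable.ite measurableSet_Ioi _ measurable_const
    exact hQ.comp (measurable_const.prodMk measurable_id)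
  · rw [tendsto_pi_nhds]
    intro t
    by_cases ht : 0 < t
    · simp only [if_pos ht]
      refine (H t ht (1/2) ⟨by norm_num, by norm_num⟩).comp (f := fun (n:ℕ) => 1/((n:ℝ)+1)) ?_
      rw [tendsto_nhdsWithin_iff]
      refine ⟨tendsto_one_div_add_atTop_nhds_zero_nat, Eventually.of_forall fun n => ?_⟩
      simp only [mem_Ioi]; positivity
    · simp only [if_neg ht]; exact tendsto_const_nhds

lemma Tr_le {e c l M : ℝ} {h : ℝ → ℝ} (H : Tr e h c l) (hb : ∀ x, |h x| ≤ M) : |l| ≤ M :=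
  le_of_tendsto (H (1/2) ⟨by norm_num, by norm_num⟩).abs (Eventually.of_forall fun _ => hb _)

/-- product test function integrals -/
lemma TR_lim {E Q : ℝ → ℝ → ℝ} {M : ℝ} (hE : Measurable (Function.uncurry E))
    (hQ : Measurable (Function.uncurry Q)) (bE : ∀ x t, |E x t| ≤ M) (bQ : ∀ x t, |Q x t| ≤ M)
    {e₁ c₁ e₂ c₂ : ℝ} (h1 : 0 ≤ e₁) (h1' : e₁ ≤ 1) (h2 : 0 ≤ e₂)
    (h2' : e₂ ≤ 1) (hc : c₁ ≤ c₂) {l₁ l₂ : ℝ → ℝ}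
    (H1 : ∀ t, 0 < t → Tr e₁ (fun x => Q x t) c₁ (l₁ t))
    (H2 : ∀ t, 0 < t → Tr e₂ (fun x => Q x t) c₂ (l₂ t))
    {θ : ℝ → ℝ} (hθ : ContDiff ℝ 1 θ) (hθc : HasCompactSupport θ) (hθ0 : ∀ t ≤ 0, θ t = 0) :
    Tendsto (fun δ => ∫ p : ℝ × ℝ, (E p.1 p.2 * deriv (fun s => bp e₁ c₁ e₂ c₂ δ p.1 * θ s) p.2 +
        Q p.1 p.2 * deriv (fun y => bp e₁ c₁ e₂ c₂ δ y * θ p.2) p.1)) (nhdsWithin 0 (Ioi 0))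
      (nhds (∫ t, (deriv θ t * (∫ x in Ioc c₁ c₂, E x t) + θ t * (l₁ t - l₂ t)))) := by
  have hM : 0 ≤ M := (abs_nonneg _).trans (bE 0 0)
  have hθ'c : Continuous (deriv θ) := hθ.continuous_deriv le_rfl
  have hθ's : HasCompactSupport (deriv θ) := hθc.deriv
  have hθ'0 : ∀ t ≤ 0, deriv θ t = 0 := by
    have ho : ∀ t < 0, deriv θ t = 0 := by
      intro t ht
      have : θ =ᶠ[nhds t] fun _ => 0 := by
        filter_upwards [Iio_mem_nhds ht] with s hs using hθ0 s (le_of_lt hs)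
      rw [this.deriv_eq]; simp
    intro t ht
    have hcl : IsClosed {t | deriv θ t = 0} := isClosed_eq hθ'c continuous_const
    have : closure (Iio (0:ℝ)) ⊆ {t | deriv θ t = 0} := hcl.closure_subset_iff.2 (fun t ht => ho t ht)
    rw [closure_Iio] at this
    exact this ht
  have hbpI : ∀ δ, 0 < δ → δ ≤ 1 → Integrable (bp e₁ c₁ e₂ c₂ δ) := fun δ hδ hδ1 =>
    (bp_contDiff e₁ c₁ e₂ c₂ δ).continuous.integrable_of_hasCompactSupport
      (HasCompactSupport.intro isCompact_Icc (fun x hx => bp_out hδ hδ1 h1 h1' h2 h2' hc hx))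
  have hksI : ∀ e c δ, 0 < δ → Integrable (ks e c δ) := fun e c δ hδ => by
    refine (ks_cont e c δ).integrable_of_hasCompactSupport ?_
    refine HasCompactSupport.intro (isCompact_Icc (a := c - δ * e) (b := c + δ * (1 - e))) (fun x hx => ?_)
    unfold ks
    rw [kk_out, mul_zero]
    intro hh
    apply hx
    have h3 := hh.1; have h4 := hh.2
    have h5 : -e < (x - c)/δ := by linarith
    have h6 : (x - c)/δ < 1 - e := by linarith
    rw [lt_div_iff₀ hδ] at h5
    rw [div_lt_iff₀ hδ] at h6
    constructor <;> nlinarith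
  have mE : ∀ t, Measurable (fun x => E x t) := fun t => hE.comp (measurable_id.prodMk measurable_const)
  have mQ : ∀ t, Measurable (fun x => Q x t) := fun t => hQ.comp (measurable_id.prodMk measurable_const)
  have key : ∀ δ, 0 < δ → δ ≤ 1 → ∫ p : ℝ × ℝ, (E p.1 p.2 * deriv (fun s => bp e₁ c₁ e₂ c₂ δ p.1 * θ s) p.2 +
        Q p.1 p.2 * deriv (fun y => bp e₁ c₁ e₂ c₂ δ y * θ p.2) p.1) =
      ∫ t, (deriv θ t * (∫ x, E x t * bp e₁ c₁ e₂ c₂ δ x) + θ t *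
        ((∫ x, Q x t * ks e₁ c₁ δ x) - ∫ x, Q x t * ks e₂ c₂ δ x)) := by
    intro δ hδ hδ1
    have e1 : ∀ p : ℝ × ℝ, E p.1 p.2 * deriv (fun s => bp e₁ c₁ e₂ c₂ δ p.1 * θ s) p.2 +
        Q p.1 p.2 * deriv (fun y => bp e₁ c₁ e₂ c₂ δ y * θ p.2) p.1 =
        E p.1 p.2 * (bp e₁ c₁ e₂ c₂ δ p.1 * deriv θ p.2) +
        Q p.1 p.2 * ((ks e₁ c₁ δ p.1 - ks e₂ c₂ δ p.1) * θ p.2) := by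
      intro p
      rw [deriv_const_mul _ (hθ.differentiable one_ne_zero _), deriv_mul_const
        ((bp_contDiff e₁ c₁ e₂ c₂ δ).differentiable one_ne_zero _), bp_deriv]
    simp_rw [e1]
    have I1 : Integrable (fun p : ℝ × ℝ => E p.1 p.2 * (bp e₁ c₁ e₂ c₂ δ p.1 * deriv θ p.2)) (volume.prod volume) :=
      ((hbpI δ hδ hδ1).mul_prod (hθ'c.integrable_of_hasCompactSupport hθ's)).bdd_mul (c := M)
        hE.aestronglyMeasurable (Eventually.of_forall fun p => bE _ _)
    have I2 : Integrable (fun p : ℝ × ℝ => Q p.1 p.2 * ((ks e₁ c₁ δ p.1 - ks e₂ c₂ δ p.1) * θ p.2)) (volume.prod volume) :=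
      (((hksI e₁ c₁ δ hδ).sub (hksI e₂ c₂ δ hδ)).mul_prod (hθ.continuous.integrable_of_hasCompactSupport hθc)).bdd_mul (c := M)
        hQ.aestronglyMeasurable (Eventually.of_forall fun p => bQ _ _)
    have I12 : Integrable (fun p : ℝ × ℝ => E p.1 p.2 * (bp e₁ c₁ e₂ c₂ δ p.1 * deriv θ p.2) +
      Q p.1 p.2 * ((ks e₁ c₁ δ p.1 - ks e₂ c₂ δ p.1) * θ p.2)) (volume.prod volume) := I1.add I2
    rw [Measure.volume_eq_prod, integral_prod_symm _ I12]
    congr 1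
    ext t
    have J1 : Integrable (fun x => E x t * bp e₁ c₁ e₂ c₂ δ x) :=
      (hbpI δ hδ hδ1).bdd_mul (c := M) (mE t).aestronglyMeasurable (Eventually.of_forall fun p => bE _ _)
    have J2 : ∀ e c, Integrable (fun x => Q x t * ks e c δ x) := fun e c =>
      (hksI e c δ hδ).bdd_mul (c := M) (mQ t).aestronglyMeasurable (Eventually.of_forall fun p => bQ _ _)
    rw [← integral_sub (J2 _ _) (J2 _ _), ← integral_const_mul, ← integral_const_mul, ← integral_add]
    · congr 1; ext x; ring
    · exact J1.const_mul _
    · exact ((J2 _ _).sub (J2 _ _)).const_mul _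
  have hev : ∀ᶠ δ in nhdsWithin (0:ℝ) (Ioi 0), 0 < δ ∧ δ ≤ 1 := by
    filter_upwards [self_mem_nhdsWithin, nhdsWithin_le_nhds (Iic_mem_nhds one_pos)] with δ a b using ⟨a, b⟩
  have main : Tendsto (fun δ => ∫ t, (deriv θ t * (∫ x, E x t * bp e₁ c₁ e₂ c₂ δ x) + θ t *
        ((∫ x, Q x t * ks e₁ c₁ δ x) - ∫ x, Q x t * ks e₂ c₂ δ x))) (nhdsWithin 0 (Ioi 0))
      (nhds (∫ t, (deriv θ t * (∫ x in Ioc c₁ c₂, E x t) + θ t * (l₁ t - l₂ t)))) := by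
    apply tendsto_integral_filter_of_dominated_convergence
      (fun t => |deriv θ t| * (M * (c₂ - c₁ + 2)) + |θ t| * (2 * M))
    · filter_upwards [hev] with δ hδ
      have m1 : ∀ (F : ℝ → ℝ → ℝ) (w : ℝ → ℝ), Measurable (Function.uncurry F) → Measurable w →
        Measurable (fun t => ∫ x, F x t * w x) := fun F w hF hw => by
          have : StronglyMeasurable (Function.uncurry fun t x => F x t * w x) :=
            ((hF.comp measurable_swap).mul (hw.comp measurable_snd)).stronglyMeasurable
          exact this.integral_prod_right.measurable
      exact ((hθ'c.measurable.mul (m1 E _ hE (bp_contDiff _ _ _ _ _).continuous.measurable)).add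
        (hθ.continuous.measurable.mul ((m1 Q _ hQ (ks_cont _ _ _).measurable).sub
          (m1 Q _ hQ (ks_cont _ _ _).measurable)))).aestronglyMeasurable
    · filter_upwards [hev] with δ hδ
      refine Eventually.of_forall fun t => ?_
      refine (norm_add_le _ _).trans ?_
      rw [norm_mul, norm_mul]
      simp only [Real.norm_eq_abs]
      gcongr
      · have : ∀ x, E x t * bp e₁ c₁ e₂ c₂ δ x = (Icc (c₁ - 1) (c₂ + 1)).indicator (fun x => E x t * bp e₁ c₁ e₂ c₂ δ x) x := by
          intro x
          by_cases hx : x ∈ Icc (c₁ - 1) (c₂ + 1)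
          · rw [indicator_of_mem hx]
          · rw [indicator_of_notMem hx, bp_out hδ.1 hδ.2 h1 h1' h2 h2' hc hx, mul_zero]
        rw [integral_congr_ae (Eventually.of_forall this), integral_indicator measurableSet_Icc]
        have := norm_setIntegral_le_of_norm_le_const (μ := volume) (s := Icc (c₁ - 1) (c₂ + 1)) (C := M)
          (f := fun x => E x t * bp e₁ c₁ e₂ c₂ δ x) (by simp) (fun x _ => by
            rw [norm_mul]; simp only [Real.norm_eq_abs]
            nlinarith [bE x t, bp_abs e₁ c₁ e₂ c₂ δ x, abs_nonneg (E x t), abs_nonneg (bp e₁ c₁ e₂ c₂ δ x)])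
        rw [Real.norm_eq_abs] at this
        refine this.trans (le_of_eq ?_)
        simp only [Measure.real, Real.volume_Icc]
        rw [ENNReal.toReal_ofReal (by linarith)]; ring
      · refine (abs_sub _ _).trans ?_
        linarith [ks_bound (e := e₁) (c := c₁) hδ.1 (fun x => bQ x t), ks_bound (e := e₂) (c := c₂) hδ.1 (fun x => bQ x t)]
    · exact (((hθ'c.integrable_of_hasCompactSupport hθ's).abs).mul_const _).add
        (((hθ.continuous.integrable_of_hasCompactSupport hθc).abs).mul_const _)
    · refine Eventually.of_forall fun t => ?_
      by_cases ht : 0 < t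
      · refine Tendsto.add (Tendsto.const_mul _ ?_) (Tendsto.const_mul _ ((ks_limit (mQ t) (fun x => bQ x t) (H1 t ht)).sub
          (ks_limit (mQ t) (fun x => bQ x t) (H2 t ht))))
        rw [← integral_indicator measurableSet_Ioc]
        apply tendsto_integral_filter_of_dominated_convergence ((Icc (c₁ - 1) (c₂ + 1)).indicator fun _ => M)
        · refine Eventually.of_forall fun δ => ((mE t).mul (bp_contDiff _ _ _ _ _).continuous.measurable).aestronglyMeasurable
        · filter_upwards [hev] with δ hδ
          refine Eventually.of_forall fun x => ?_
          by_cases hx : x ∈ Icc (c₁ - 1) (c₂ + 1)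
          · rw [indicator_of_mem hx, norm_mul]
            simp only [Real.norm_eq_abs]
            nlinarith [bE x t, bp_abs e₁ c₁ e₂ c₂ δ x, abs_nonneg (E x t), abs_nonneg (bp e₁ c₁ e₂ c₂ δ x)]
          · rw [indicator_of_notMem hx, bp_out hδ.1 hδ.2 h1 h1' h2 h2' hc hx]; simp
        · rw [integrable_indicator_iff measurableSet_Icc]
          simp
        · have ha : ∀ᵐ x : ℝ, x ≠ c₁ ∧ x ≠ c₂ := by
            have : ∀ c : ℝ, ∀ᵐ x : ℝ, x ≠ c := fun c => by
              rw [ae_iff]; simp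
            filter_upwards [this c₁, this c₂] with x a b using ⟨a, b⟩
          filter_upwards [ha] with x hx
          have := (bp_tendsto (e₁ := e₁) (e₂ := e₂) hc hx.1 hx.2).const_mul (E x t)
          convert this using 2
          by_cases hx : x ∈ Ioc c₁ c₂ <;> simp [hx]
      · push Not at ht
        simp [hθ0 t ht, hθ'0 t ht]
  apply main.congr'
  filter_upwards [hev] with δ hδ
  rw [key δ hδ.1 hδ.2]

lemma TR_main {E Q : ℝ → ℝ → ℝ} {M : ℝ} (hE : Measurable (Function.uncurry E))
    (hQ : Measurable (Function.uncurry Q)) (bE : ∀ x t, |E x t| ≤ M) (bQ : ∀ x t, |Q x t| ≤ M)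
    {e₁ c₁ e₂ c₂ : ℝ} (h1' : e₁ ≤ 1) (h2 : 0 ≤ e₂)
    (he : e₂ ≤ e₁) (hc : c₁ ≤ c₂) {l₁ l₂ : ℝ → ℝ}
    (H1 : ∀ t, 0 < t → Tr e₁ (fun x => Q x t) c₁ (l₁ t))
    (H2 : ∀ t, 0 < t → Tr e₂ (fun x => Q x t) c₂ (l₂ t))
    (HI : ∀ φ : ℝ → ℝ → ℝ,
      ContDiff ℝ 1 (fun p : ℝ × ℝ => φ p.1 p.2) →
      HasCompactSupport (fun p : ℝ × ℝ => φ p.1 p.2) →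
      (∀ x t, 0 ≤ φ x t) →
      (∀ x t, t ≤ 0 → φ x t = 0) →
      0 ≤ ∫ p : ℝ × ℝ, (E p.1 p.2 * deriv (fun s => φ p.1 s) p.2 + Q p.1 p.2 * deriv (fun y => φ y p.2) p.1))
    {t₁ t₂ : ℝ} (ht1 : 0 < t₁) (ht : t₁ ≤ t₂)
    (g1 : Tendsto (fun t => ∫ x in Ioc c₁ c₂, E x t) (nhdsWithin t₁ (Ioi t₁)) (nhds (∫ x in Ioc c₁ c₂, E x t₁)))
    (g2 : Tendsto (fun t => ∫ x in Ioc c₁ c₂, E x t) (nhdsWithin t₂ (Ioi t₂)) (nhds (∫ x in Ioc c₁ c₂, E x t₂))) :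
    0 ≤ (∫ x in Ioc c₁ c₂, E x t₁) - (∫ x in Ioc c₁ c₂, E x t₂) + ∫ t in Ioc t₁ t₂, (l₁ t - l₂ t) := by
  have hM : 0 ≤ M := (abs_nonneg _).trans (bE 0 0)
  have step1 : ∀ θ : ℝ → ℝ, ContDiff ℝ 1 θ → HasCompactSupport θ → (∀ t ≤ 0, θ t = 0) → (∀ t, 0 ≤ θ t) →
      0 ≤ ∫ t, (deriv θ t * (∫ x in Ioc c₁ c₂, E x t) + θ t * (l₁ t - l₂ t)) := by
    intro θ a b c d
    refine ge_of_tendsto (TR_lim hE hQ bE bQ (h2.trans he) h1' h2 (he.trans h1') hc H1 H2 a b c) ?_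
    filter_upwards [self_mem_nhdsWithin, nhdsWithin_le_nhds (Iic_mem_nhds one_pos)] with δ hδ hδ1
    refine HI (fun x t => bp e₁ c₁ e₂ c₂ δ x * θ t) ?_ ?_ ?_ ?_
    · exact ((bp_contDiff _ _ _ _ _).comp contDiff_fst).mul (a.comp contDiff_snd)
    · refine HasCompactSupport.intro ((isCompact_Icc (a := c₁ - 1) (b := c₂ + 1)).prod b) ?_
      intro p hp
      by_cases hx : p.1 ∈ Icc (c₁ - 1) (c₂ + 1)
      · have : p.2 ∉ tsupport θ := fun h => hp ⟨hx, h⟩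
        rw [image_eq_zero_of_notMem_tsupport this, mul_zero]
      · rw [bp_out hδ hδ1 (h2.trans he) h1' h2 (he.trans h1') hc hx, zero_mul]
    · exact fun x t => mul_nonneg (bp_nonneg hδ he hc x) (d t)
    · exact fun x t ht => by rw [c t ht, mul_zero]
  set g := fun t => ∫ x in Ioc c₁ c₂, E x t with hg
  have mg : Measurable g := by
    have : StronglyMeasurable (Function.uncurry fun t x => E x t) := (hE.comp measurable_swap).stronglyMeasurable
    exact this.integral_prod_right.measurable
  have bg : ∀ t, |g t| ≤ M * (c₂ - c₁) := by
    intro t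
    have := norm_setIntegral_le_of_norm_le_const (μ := volume) (s := Ioc c₁ c₂) (C := M)
          (f := fun x => E x t) (by simp) (fun x _ => bE x t)
    rw [Real.norm_eq_abs] at this
    refine this.trans (le_of_eq ?_)
    simp only [Measure.real, Real.volume_Ioc]
    rw [ENNReal.toReal_ofReal (by linarith)]
  set q := fun t => (if 0 < t then l₁ t else 0) - (if 0 < t then l₂ t else 0) with hq
  have mq : Measurable q := (Tr_meas hQ H1).sub (Tr_meas hQ H2)
  have bq : ∀ t, |q t| ≤ 2 * M := by
    intro t
    by_cases ht : 0 < t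
    · have hqt : q t = l₁ t - l₂ t := by simp [hq, ht]
      rw [hqt]
      have a := Tr_le (H1 t ht) (fun x => bQ x t)
      have b := Tr_le (H2 t ht) (fun x => bQ x t)
      exact (abs_sub _ _).trans (by linarith)
    · simp [hq, ht, hM]
  have Q1 : ∀ e c, Tendsto (fun t => g t) (nhdsWithin c (Ioi c)) (nhds (g c)) → e = 0 →
      Tendsto (fun δ => ∫ x, g x * ks e c δ x) (nhdsWithin 0 (Ioi 0)) (nhds (g c)) := by
    intro e c h he; subst he
    exact ks_limit mg bg (Tr_right h)
  have lim : Tendsto (fun δ => (∫ x, g x * ks 0 t₁ δ x) - (∫ x, g x * ks 0 t₂ δ x) +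
      ∫ t, bp 0 t₁ 0 t₂ δ t * q t) (nhdsWithin 0 (Ioi 0)) (nhds (g t₁ - g t₂ + ∫ t in Ioc t₁ t₂, q t)) := by
    refine ((Q1 0 t₁ g1 rfl).sub (Q1 0 t₂ g2 rfl)).add ?_
    rw [← integral_indicator measurableSet_Ioc]
    apply tendsto_integral_filter_of_dominated_convergence ((Icc (t₁ - 1) (t₂ + 1)).indicator fun _ => 2 * M)
    · refine Eventually.of_forall fun δ => ((bp_contDiff _ _ _ _ _).continuous.measurable.mul mq).aestronglyMeasurable
    · filter_upwards [self_mem_nhdsWithin, nhdsWithin_le_nhds (Iic_mem_nhds one_pos)] with δ hδ hδ1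
      refine Eventually.of_forall fun x => ?_
      by_cases hx : x ∈ Icc (t₁ - 1) (t₂ + 1)
      · rw [indicator_of_mem hx, norm_mul]
        simp only [Real.norm_eq_abs]
        nlinarith [bq x, bp_abs 0 t₁ 0 t₂ δ x, abs_nonneg (q x), abs_nonneg (bp 0 t₁ 0 t₂ δ x)]
      · rw [indicator_of_notMem hx, bp_out hδ hδ1 le_rfl zero_le_one le_rfl zero_le_one ht hx]; simp
    · rw [integrable_indicator_iff measurableSet_Icc]
      exact integrableOn_const (by simp)
    · have ha : ∀ᵐ x : ℝ, x ≠ t₁ ∧ x ≠ t₂ := by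
        have : ∀ c : ℝ, ∀ᵐ x : ℝ, x ≠ c := fun c => by
          rw [ae_iff]; simp
        filter_upwards [this t₁, this t₂] with x a b using ⟨a, b⟩
      filter_upwards [ha] with x hx
      have := (bp_tendsto (e₁ := 0) (e₂ := 0) ht hx.1 hx.2).mul_const (q x)
      convert this using 2
      by_cases hx : x ∈ Ioc t₁ t₂ <;> simp [hx]
  have e3 : ∫ t in Ioc t₁ t₂, q t = ∫ t in Ioc t₁ t₂, (l₁ t - l₂ t) := by
    apply setIntegral_congr_fun measurableSet_Ioc
    intro t h
    have : 0 < t := ht1.trans h.1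
    simp [hq, this]
  rw [e3] at lim
  refine ge_of_tendsto lim ?_
  filter_upwards [self_mem_nhdsWithin, nhdsWithin_le_nhds (Iic_mem_nhds one_pos)] with δ hδ hδ1
  have hbc : HasCompactSupport (bp 0 t₁ 0 t₂ δ) := HasCompactSupport.intro isCompact_Icc
    (fun x hx => bp_out hδ hδ1 le_rfl zero_le_one le_rfl zero_le_one ht hx)
  have hb0 : ∀ t ≤ 0, bp 0 t₁ 0 t₂ δ t = 0 := by
    intro t h0
    unfold bp st
    rw [sg_le, sg_le, sub_zero]
    · have : (t - t₂)/δ ≤ 0 := div_nonpos_of_nonpos_of_nonneg (by linarith) (le_of_lt hδ)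
      linarith
    · have : (t - t₁)/δ ≤ 0 := div_nonpos_of_nonpos_of_nonneg (by linarith) (le_of_lt hδ)
      linarith
  have := step1 (bp 0 t₁ 0 t₂ δ) (bp_contDiff _ _ _ _ _) hbc hb0 (bp_nonneg hδ le_rfl ht)
  refine this.trans (le_of_eq ?_)
  have hks : ∀ c, Integrable (fun t => g t * ks 0 c δ t) := by
    intro c
    have : Integrable (ks 0 c δ) := by
      refine (ks_cont 0 c δ).integrable_of_hasCompactSupport ?_
      refine HasCompactSupport.intro (isCompact_Icc (a := c) (b := c + δ)) (fun x hx => ?_)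
      unfold ks
      rw [kk_out, mul_zero]
      intro hh
      apply hx
      have h3 := hh.1; have h4 := hh.2
      rw [add_zero] at h3 h4
      rw [lt_div_iff₀ hδ] at h3
      rw [div_lt_iff₀ hδ] at h4
      constructor <;> linarith
    exact this.bdd_mul mg.aestronglyMeasurable (Eventually.of_forall bg)
  have hbq : Integrable (fun t => bp 0 t₁ 0 t₂ δ t * q t) := by
    have := ((bp_contDiff 0 t₁ 0 t₂ δ).continuous.integrable_of_hasCompactSupport hbc).bdd_mul (μ := volume)
      mq.aestronglyMeasurable (Eventually.of_forall bq)
    exact this.congr (Eventually.of_forall fun t => mul_comm _ _)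
  have hk2 : Integrable (fun t => g t * ks 0 t₁ δ t - g t * ks 0 t₂ δ t) := (hks _).sub (hks _)
  rw [← integral_sub (hks _) (hks _), ← integral_add hk2 hbq]
  congr 1
  ext t
  rw [bp_deriv]
  by_cases h0 : 0 < t
  · simp only [hq, if_pos h0]; ring
  · simp only [hq, if_neg h0, hb0 t (not_lt.1 h0)]; ring
end

section
lemma ae_nonneg_of_Ioc {q : ℝ → ℝ} {M : ℝ} (mq : Measurable q) (bq : ∀ t, |q t| ≤ M)
    (H : ∀ t₁ t₂, 0 < t₁ → t₁ ≤ t₂ → 0 ≤ ∫ t in Ioc t₁ t₂, q t) : ∀ᵐ t : ℝ, 0 < t → 0 ≤ q t := by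
  have hI : ∀ a b, IntervalIntegrable q volume a b := fun a b => by
    rw [intervalIntegrable_iff]
    exact Measure.integrableOn_of_bounded (M := M) (by simp) mq.aestronglyMeasurable (Eventually.of_forall bq)
  have hL : LocallyIntegrable q volume := by
    intro x
    refine ⟨Ioc (x-1) (x+1), Ioc_mem_nhds (by linarith) (by linarith), ?_⟩
    have := hI (x-1) (x+1)
    rwa [intervalIntegrable_iff_integrableOn_Ioc_of_le (by linarith)] at this
  filter_upwards [LocallyIntegrable.ae_hasDerivAt_integral hL] with t ht h0
  have h1 := (ht 0).hasDerivWithinAt (s := Ioi t)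
  have := (hasDerivWithinAt_iff_tendsto_slope' (by simp)).1 h1
  refine ge_of_tendsto this ?_
  filter_upwards [self_mem_nhdsWithin] with s hs
  rw [slope_def_field]
  apply div_nonneg
  · have e := intervalIntegral.integral_add_adjacent_intervals (hI 0 t) (hI t s)
    have := H t s h0 (le_of_lt hs)
    rw [← intervalIntegral.integral_of_le (le_of_lt hs)] at this
    linarith
  · exact sub_nonneg.2 (le_of_lt hs)

lemma sign_cont {f : ℝ → ℝ} (hf : Continuous f) (A : ℝ) :
    Continuous (fun w => Real.sign (w - A) * (f w - f A)) := by
  rw [continuous_iff_continuousAt]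
  intro w
  rcases lt_trichotomy w A with h | h | h
  · have : (fun w => Real.sign (w - A) * (f w - f A)) =ᶠ[nhds w] fun w => -1 * (f w - f A) := by
      filter_upwards [Iio_mem_nhds h] with v hv
      rw [Real.sign_of_neg (sub_neg.2 hv)]
    rw [continuousAt_congr this]
    fun_prop
  · subst h
    have hz : Tendsto (fun v => f v - f w) (nhds w) (nhds 0) := by
      have := (hf.tendsto w).sub_const (f w); simpa using this
    rw [ContinuousAt]
    simp only [sub_self, mul_zero]
    apply squeeze_zero_norm _ (by simpa using hz.norm)
    intro v
    rw [norm_mul]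
    have : ‖Real.sign (v - w)‖ ≤ 1 := by
      rcases Real.sign_apply_eq (v - w) with h | h | h <;> rw [h] <;> norm_num
    rw [← Real.norm_eq_abs]
    nlinarith [norm_nonneg (f v - f w)]
  · have : (fun w => Real.sign (w - A) * (f w - f A)) =ᶠ[nhds w] fun w => 1 * (f w - f A) := by
      filter_upwards [Ioi_mem_nhds h] with v hv
      rw [Real.sign_of_pos (sub_pos.2 hv)]
    rw [continuousAt_congr this]
    fun_prop

lemma dflux_meas {fl fr : ℝ → ℝ} (hl : Continuous fl) (hr : Continuous fr) {α : Type*} [MeasurableSpace α]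
    {x u : α → ℝ} (hx : Measurable x) (hu : Measurable u) : Measurable (fun z => dflux fl fr (x z) (u z)) := by
  unfold dflux
  exact Measurable.ite (measurableSet_lt hx measurable_const) (hl.measurable.comp hu) (hr.measurable.comp hu)

namespace ABSol
variable {fl fr : ℝ → ℝ} {A B : ℝ} {u0 : ℝ → ℝ} (s : ABSol fl fr A B u0)

lemma mt (t : ℝ) : Measurable (fun x => s.u x t) := s.meas.comp (measurable_id.prodMk measurable_const)

lemma bounds (hl : Continuous fl) (hr : Continuous fr) : ∃ M L, 0 < M ∧ 0 < L ∧ (∀ x t, |s.u x t| ≤ M) ∧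
    (∀ w, |w| ≤ M → |fl w| ≤ L ∧ |fr w| ≤ L) ∧ (∀ x t, 0 < t → |s.up x t| ≤ M) ∧ (∀ x t, 0 < t → |s.um x t| ≤ M) := by
  obtain ⟨M, hM⟩ := s.bdd
  obtain ⟨L1, h1⟩ := (isCompact_Icc (a := -(max M 1)) (b := max M 1)).exists_bound_of_continuousOn hl.continuousOn
  obtain ⟨L2, h2⟩ := (isCompact_Icc (a := -(max M 1)) (b := max M 1)).exists_bound_of_continuousOn hr.continuousOn
  have hb : ∀ x t, |s.u x t| ≤ max M 1 := fun x t => (hM x t).trans (le_max_left _ _)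
  refine ⟨max M 1, max (max L1 L2) 1, by positivity, by positivity, hb, ?_, ?_, ?_⟩
  · intro w hw
    have := abs_le.1 hw
    exact ⟨(h1 w this).trans ((le_max_left _ _).trans (le_max_left _ _)), (h2 w this).trans ((le_max_right _ _).trans (le_max_left _ _))⟩
  · intro x t ht
    exact le_of_tendsto (s.up_spec x t ht).abs (Eventually.of_forall fun _ => hb _ _)
  · intro x t ht
    exact le_of_tendsto (s.um_spec x t ht).abs (Eventually.of_forall fun _ => hb _ _)

lemma flux_right (hl : Continuous fl) (hr : Continuous fr) (c t : ℝ) (ht : 0 < t) :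
    Tendsto (fun y => dflux fl fr y (s.u y t)) (nhdsWithin c (Ioi c)) (nhds (dflux fl fr c (s.up c t))) := by
  by_cases hc : c < 0
  · have : Tendsto (fun y => fl (s.u y t)) (nhdsWithin c (Ioi c)) (nhds (fl (s.up c t))) :=
      (hl.tendsto _).comp (s.up_spec c t ht)
    unfold dflux
    rw [if_pos hc]
    apply this.congr'
    filter_upwards [nhdsWithin_le_nhds (Iio_mem_nhds hc)] with y hy
    rw [if_pos (mem_Iio.1 hy)]
  · have : Tendsto (fun y => fr (s.u y t)) (nhdsWithin c (Ioi c)) (nhds (fr (s.up c t))) :=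
      (hr.tendsto _).comp (s.up_spec c t ht)
    unfold dflux
    rw [if_neg hc]
    apply this.congr'
    filter_upwards [self_mem_nhdsWithin] with y hy
    have : c < y := hy
    rw [if_neg (by linarith)]

/-- truncated right flux -/
def Fx (s : ABSol fl fr A B u0) (c t : ℝ) : ℝ := if 0 < t then dflux fl fr c (s.up c t) else 0

/-- potential -/
def U (s : ABSol fl fr A B u0) (x t : ℝ) : ℝ := (∫ y in (0:ℝ)..x, s.u y t) - ∫ τ in (0:ℝ)..t, s.Fx 0 τ

lemma Fx_meas (hl : Continuous fl) (hr : Continuous fr) (c : ℝ) : Measurable (s.Fx c) := by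
  unfold Fx
  exact Tr_meas (Q := fun x t => dflux fl fr x (s.u x t)) (dflux_meas hl hr measurable_fst s.meas)
    (fun t ht => Tr_right (s.flux_right hl hr c t ht))

lemma Fx_bd {M L : ℝ} (hL0 : 0 < L) (hL : ∀ w, |w| ≤ M → |fl w| ≤ L ∧ |fr w| ≤ L) (hp : ∀ x t, 0 < t → |s.up x t| ≤ M)
    (c t : ℝ) : |s.Fx c t| ≤ L := by
  unfold Fx dflux
  split_ifs with h1 h2
  · exact (hL _ (hp _ _ h1)).1
  · exact (hL _ (hp _ _ h1)).2
  · simpa using hL0.le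

lemma intble_of_bd {g : ℝ → ℝ} {M : ℝ} (hg : Measurable g) (hb : ∀ x, |g x| ≤ M) (a b : ℝ) :
    IntervalIntegrable g volume a b := by
  rw [intervalIntegrable_iff]
  exact Measure.integrableOn_of_bounded (M := M) (by simp) hg.aestronglyMeasurable (Eventually.of_forall hb)

lemma u_int (t a b : ℝ) : IntervalIntegrable (fun x => s.u x t) volume a b := by
  obtain ⟨M, hM⟩ := s.bdd
  exact intble_of_bd (s.mt t) (fun x => hM x t) a b

lemma Fx_int (hl : Continuous fl) (hr : Continuous fr) (c a b : ℝ) : IntervalIntegrable (s.Fx c) volume a b := by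
  obtain ⟨M, L, hM, hL0, hb, hL, hp, hm⟩ := s.bounds hl hr
  exact intble_of_bd (s.Fx_meas hl hr c) (s.Fx_bd hL0 hL hp c) a b

/-- time continuity of integrals of Lipschitz functions of u -/
lemma time_cont {g : ℝ → ℝ} (hg : Continuous g) {K : ℝ} (hK : ∀ x t t', |g (s.u x t) - g (s.u x t')| ≤ K * |s.u x t - s.u x t'|)
    (a b t₀ : ℝ) (h0 : 0 ≤ t₀) : Tendsto (fun t => ∫ x in a..b, g (s.u x t)) (nhdsWithin t₀ (Ici 0))
      (nhds (∫ x in a..b, g (s.u x t₀))) := by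
  obtain ⟨M, hM⟩ := s.bdd
  obtain ⟨L, hL⟩ := (isCompact_Icc (a := -M) (b := M)).exists_bound_of_continuousOn hg.continuousOn
  have hi : ∀ t, IntervalIntegrable (fun x => g (s.u x t)) volume a b := fun t =>
    intble_of_bd (M := L) (hg.measurable.comp (s.mt t)) (fun x => hL _ (abs_le.1 (hM x t))) a b
  set r := max |a| |b|
  have hsub : uIoc a b ⊆ Icc (-r) r := by
    intro x hx
    rw [uIoc, mem_Ioc] at hx
    have h1 : -r ≤ min a b := by
      rw [le_min_iff]
      exact ⟨by linarith [neg_abs_le a, le_max_left |a| |b|], by linarith [neg_abs_le b, le_max_right |a| |b|]⟩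
    have h2 : max a b ≤ r := max_le_max (le_abs_self _) (le_abs_self _)
    exact ⟨by linarith [hx.1], by linarith [hx.2]⟩
  rw [tendsto_iff_norm_sub_tendsto_zero]
  have hT := (s.timeCont r t₀ h0).const_mul K
  rw [mul_zero] at hT
  refine squeeze_zero (fun _ => norm_nonneg _) (fun t => ?_) hT
  rw [← intervalIntegral.integral_sub (hi t) (hi t₀)]
  refine (intervalIntegral.norm_integral_le_integral_norm_uIoc).trans ?_
  rw [← integral_const_mul]
  have hI2 : IntegrableOn (fun x => K * |s.u x t - s.u x t₀|) (Icc (-r) r) := by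
    refine Integrable.const_mul ?_ K
    refine Measure.integrableOn_of_bounded (M := 2 * M) (by simp) (((s.mt t).sub (s.mt t₀)).abs.aestronglyMeasurable) ?_
    refine Eventually.of_forall fun x => ?_
    simp only [Real.norm_eq_abs, abs_abs]
    exact (abs_sub _ _).trans (by linarith [hM x t, hM x t₀])
  have hnn : ∀ x, 0 ≤ K * |s.u x t - s.u x t₀| := fun x => (abs_nonneg _).trans (hK x t t₀)
  refine (integral_mono_ae (g := fun x => K * |s.u x t - s.u x t₀|) ?_ (hI2.mono_set hsub) (Eventually.of_forall fun x => hK x t t₀)).trans ?_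
  · exact (intervalIntegrable_iff.1 ((hi t).sub (hi t₀))).norm
  · exact setIntegral_mono_set hI2 (Eventually.of_forall hnn) hsub.eventuallyLE

lemma time_cont_u (a b t₀ : ℝ) (h0 : 0 ≤ t₀) : Tendsto (fun t => ∫ x in a..b, s.u x t) (nhdsWithin t₀ (Ici 0))
      (nhds (∫ x in a..b, s.u x t₀)) :=
  s.time_cont (g := id) continuous_id (K := 1) (fun x t t' => by simp) a b t₀ h0

lemma weak_pm (ε : ℝ) : ∀ φ : ℝ → ℝ → ℝ,
      ContDiff ℝ 1 (fun p : ℝ × ℝ => φ p.1 p.2) →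
      HasCompactSupport (fun p : ℝ × ℝ => φ p.1 p.2) →
      (∀ x t, 0 ≤ φ x t) →
      (∀ x t, t ≤ 0 → φ x t = 0) →
      0 ≤ ∫ p : ℝ × ℝ, ((ε * s.u p.1 p.2) * deriv (fun s => φ p.1 s) p.2 +
        (ε * dflux fl fr p.1 (s.u p.1 p.2)) * deriv (fun y => φ y p.2) p.1) := by
  intro φ h1 h2 _ h3
  have := s.weak φ h1 h2 h3
  have e : ∀ p : ℝ × ℝ, ((ε * s.u p.1 p.2) * deriv (fun s => φ p.1 s) p.2 +
        (ε * dflux fl fr p.1 (s.u p.1 p.2)) * deriv (fun y => φ y p.2) p.1) = ε * (s.u p.1 p.2 * deriv (fun s => φ p.1 s) p.2 +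
        dflux fl fr p.1 (s.u p.1 p.2) * deriv (fun y => φ y p.2) p.1) := fun p => by ring
  simp_rw [e]
  rw [integral_const_mul, this, mul_zero]

/-- generic conservation -/
lemma cons_gen (hl : Continuous fl) (hr : Continuous fr) {e₁ c₁ e₂ c₂ : ℝ} (h1' : e₁ ≤ 1) (h2 : 0 ≤ e₂)
    (he : e₂ ≤ e₁) (hc : c₁ ≤ c₂) {l₁ l₂ : ℝ → ℝ}
    (H1 : ∀ t, 0 < t → Tr e₁ (fun x => dflux fl fr x (s.u x t)) c₁ (l₁ t))
    (H2 : ∀ t, 0 < t → Tr e₂ (fun x => dflux fl fr x (s.u x t)) c₂ (l₂ t))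
    {t₁ t₂ : ℝ} (ht1 : 0 < t₁) (ht : t₁ ≤ t₂) :
    (∫ x in c₁..c₂, s.u x t₂) - (∫ x in c₁..c₂, s.u x t₁) = ∫ t in t₁..t₂, (l₁ t - l₂ t) := by
  obtain ⟨M, L, hM, hL0, hb, hL, hp, hm⟩ := s.bounds hl hr
  have key : ∀ ε : ℝ, 0 ≤ ε * ((∫ x in c₁..c₂, s.u x t₁) - (∫ x in c₁..c₂, s.u x t₂) + ∫ t in t₁..t₂, (l₁ t - l₂ t)) := by
    intro ε
    have g : ∀ t₀, 0 < t₀ → Tendsto (fun t => ∫ x in Ioc c₁ c₂, ε * s.u x t) (nhdsWithin t₀ (Ioi t₀)) (nhds (∫ x in Ioc c₁ c₂, ε * s.u x t₀)) := by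
      intro t₀ h0
      have := ((s.time_cont_u c₁ c₂ t₀ h0.le).mono_left (nhdsWithin_mono _ (fun x hx => (h0.trans hx).le : Ioi t₀ ⊆ Ici 0))).const_mul ε
      simp only [intervalIntegral.integral_of_le hc] at this
      simp only [integral_const_mul]
      exact this
    have hbd : ∀ x t, |dflux fl fr x (s.u x t)| ≤ L := by
      intro x t
      unfold dflux
      split_ifs
      · exact (hL _ (hb x t)).1
      · exact (hL _ (hb x t)).2
    have := TR_main (E := fun x t => ε * s.u x t) (Q := fun x t => ε * dflux fl fr x (s.u x t)) (M := max (|ε| * M) (|ε| * L))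
      (l₁ := fun t => ε * l₁ t) (l₂ := fun t => ε * l₂ t)
      (s.meas.const_mul ε) ((dflux_meas hl hr measurable_fst s.meas).const_mul ε)
      (fun x t => by rw [abs_mul]; exact (mul_le_mul_of_nonneg_left (hb x t) (abs_nonneg _)).trans (le_max_left _ _))
      (fun x t => by rw [abs_mul]; exact (mul_le_mul_of_nonneg_left (hbd x t) (abs_nonneg _)).trans (le_max_right _ _))
      h1' h2 he hc (fun t ht ξ hξ => (H1 t ht ξ hξ).const_mul ε) (fun t ht ξ hξ => (H2 t ht ξ hξ).const_mul ε)
      (s.weak_pm ε) ht1 ht (g t₁ ht1) (g t₂ (ht1.trans_le ht))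
    simp only [← mul_sub, integral_const_mul] at this
    rw [intervalIntegral.integral_of_le hc, intervalIntegral.integral_of_le hc, intervalIntegral.integral_of_le ht, mul_add, mul_sub]
    linarith
  have a := key 1
  have b := key (-1)
  linarith

/-- time increments of the potential -/
lemma U_time_pos (hl : Continuous fl) (hr : Continuous fr) (x : ℝ) {t₁ t₂ : ℝ} (ht1 : 0 < t₁) (ht : t₁ ≤ t₂) :
    s.U x t₂ - s.U x t₁ = - ∫ t in t₁..t₂, s.Fx x t := by
  have hT : ∀ c, ∀ t, 0 < t → Tr 0 (fun x => dflux fl fr x (s.u x t)) c (s.Fx c t) := by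
    intro c t ht
    unfold Fx
    rw [if_pos ht]
    exact Tr_right (s.flux_right hl hr c t ht)
  have hI := fun c a b => s.Fx_int hl hr c a b
  have e := intervalIntegral.integral_add_adjacent_intervals (hI 0 0 t₁) (hI 0 t₁ t₂)
  unfold U
  rcases le_total 0 x with hx | hx
  · have := s.cons_gen hl hr zero_le_one le_rfl le_rfl hx (hT 0) (hT x) ht1 ht
    rw [intervalIntegral.integral_sub (hI _ _ _) (hI _ _ _)] at this
    linarith
  · have := s.cons_gen hl hr zero_le_one le_rfl le_rfl hx (hT x) (hT 0) ht1 ht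
    rw [intervalIntegral.integral_sub (hI _ _ _) (hI _ _ _), intervalIntegral.integral_symm,
      intervalIntegral.integral_symm 0 x] at this
    linarith

lemma U_tcont0 (hl : Continuous fl) (hr : Continuous fr) (x t₀ : ℝ) (h0 : 0 ≤ t₀) :
    Tendsto (fun t => s.U x t) (nhdsWithin t₀ (Ici 0)) (nhds (s.U x t₀)) := by
  unfold U
  refine (s.time_cont_u 0 x t₀ h0).sub ?_
  exact ((intervalIntegral.continuous_primitive (fun a b => s.Fx_int hl hr 0 a b) 0).tendsto t₀).mono_left nhdsWithin_le_nhds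

lemma U_time (hl : Continuous fl) (hr : Continuous fr) (x : ℝ) {t₁ t₂ : ℝ} (ht1 : 0 ≤ t₁) (ht : t₁ ≤ t₂) :
    s.U x t₂ - s.U x t₁ = - ∫ t in t₁..t₂, s.Fx x t := by
  rcases ht1.eq_or_lt with h | h
  · subst h
    rcases ht.eq_or_lt with h | h
    · subst h; simp
    · have h1 : Tendsto (fun t => s.U x t₂ - s.U x t) (nhdsWithin 0 (Ioi 0)) (nhds (s.U x t₂ - s.U x 0)) :=
        ((s.U_tcont0 hl hr x 0 le_rfl).mono_left (nhdsWithin_mono _ Ioi_subset_Ici_self)).const_sub _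
      have h2 : Tendsto (fun t => - ∫ τ in t..t₂, s.Fx x τ) (nhdsWithin 0 (Ioi 0)) (nhds (- ∫ τ in (0:ℝ)..t₂, s.Fx x τ)) := by
        have : Continuous (fun t => - ∫ τ in t..t₂, s.Fx x τ) := by
          have := intervalIntegral.continuous_primitive (fun a b => s.Fx_int hl hr x a b) t₂
          convert this using 2
          rw [intervalIntegral.integral_symm, neg_neg]
        exact (this.tendsto 0).mono_left nhdsWithin_le_nhds
      refine tendsto_nhds_unique h1 (h2.congr' ?_)
      filter_upwards [self_mem_nhdsWithin, nhdsWithin_le_nhds (Iic_mem_nhds h)] with t ht ht'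
      rw [s.U_time_pos hl hr x ht ht']
  · exact s.U_time_pos hl hr x h ht

lemma U_space (x y t : ℝ) : s.U y t - s.U x t = ∫ z in x..y, s.u z t := by
  unfold U
  have := intervalIntegral.integral_add_adjacent_intervals (s.u_int t 0 x) (s.u_int t x y)
  linarith

lemma U_lip (hl : Continuous fl) (hr : Continuous fr) : ∃ M L, 0 < M ∧ 0 < L ∧ (∀ x t, |s.u x t| ≤ M) ∧
    (∀ w, |w| ≤ M → |fl w| ≤ L ∧ |fr w| ≤ L) ∧
    (∀ x y t, |s.U y t - s.U x t| ≤ M * |y - x|) ∧ (∀ x t t', 0 ≤ t → 0 ≤ t' → |s.U x t' - s.U x t| ≤ L * |t' - t|) := by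
  obtain ⟨M, L, hM, hL0, hb, hL, hp, hm⟩ := s.bounds hl hr
  refine ⟨M, L, hM, hL0, hb, hL, ?_, ?_⟩
  · intro x y t
    rw [s.U_space]
    exact intervalIntegral.norm_integral_le_of_norm_le_const (f := fun z => s.u z t) (fun z _ => hb z t)
  · have : ∀ x t t', 0 ≤ t → t ≤ t' → |s.U x t' - s.U x t| ≤ L * |t' - t| := by
      intro x t t' h h'
      rw [s.U_time hl hr x h h', abs_neg]
      exact intervalIntegral.norm_integral_le_of_norm_le_const (f := s.Fx x) (fun z _ => s.Fx_bd hL0 hL hp x z)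
    intro x t t' h h'
    rcases le_total t t' with h1 | h1
    · exact this x t t' h h1
    · rw [abs_sub_comm, abs_sub_comm t']; exact this x t' t h' h1

/-- Rankine-Hugoniot -/
lemma RH (hl : Continuous fl) (hr : Continuous fr) : ∀ᵐ t : ℝ, 0 < t → fl (s.um 0 t) = fr (s.up 0 t) := by
  obtain ⟨M, L, hM, hL0, hb, hL, hp, hm⟩ := s.bounds hl hr
  have hleft : ∀ t, 0 < t → Tendsto (fun y => dflux fl fr y (s.u y t)) (nhdsWithin 0 (Iio 0)) (nhds (fl (s.um 0 t))) := by
    intro t ht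
    have : Tendsto (fun y => fl (s.u y t)) (nhdsWithin 0 (Iio 0)) (nhds (fl (s.um 0 t))) :=
      (hl.tendsto _).comp (s.um_spec 0 t ht)
    apply this.congr'
    filter_upwards [self_mem_nhdsWithin] with y hy
    unfold dflux; rw [if_pos (mem_Iio.1 hy)]
  have hright : ∀ t, 0 < t → Tendsto (fun y => dflux fl fr y (s.u y t)) (nhdsWithin 0 (Ioi 0)) (nhds (fr (s.up 0 t))) := by
    intro t ht
    have := s.flux_right hl hr 0 t ht
    unfold dflux at this ⊢
    simpa using this
  have mQ : Measurable (Function.uncurry fun x t => dflux fl fr x (s.u x t)) := dflux_meas hl hr measurable_fst s.meas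
  have m1 := Tr_meas mQ (fun t ht => Tr_left (hleft t ht))
  have m2 := Tr_meas mQ (fun t ht => Tr_right (hright t ht))
  have bq : ∀ t, |(if 0 < t then fl (s.um 0 t) else 0) - (if 0 < t then fr (s.up 0 t) else 0)| ≤ 2 * L := by
    intro t
    by_cases ht : 0 < t
    · simp only [if_pos ht]
      exact (abs_sub _ _).trans (by linarith [(hL _ (hm 0 t ht)).1, (hL _ (hp 0 t ht)).2])
    · simp only [if_neg ht]; simp; exact hL0.le
  have H : ∀ t₁ t₂, 0 < t₁ → t₁ ≤ t₂ → 0 = ∫ t in Ioc t₁ t₂,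
      ((if 0 < t then fl (s.um 0 t) else 0) - (if 0 < t then fr (s.up 0 t) else 0)) := by
    intro t₁ t₂ h1 h2
    have := s.cons_gen hl hr le_rfl le_rfl zero_le_one le_rfl (fun t ht => Tr_left (hleft t ht)) (fun t ht => Tr_right (hright t ht)) h1 h2
    rw [intervalIntegral.integral_of_le h2] at this
    simp only [intervalIntegral.integral_same, sub_self] at this
    refine this.trans ?_
    apply setIntegral_congr_fun measurableSet_Ioc
    intro t ht
    have h0 : 0 < t := h1.trans ht.1
    simp only [if_pos h0]
  have a1 := ae_nonneg_of_Ioc (m1.sub m2) bq (fun t₁ t₂ h1 h2 => (H t₁ t₂ h1 h2).le)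
  have a2 := ae_nonneg_of_Ioc (m1.sub m2).neg (fun t => by simpa only [Pi.neg_apply, abs_neg] using! bq t) (fun t₁ t₂ h1 h2 => by
    have := H t₁ t₂ h1 h2
    have e : ∫ t in Ioc t₁ t₂, (-((fun t => (if 0 < t then fl (s.um 0 t) else 0)) - (fun t => (if 0 < t then fr (s.up 0 t) else 0)))) t =
      - ∫ t in Ioc t₁ t₂, ((if 0 < t then fl (s.um 0 t) else 0) - (if 0 < t then fr (s.up 0 t) else 0)) := by
        rw [← integral_neg]; rfl
    rw [e, ← this]; simp)
  filter_upwards [a1, a2] with t h1 h2 ht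
  have b1 := h1 ht
  have b2 := h2 ht
  simp only [Pi.sub_apply, Pi.neg_apply, if_pos ht] at b1 b2
  linarith

/-- interface entropy condition in trace form -/
lemma interface_ae (hl : Continuous fl) (hr : Continuous fr) : ∀ᵐ t : ℝ, 0 < t →
    Real.sign (s.up 0 t - B) * (fr (s.up 0 t) - fr B) ≤ Real.sign (s.um 0 t - A) * (fl (s.um 0 t) - fl A) := by
  obtain ⟨M, L, hM, hL0, hb, hL, hp, hm⟩ := s.bounds hl hr
  set Q := fun x t => Real.sign (s.u x t - cAB A B x) * (dflux fl fr x (s.u x t) - dflux fl fr x (cAB A B x)) with hQ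
  have hleft : ∀ t, 0 < t → Tendsto (fun y => Q y t) (nhdsWithin 0 (Iio 0)) (nhds (Real.sign (s.um 0 t - A) * (fl (s.um 0 t) - fl A))) := by
    intro t ht
    have := ((sign_cont hl A).tendsto _).comp (s.um_spec 0 t ht)
    apply this.congr'
    filter_upwards [self_mem_nhdsWithin] with y hy
    have hy' : y < 0 := hy
    simp [hQ, dflux, cAB, hy', hy'.le]
  have hright : ∀ t, 0 < t → Tendsto (fun y => Q y t) (nhdsWithin 0 (Ioi 0)) (nhds (Real.sign (s.up 0 t - B) * (fr (s.up 0 t) - fr B))) := by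
    intro t ht
    have := ((sign_cont hr B).tendsto _).comp (s.up_spec 0 t ht)
    apply this.congr'
    filter_upwards [self_mem_nhdsWithin] with y hy
    have hy' : 0 < y := hy
    simp [hQ, dflux, cAB, hy'.not_gt, hy'.not_ge]
  have mc : Measurable (cAB A B) := by
    unfold cAB; exact Measurable.ite measurableSet_Iic measurable_const measurable_const
  have ms : Measurable Real.sign := by
    unfold Real.sign
    exact Measurable.ite measurableSet_Iio measurable_const (Measurable.ite measurableSet_Ioi measurable_const measurable_const)
  have mQ : Measurable (Function.uncurry Q) :=
    (ms.comp (s.meas.sub (mc.comp measurable_fst))).mul ((dflux_meas hl hr measurable_fst s.meas).sub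
      (dflux_meas hl hr measurable_fst (mc.comp measurable_fst)))
  set K := 2 * L + (|fl A| + |fr A|) + (|fl B| + |fr B|) + M + |A| + |B| with hK
  have bs : ∀ w, |Real.sign w| ≤ 1 := by
    intro w; rcases Real.sign_apply_eq w with h | h | h <;> rw [h] <;> norm_num
  have bQ : ∀ x t, |Q x t| ≤ K := by
    intro x t
    rw [hQ]
    simp only [abs_mul]
    have h1 : |dflux fl fr x (s.u x t) - dflux fl fr x (cAB A B x)| ≤ K := by
      refine (abs_sub _ _).trans ?_
      have := hL _ (hb x t)
      unfold dflux cAB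
      rw [hK]
      split_ifs <;> linarith [abs_nonneg (fl A), abs_nonneg (fr B), abs_nonneg (fr A), abs_nonneg (fl B), abs_nonneg A, abs_nonneg B, this.1, this.2]
    nlinarith [bs (s.u x t - cAB A B x), abs_nonneg (dflux fl fr x (s.u x t) - dflux fl fr x (cAB A B x))]
  have bE : ∀ x t, |(|s.u x t - cAB A B x|)| ≤ K := by
    intro x t
    rw [abs_abs]
    refine (abs_sub _ _).trans ?_
    unfold cAB
    rw [hK]
    split_ifs <;> linarith [abs_nonneg (fl A), abs_nonneg (fr B), abs_nonneg (fr A), abs_nonneg (fl B), abs_nonneg A, abs_nonneg B, hb x t]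
  have m1 := Tr_meas mQ (fun t ht => Tr_left (hleft t ht))
  have m2 := Tr_meas mQ (fun t ht => Tr_right (hright t ht))
  have b1 := fun t (ht : 0 < t) => Tr_le (Tr_left (hleft t ht)) (fun x => bQ x t)
  have b2 := fun t (ht : 0 < t) => Tr_le (Tr_right (hright t ht)) (fun x => bQ x t)
  have H := ae_nonneg_of_Ioc (m1.sub m2) (M := 2 * K) (fun t => by
    by_cases ht : 0 < t
    · simp only [if_pos ht, Pi.sub_apply]
      exact (abs_sub _ _).trans (by linarith [b1 t ht, b2 t ht])
    · simp only [if_neg ht, Pi.sub_apply, sub_self, abs_zero]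
      have := (abs_nonneg _).trans (bQ 0 0)
      linarith) (fun t₁ t₂ h1 h2 => by
    have := TR_main (E := fun x t => |s.u x t - cAB A B x|) (s.meas.sub (mc.comp measurable_fst)).abs mQ bE bQ
      le_rfl le_rfl zero_le_one le_rfl (fun t ht => Tr_left (hleft t ht)) (fun t ht => Tr_right (hright t ht))
      (s.interfaceEntropy) h1 h2 (by simp) (by simp)
    simp only [Ioc_self, Measure.restrict_empty, integral_zero_measure, sub_self, zero_add] at this
    refine this.trans (le_of_eq ?_)
    apply setIntegral_congr_fun measurableSet_Ioc
    intro t ht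
    have : 0 < t := h1.trans ht.1
    simp [this])
  filter_upwards [H] with t h1 ht
  have b1 := h1 ht
  simp only [Pi.sub_apply, if_pos ht] at b1
  linarith

end ABSol
end

section
lemma refl_int (G : ℝ × ℝ → ℝ) : ∫ p : ℝ × ℝ, G (-p.1, p.2) = ∫ p, G p := by
  have h : MeasurePreserving (fun p : ℝ × ℝ => (-p.1, p.2)) (volume.prod volume) (volume.prod volume) :=
    (Measure.measurePreserving_neg (volume : Measure ℝ)).prod (MeasurePreserving.id volume)
  have he : MeasurableEmbedding (fun p : ℝ × ℝ => (-p.1, p.2)) :=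
    ((MeasurableEquiv.neg ℝ).prodCongr (MeasurableEquiv.refl ℝ)).measurableEmbedding
  exact h.integral_comp he G

lemma ae_fst_ne : ∀ᵐ p : ℝ × ℝ, p.1 ≠ 0 := by
  have : ∀ᵐ x : ℝ, x ≠ 0 := by rw [ae_iff]; simp
  exact (Measure.quasiMeasurePreserving_fst (μ := (volume : Measure ℝ)) (ν := (volume : Measure ℝ))).ae this

lemma sign_neg' (x : ℝ) : Real.sign (-x) = - Real.sign x := by
  rcases lt_trichotomy x 0 with h | h | h
  · rw [Real.sign_of_neg h, Real.sign_of_pos (by linarith)]; norm_num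
  · subst h; simp
  · rw [Real.sign_of_pos h, Real.sign_of_neg (by linarith)]

lemma dflux_refl {fl fr : ℝ → ℝ} {x : ℝ} (hx : x ≠ 0) (w : ℝ) :
    dflux (fun w => fr (-w)) (fun w => fl (-w)) (-x) (-w) = dflux fl fr x w := by
  unfold dflux
  rcases lt_or_gt_of_ne hx with h | h
  · rw [if_neg (by linarith), if_pos h]; simp
  · rw [if_pos (by linarith), if_neg (by linarith)]; simp

lemma cAB_refl {A B x : ℝ} (hx : x ≠ 0) : cAB (-B) (-A) (-x) = - cAB A B x := by
  unfold cAB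
  rcases lt_or_gt_of_ne hx with h | h
  · rw [if_neg (by linarith), if_pos h.le]
  · rw [if_pos (by linarith), if_neg (by linarith)]

lemma neg_tendsto_l (x : ℝ) : Tendsto (fun y : ℝ => -y) (nhdsWithin x (Iio x)) (nhdsWithin (-x) (Ioi (-x))) := by
  rw [tendsto_nhdsWithin_iff]
  refine ⟨(continuous_neg.tendsto x).mono_left nhdsWithin_le_nhds, ?_⟩
  filter_upwards [self_mem_nhdsWithin] with y hy
  simpa using hy
lemma neg_tendsto_r (x : ℝ) : Tendsto (fun y : ℝ => -y) (nhdsWithin x (Ioi x)) (nhdsWithin (-x) (Iio (-x))) := by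
  rw [tendsto_nhdsWithin_iff]
  refine ⟨(continuous_neg.tendsto x).mono_left nhdsWithin_le_nhds, ?_⟩
  filter_upwards [self_mem_nhdsWithin] with y hy
  simpa using hy

lemma refl_cd {φ : ℝ → ℝ → ℝ} (h : ContDiff ℝ 1 (fun p : ℝ × ℝ => φ p.1 p.2)) :
    ContDiff ℝ 1 (fun p : ℝ × ℝ => φ (-p.1) p.2) :=
  h.comp (contDiff_fst.neg.prodMk contDiff_snd)
lemma refl_cs {φ : ℝ → ℝ → ℝ} (h : HasCompactSupport (fun p : ℝ × ℝ => φ p.1 p.2)) :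
    HasCompactSupport (fun p : ℝ × ℝ => φ (-p.1) p.2) :=
  h.comp_homeomorph ((Homeomorph.neg ℝ).prodCongr (Homeomorph.refl ℝ))

lemma int_refl_eq (F G : ℝ × ℝ → ℝ) (ε : ℝ) (h : ∀ p : ℝ × ℝ, p.1 ≠ 0 → F (-p.1, p.2) = ε * G p) :
    ∫ p, F p = ε * ∫ p, G p := by
  rw [← refl_int F, ← integral_const_mul]
  apply integral_congr_ae
  filter_upwards [ae_fst_ne] with p hp using h p hp

namespace ABSol
variable {fl fr : ℝ → ℝ} {A B : ℝ} {u0 : ℝ → ℝ} (s : ABSol fl fr A B u0)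

/-- reflected solution -/
def refl : ABSol (fun w => fr (-w)) (fun w => fl (-w)) (-B) (-A) (fun x => -u0 (-x)) where
  u := fun x t => - s.u (-x) t
  meas := (s.meas.comp (measurable_fst.neg.prodMk measurable_snd)).neg
  bdd := by
    obtain ⟨M, hM⟩ := s.bdd
    exact ⟨M, fun x t => by rw [abs_neg]; exact hM _ _⟩
  um := fun x t => - s.up (-x) t
  up := fun x t => - s.um (-x) t
  um_spec := fun x t ht => ((s.up_spec (-x) t ht).comp (neg_tendsto_l x)).neg
  up_spec := fun x t ht => ((s.um_spec (-x) t ht).comp (neg_tendsto_r x)).neg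
  weak := by
    intro φ h1 h2 h3
    have := s.weak (fun x t => φ (-x) t) (refl_cd h1) (refl_cs h2) (fun x t ht => h3 _ _ ht)
    rw [int_refl_eq _ _ (-1) _, this, mul_zero]
    intro p hp
    have h1 := dflux_refl (fl := fl) (fr := fr) hp (s.u p.1 p.2)
    simp only [neg_neg, deriv_comp_neg (fun y => φ y p.2), h1]
    ring
  kruzkov_l := by
    intro k φ h1 h2 h3 h4
    have := s.kruzkov_r (-k) (fun x t => φ (-x) t) (refl_cd h1) (refl_cs h2) (fun x t => h3 _ _)
      (fun x t ht => h4 _ _ (ht.imp (fun h => by linarith) id))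
    rw [int_refl_eq _ _ 1 _, one_mul]
    · exact this
    intro p hp
    have e1 : -s.u p.1 p.2 - k = -(s.u p.1 p.2 - -k) := by ring
    simp only [neg_neg, deriv_comp_neg (fun y => φ y p.2), e1, abs_neg, sign_neg']
    ring
  kruzkov_r := by
    intro k φ h1 h2 h3 h4
    have := s.kruzkov_l (-k) (fun x t => φ (-x) t) (refl_cd h1) (refl_cs h2) (fun x t => h3 _ _)
      (fun x t ht => h4 _ _ (ht.imp (fun h => by linarith) id))
    rw [int_refl_eq _ _ 1 _, one_mul]
    · exact this
    intro p hp
    have e1 : -s.u p.1 p.2 - k = -(s.u p.1 p.2 - -k) := by ring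
    simp only [neg_neg, deriv_comp_neg (fun y => φ y p.2), e1, abs_neg, sign_neg']
    ring
  interfaceEntropy := by
    intro φ h1 h2 h3 h4
    have := s.interfaceEntropy (fun x t => φ (-x) t) (refl_cd h1) (refl_cs h2) (fun x t => h3 _ _)
      (fun x t ht => h4 _ _ ht)
    rw [int_refl_eq _ _ 1 _, one_mul]
    · exact this
    intro p hp
    have e1 : -s.u p.1 p.2 - -cAB A B p.1 = -(s.u p.1 p.2 - cAB A B p.1) := by ring
    have h1 := dflux_refl (fl := fl) (fr := fr) hp (s.u p.1 p.2)
    have h2 := dflux_refl (fl := fl) (fr := fr) hp (cAB A B p.1)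
    simp only [neg_neg, deriv_comp_neg (fun y => φ y p.2), cAB_refl hp, h1, h2, e1, abs_neg, sign_neg']
    ring
  timeCont := by
    intro r t₀ h0
    apply (s.timeCont r t₀ h0).congr
    intro t
    have h : MeasurePreserving (fun x : ℝ => -x) volume volume := Measure.measurePreserving_neg (volume : Measure ℝ)
    have := h.setIntegral_preimage_emb (MeasurableEquiv.neg ℝ).measurableEmbedding (fun x => |s.u x t - s.u x t₀|) (Icc (-r) r)
    rw [← this]
    have e : (fun x : ℝ => -x) ⁻¹' Icc (-r) r = Icc (-r) r := by
      ext x; simp only [mem_preimage, mem_Icc]; constructor <;> rintro ⟨a, b⟩ <;> constructor <;> linarith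
    rw [e]
    congr 1
    ext x
    rw [← abs_neg]; congr 1; ring
  init := by
    have h : MeasurePreserving (fun x : ℝ => -x) volume volume := Measure.measurePreserving_neg (volume : Measure ℝ)
    filter_upwards [h.quasiMeasurePreserving.ae s.init] with x hx
    rw [hx]

lemma refl_U (hl : Continuous fl) (hr : Continuous fr) (x t : ℝ) : s.refl.U x t = s.U (-x) t := by
  unfold U
  congr 1
  · show ∫ y in (0:ℝ)..x, -s.u (-y) t = _
    rw [intervalIntegral.integral_neg, intervalIntegral.integral_comp_neg (fun y => s.u y t), neg_zero, intervalIntegral.integral_symm, neg_neg]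
  · apply intervalIntegral.integral_congr_ae
    filter_upwards [s.RH hl hr] with τ h _
    unfold Fx
    by_cases h0 : 0 < τ
    · simp only [if_pos h0]
      simp [dflux, refl, h h0]
    · simp [h0]

/-- interface alternatives -/
lemma iface {a : ℝ} (hl : UC fl a) (hr : UC fr a) (hAB : fl A = fr B) (hA : deriv fl A ≤ 0) (hB : 0 ≤ deriv fr B) :
    ∀ᵐ t : ℝ, 0 < t → fl (s.um 0 t) = s.Fx 0 t ∧ fr (s.up 0 t) = s.Fx 0 t ∧ fl A ≤ s.Fx 0 t ∧
      (fl A < s.Fx 0 t → 0 < deriv fl (s.um 0 t) ∨ deriv fr (s.up 0 t) < 0) := by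
  filter_upwards [s.RH hl.cont hr.cont, s.interface_ae hl.cont hr.cont] with t h1 h2 ht
  have e : s.Fx 0 t = fr (s.up 0 t) := by simp [Fx, ht, dflux]
  have h3 := h2 ht
  rw [h1 ht, ← hAB] at h3
  refine ⟨by rw [e, h1 ht], e.symm, ?_, ?_⟩
  · by_contra hc
    push Not at hc
    rw [e] at hc
    have a1 : A < s.um 0 t := by
      by_contra h
      push Not at h
      have := hl.tangent A (s.um 0 t)
      rw [h1 ht] at this
      nlinarith
    have a2 : s.up 0 t < B := by
      by_contra h
      push Not at h
      have := hr.tangent B (s.up 0 t)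
      nlinarith
    rw [Real.sign_of_neg (by linarith), Real.sign_of_pos (by linarith)] at h3
    linarith
  · intro hc
    by_contra hcon
    push Not at hcon
    rw [e] at hc
    have a1 : s.um 0 t < A := by
      by_contra h
      push Not at h
      have := hl.tangent (s.um 0 t) A
      rw [h1 ht] at this
      nlinarith [hcon.1]
    have a2 : B < s.up 0 t := by
      by_contra h
      push Not at h
      have := hr.tangent (s.up 0 t) B
      nlinarith [hcon.2]
    rw [Real.sign_of_pos (by linarith), Real.sign_of_neg (by linarith)] at h3
    linarith

lemma U_deriv_r (x t : ℝ) (ht : 0 < t) : HasDerivWithinAt (fun y => s.U y t) (s.up x t) (Ioi x) x := by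
  unfold U
  refine HasDerivWithinAt.sub_const _ ?_
  have hm : StronglyMeasurableAtFilter (fun y => s.u y t) (nhdsWithin x (Ioi x)) :=
    ⟨univ, univ_mem, (s.mt t).aestronglyMeasurable⟩
  exact (intervalIntegral.integral_hasDerivWithinAt_of_tendsto_ae_right (s := Ici x) (t := Ioi x) (s.u_int t 0 x) hm
    ((s.up_spec x t ht).mono_left inf_le_left)).mono Ioi_subset_Ici_self

lemma U_deriv_l (x t : ℝ) (ht : 0 < t) : HasDerivWithinAt (fun y => s.U y t) (s.um x t) (Iio x) x := by
  unfold U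
  refine HasDerivWithinAt.sub_const _ ?_
  have hm : StronglyMeasurableAtFilter (fun y => s.u y t) (nhdsWithin x (Iic x)) :=
    ⟨univ, univ_mem, (s.mt t).aestronglyMeasurable⟩
  have hle : nhdsWithin x (Iic x) ⊓ ae volume ≤ nhdsWithin x (Iio x) := by
    refine le_inf (inf_le_left.trans nhdsWithin_le_nhds) (le_principal_iff.2 ?_)
    refine mem_of_superset (inter_mem_inf self_mem_nhdsWithin (compl_mem_ae_iff.2 (measure_singleton x))) ?_
    rintro y ⟨h1, h2⟩
    exact lt_of_le_of_ne h1 h2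
  exact (intervalIntegral.integral_hasDerivWithinAt_of_tendsto_ae_right (s := Iic x) (t := Iic x) (s.u_int t 0 x) hm
    ((s.um_spec x t ht).mono_left hle)).mono Iio_subset_Iic_self

lemma up_ae (t : ℝ) (ht : 0 < t) : ∀ᵐ x : ℝ, s.up x t = s.u x t := by
  have hL : LocallyIntegrable (fun x => s.u x t) volume := by
    intro x
    refine ⟨Ioc (x-1) (x+1), Ioc_mem_nhds (by linarith) (by linarith), ?_⟩
    have := s.u_int t (x-1) (x+1)
    rwa [intervalIntegrable_iff_integrableOn_Ioc_of_le (by linarith)] at this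
  filter_upwards [LocallyIntegrable.ae_hasDerivAt_integral hL] with x hx
  have h1 : HasDerivWithinAt (fun y => s.U y t) (s.u x t) (Ioi x) x := by
    unfold U
    exact ((hx 0).sub_const _).hasDerivWithinAt
  exact (uniqueDiffWithinAt_Ioi x).eq_deriv _ (s.U_deriv_r x t ht) h1

end ABSol
end

section
lemma UC.lip_on {f : ℝ → ℝ} {a : ℝ} (h : UC f a) (M : ℝ) :
    ∃ K, 0 ≤ K ∧ ∀ v w, |v| ≤ M → |w| ≤ M → |f v - f w| ≤ K * |v - w| := by
  refine ⟨|deriv f M| + |deriv f (-M)|, by positivity, fun v w hv hw => ?_⟩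
  have hv' := abs_le.1 hv
  have hw' := abs_le.1 hw
  have := (convex_Icc (-M) M).norm_image_sub_le_of_norm_deriv_le (f := f) (C := |deriv f M| + |deriv f (-M)|)
    (fun x _ => h.diff x) (fun x hx => by
      have h1 := h.smono.monotone hx.1
      have h2 := h.smono.monotone hx.2
      rw [Real.norm_eq_abs, abs_le]
      have := neg_abs_le (deriv f (-M)); have := le_abs_self (deriv f M)
      have := abs_nonneg (deriv f (-M)); have := abs_nonneg (deriv f M)
      constructor <;> linarith) (mem_Icc.2 hw') (mem_Icc.2 hv')
  simpa [Real.norm_eq_abs] using this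

namespace ABSol
variable {fl fr : ℝ → ℝ} {A B : ℝ} {u0 : ℝ → ℝ} (s : ABSol fl fr A B u0)

def upt (s : ABSol fl fr A B u0) (x t : ℝ) : ℝ := if 0 < t then s.up x t else 0

lemma upt_meas : Measurable (Function.uncurry s.upt) := by
  have hm : ∀ n : ℕ, Measurable (fun p : ℝ × ℝ => if 0 < p.2 then s.u (p.1 + 1 / ((n:ℝ) + 1)) p.2 else 0) := by
    intro n
    refine Measurable.ite (measurableSet_lt measurable_const measurable_snd) ?_ measurable_const
    exact s.meas.comp ((measurable_fst.add measurable_const).prodMk measurable_snd)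
  refine measurable_of_tendsto_metrizable hm ?_
  rw [tendsto_pi_nhds]
  rintro ⟨x, t⟩
  simp only [Function.uncurry, upt]
  by_cases ht : 0 < t
  · simp only [ht, if_true]
    refine (s.up_spec x t ht).comp ?_
    refine tendsto_nhdsWithin_iff.2 ⟨?_, Eventually.of_forall fun n => ?_⟩
    · simpa using (tendsto_const_nhds (x := x)).add (tendsto_one_div_add_atTop_nhds_zero_nat (𝕜 := ℝ))
    · simp only [mem_Ioi]; have : (0:ℝ) < 1 / ((n:ℝ)+1) := by positivity
      linarith
  · simp only [ht, if_false]; exact tendsto_const_nhds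

lemma up_ae2 : ∀ᵐ p : ℝ × ℝ, 0 < p.2 → s.upt p.1 p.2 = s.u p.1 p.2 := by
  have hms : MeasurableSet {p : ℝ × ℝ | 0 < p.2 → s.upt p.1 p.2 = s.u p.1 p.2} := by
    have h1 : MeasurableSet {p : ℝ × ℝ | ¬ 0 < p.2} := (measurableSet_lt measurable_const measurable_snd).compl
    have h2 : MeasurableSet {p : ℝ × ℝ | s.upt p.1 p.2 = s.u p.1 p.2} := measurableSet_eq_fun s.upt_meas s.meas
    convert h1.union h2 using 1
    ext p; simp only [mem_ofPred_eq, mem_union]; tauto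
  rw [Measure.volume_eq_prod, Measure.ae_prod_iff_ae_ae hms, ]
  rw [Measure.ae_ae_comm]
  · refine Eventually.of_forall fun t => ?_
    by_cases ht : 0 < t
    · filter_upwards [s.up_ae t ht] with x hx _
      simp only [upt, ht, if_true, hx]
    · exact Eventually.of_forall fun x h => absurd h ht
  · exact hms

def Sd (s : ABSol fl fr A B u0) (δ x t : ℝ) : ℝ := δ⁻¹ * ∫ a in x..(x+δ), s.U a t
def Dd (s : ABSol fl fr A B u0) (δ x t : ℝ) : ℝ := δ⁻¹ * (s.U (x+δ) t - s.U x t)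
def Gd (s : ABSol fl fr A B u0) (δ x t : ℝ) : ℝ := δ⁻¹ * ∫ a in x..(x+δ), fr (s.u a t)

lemma U_cont (hl : Continuous fl) (hr : Continuous fr) (t : ℝ) : Continuous (fun x => s.U x t) := by
  obtain ⟨M, L, hM, hL, hb, hf, h1, h2⟩ := s.U_lip hl hr
  refine LipschitzWith.continuous (K := M.toNNReal) (LipschitzWith.of_dist_le_mul fun x y => ?_)
  rw [Real.dist_eq, Real.dist_eq, Real.coe_toNNReal _ hM.le]
  exact h1 y x t

lemma fr_int (hl : Continuous fl) (hr : Continuous fr) (t x y : ℝ) : IntervalIntegrable (fun a => fr (s.u a t)) volume x y := by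
  obtain ⟨M, L, hM, hL, hb, hf, h1, h2⟩ := s.U_lip hl hr
  exact ABSol.intble_of_bd (M := L) (hr.measurable.comp (s.mt t)) (fun x => (hf _ (hb x t)).2) x y

lemma Sd_time (hl : Continuous fl) (hr : Continuous fr) {δ x t₁ t₂ : ℝ} (hδ : 0 < δ) (hx : 0 ≤ x) (h1 : 0 ≤ t₁) (h12 : t₁ ≤ t₂) :
    s.Sd δ x t₂ - s.Sd δ x t₁ = - ∫ τ in t₁..t₂, s.Gd δ x τ := by
  obtain ⟨M, L, hM, hL, hb, hf, hp, hm⟩ := s.bounds hl hr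
  have c1 : ∀ t, IntervalIntegrable (fun a => s.U a t) volume x (x+δ) := fun t => (s.U_cont hl hr t).intervalIntegrable _ _
  unfold Sd Gd
  rw [← mul_sub, ← intervalIntegral.integral_sub (c1 _) (c1 _), intervalIntegral.integral_const_mul]
  rw [← mul_neg]
  congr 1
  have e1 : ∀ a ∈ Icc x (x+δ), ∀ τ ∈ Icc t₁ t₂, s.Fx a τ = if 0 < τ then fr (s.upt a τ) else 0 := by
    intro a ha τ hτ
    unfold Fx upt dflux
    have : ¬ a < 0 := by linarith [ha.1]
    by_cases h : 0 < τ <;> simp [h, this]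
  have e2 : (∫ a in x..(x+δ), (s.U a t₂ - s.U a t₁)) = ∫ a in x..(x+δ), -∫ τ in t₁..t₂, if 0 < τ then fr (s.upt a τ) else 0 := by
    refine intervalIntegral.integral_congr fun a ha => ?_
    rw [uIcc_of_le (by linarith)] at ha
    rw [s.U_time hl hr a h1 h12]
    congr 1
    refine intervalIntegral.integral_congr fun τ hτ => ?_
    rw [uIcc_of_le h12] at hτ
    exact e1 a ha τ hτ
  rw [e2, intervalIntegral.integral_neg]
  congr 1
  rw [intervalIntegral_intervalIntegral_swap]
  · refine intervalIntegral.integral_congr_ae (Eventually.of_forall fun τ hτ => ?_)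
    rw [uIoc_of_le h12] at hτ
    have h0 : 0 < τ := by linarith [hτ.1]
    refine intervalIntegral.integral_congr_ae ?_
    filter_upwards [s.up_ae τ h0] with a ha _
    simp only [h0, if_true, upt, ha]
  · have hms : Measurable (fun p : ℝ × ℝ => if 0 < p.2 then fr (s.upt p.1 p.2) else 0) :=
      Measurable.ite (measurableSet_lt measurable_const measurable_snd) (hr.measurable.comp s.upt_meas) measurable_const
    refine Measure.integrableOn_of_bounded (M := L) ?_ hms.aestronglyMeasurable ?_
    · rw [uIoc_of_le (by linarith), uIoc_of_le h12, Measure.volume_eq_prod, Measure.prod_prod]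
      simp [ENNReal.mul_eq_top]
    · refine Eventually.of_forall fun p => ?_
      simp only [Function.uncurry]
      by_cases h : 0 < p.2
      · simp only [h, if_true, upt, Real.norm_eq_abs]; exact (hf _ (hp _ _ h)).2
      · simp [h, hL.le]

lemma Gd_tcont {a : ℝ} (hl : Continuous fl) (hr : UC fr a) (δ x : ℝ) : ContinuousOn (fun t => s.Gd δ x t) (Ici 0) := by
  obtain ⟨M, L, hM, hL, hb, hf, hp, hm⟩ := s.bounds hl hr.cont
  obtain ⟨K, hK0, hK⟩ := hr.lip_on M
  intro t ht
  exact (s.time_cont hr.cont (K := K) (fun x t t' => hK _ _ (hb _ _) (hb _ _)) x (x+δ) t ht).const_mul _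

lemma Gd_xlip (hl : Continuous fl) (hr : Continuous fr) {L : ℝ} (hL : ∀ x t, |fr (s.u x t)| ≤ L) {δ : ℝ} (hδ : 0 < δ) (x y t : ℝ) :
    |s.Gd δ y t - s.Gd δ x t| ≤ δ⁻¹ * (2 * L) * |y - x| := by
  have hi := s.fr_int hl hr t
  have e : s.Gd δ y t - s.Gd δ x t = δ⁻¹ * ((∫ a in (x+δ)..(y+δ), fr (s.u a t)) - ∫ a in x..y, fr (s.u a t)) := by
    unfold Gd
    have e1 := intervalIntegral.integral_add_adjacent_intervals (hi x y) (hi y (y+δ))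
    have e2 := intervalIntegral.integral_add_adjacent_intervals (hi x (x+δ)) (hi (x+δ) (y+δ))
    rw [← mul_sub]; congr 1; linarith
  have b : ∀ x y, |∫ a in x..y, fr (s.u a t)| ≤ L * |y - x| := fun x y => 
    intervalIntegral.norm_integral_le_of_norm_le_const (f := fun a => fr (s.u a t)) (fun a _ => hL a t)
  rw [e, abs_mul, abs_of_pos (inv_pos.2 hδ), mul_assoc]
  refine mul_le_mul_of_nonneg_left ?_ (inv_pos.2 hδ).le
  have h1 := b (x+δ) (y+δ)
  have h2 := b x y
  rw [show y + δ - (x + δ) = y - x by ring] at h1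
  have h1' := abs_le.1 h1
  have h2' := abs_le.1 h2
  rw [abs_le]; constructor <;> linarith [h1'.1, h1'.2, h2'.1, h2'.2]

lemma Gd_cont {a : ℝ} (hl : Continuous fl) (hr : UC fr a) {δ : ℝ} (hδ : 0 < δ) (x t : ℝ) (ht : 0 < t) :
    ContinuousAt (fun p : ℝ × ℝ => s.Gd δ p.1 p.2) (x, t) := by
  obtain ⟨M, L, hM, hL, hb, hf, hp, hm⟩ := s.bounds hl hr.cont
  have h1 := (s.Gd_tcont hl hr δ x t ht.le).continuousAt (Ici_mem_nhds ht)
  have h1' : Tendsto (fun p : ℝ × ℝ => s.Gd δ x p.2) (nhds (x,t)) (nhds (s.Gd δ x t)) :=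
    h1.tendsto.comp (continuous_snd.tendsto (x,t))
  have h2 : Tendsto (fun p : ℝ × ℝ => s.Gd δ p.1 p.2 - s.Gd δ x p.2) (nhds (x,t)) (nhds 0) := by
    refine squeeze_zero_norm (a := fun p : ℝ × ℝ => δ⁻¹ * (2 * L) * |p.1 - x|) (fun p => s.Gd_xlip hl hr.cont (fun x t => (hf _ (hb x t)).2) hδ x p.1 p.2) ?_
    have : Continuous (fun p : ℝ × ℝ => δ⁻¹ * (2 * L) * |p.1 - x|) := by fun_prop
    simpa using this.tendsto (x,t)
  have := h2.add h1'
  simpa [ContinuousAt] using this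

lemma Sd_dt {a : ℝ} (hl : Continuous fl) (hr : UC fr a) {δ x t : ℝ} (hδ : 0 < δ) (hx : 0 ≤ x) (ht : 0 < t) :
    HasDerivAt (fun t => s.Sd δ x t) (-s.Gd δ x t) t := by
  have hc := s.Gd_tcont hl hr δ x
  have h1 : HasDerivAt (fun t => ∫ τ in (0:ℝ)..t, s.Gd δ x τ) (s.Gd δ x t) t := by
    refine intervalIntegral.integral_hasDerivAt_right ?_ ?_ ((hc t ht.le).continuousAt (Ici_mem_nhds ht))
    · refine ContinuousOn.intervalIntegrable (hc.mono ?_)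
      rw [uIcc_of_le ht.le]; exact fun y hy => hy.1
    · exact (hc.mono Ioi_subset_Ici_self).stronglyMeasurableAtFilter isOpen_Ioi t ht
  have h2 := (h1.const_sub (s.Sd δ x 0))
  refine h2.congr_of_eventuallyEq ?_
  filter_upwards [Ioi_mem_nhds ht] with t' ht'
  have := s.Sd_time hl hr.cont hδ hx le_rfl (le_of_lt ht')
  linarith

lemma Sd_dx (hl : Continuous fl) (hr : Continuous fr) (δ x t : ℝ) :
    HasDerivAt (fun x => s.Sd δ x t) (s.Dd δ x t) x := by
  have hc := s.U_cont hl hr t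
  have hi : ∀ a b, IntervalIntegrable (fun a => s.U a t) volume a b := fun a b => hc.intervalIntegrable _ _
  have h1 : ∀ y, HasDerivAt (fun y => ∫ τ in (0:ℝ)..y, s.U τ t) (s.U y t) y := fun y =>
    intervalIntegral.integral_hasDerivAt_right (hi _ _) hc.stronglyMeasurable.stronglyMeasurableAtFilter hc.continuousAt
  have h2 := ((h1 (x+δ)).comp_add_const x δ).sub (h1 x) |>.const_mul δ⁻¹
  refine h2.congr_of_eventuallyEq (Eventually.of_forall fun y => ?_)
  simp only [Sd, Pi.sub_apply]
  rw [intervalIntegral.integral_interval_sub_left (hi _ _) (hi _ _)]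

lemma U_jcont (hl : Continuous fl) (hr : Continuous fr) : ContinuousOn (fun p : ℝ × ℝ => s.U p.1 p.2) {p | 0 ≤ p.2} := by
  obtain ⟨M, L, hM, hL, hb, hf, h1, h2⟩ := s.U_lip hl hr
  rintro ⟨x, t⟩ ht
  have : Tendsto (fun p : ℝ × ℝ => s.U p.1 p.2 - s.U x t) (nhdsWithin (x,t) {p | 0 ≤ p.2}) (nhds 0) := by
    have hc : Continuous (fun p : ℝ × ℝ => M * |p.1 - x| + L * |p.2 - t|) := by fun_prop
    refine squeeze_zero_norm' (a := fun p : ℝ × ℝ => M * |p.1 - x| + L * |p.2 - t|) ?_ ?_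
    · filter_upwards [self_mem_nhdsWithin] with p hp
      have a1 := h1 x p.1 p.2
      have a2 := h2 x t p.2 ht hp
      calc |s.U p.1 p.2 - s.U x t| = |(s.U p.1 p.2 - s.U x p.2) + (s.U x p.2 - s.U x t)| := by ring_nf
        _ ≤ _ := (abs_add_le _ _).trans (add_le_add a1 a2)
    · exact (by simpa using hc.tendsto (x,t) : Tendsto (fun p : ℝ × ℝ => M * |p.1 - x| + L * |p.2 - t|) (nhds (x,t)) (nhds 0)).mono_left nhdsWithin_le_nhds
  have := this.add_const (s.U x t)
  simpa [ContinuousWithinAt] using this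

lemma Dd_cont (hl : Continuous fl) (hr : Continuous fr) (δ x t : ℝ) (ht : 0 < t) :
    ContinuousAt (fun p : ℝ × ℝ => s.Dd δ p.1 p.2) (x, t) := by
  have h : ∀ x, ContinuousAt (fun p : ℝ × ℝ => s.U p.1 p.2) (x,t) := fun x =>
    (s.U_jcont hl hr (x,t) ht.le).continuousAt (by
      have : {p : ℝ × ℝ | 0 < p.2} ∈ nhds (x,t) := (isOpen_lt continuous_const continuous_snd).mem_nhds ht
      exact mem_of_superset this fun p hp => le_of_lt (mem_ofPred_eq ▸ hp))
  refine ContinuousAt.const_mul (M := ℝ) (ContinuousAt.sub ?_ (h x)) _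
  exact ContinuousAt.comp (f := fun p : ℝ × ℝ => (p.1 + δ, p.2)) (g := fun p : ℝ × ℝ => s.U p.1 p.2) (h (x+δ)) (by fun_prop)

/-- The Steklov average is continuously differentiable in the open quadrant. -/
lemma Sd_C1 {a : ℝ} (hl : Continuous fl) (hr : UC fr a) {δ x t : ℝ} (hδ : 0 < δ) (hx : 0 < x) (ht : 0 < t) :
    ContDiffAt ℝ 1 (fun p : ℝ × ℝ => s.Sd δ p.1 p.2) (x, t) := by
  let f₁ : ℝ → ℝ → ℝ →L[ℝ] ℝ := fun x t => ContinuousLinearMap.toSpanSingleton ℝ (s.Dd δ x t)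
  let f₂ : ℝ → ℝ → ℝ →L[ℝ] ℝ := fun x t => ContinuousLinearMap.toSpanSingleton ℝ (-s.Gd δ x t)
  have hO : IsOpen {p : ℝ × ℝ | 0 < p.1 ∧ 0 < p.2} :=
    (isOpen_lt continuous_const continuous_fst).inter (isOpen_lt continuous_const continuous_snd)
  have c1 : ∀ p ∈ {p : ℝ × ℝ | 0 < p.1 ∧ 0 < p.2}, ContinuousAt (Function.HasUncurry.uncurry f₁) p := by
    rintro ⟨x, t⟩ ⟨hx, ht⟩
    have := s.Dd_cont hl hr.cont δ x t ht
    exact ((ContinuousLinearMap.toSpanSingletonCLE (𝕜 := ℝ) (E := ℝ)).continuous.continuousAt).comp this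
  have c2 : ∀ p ∈ {p : ℝ × ℝ | 0 < p.1 ∧ 0 < p.2}, ContinuousAt (Function.HasUncurry.uncurry f₂) p := by
    rintro ⟨x, t⟩ ⟨hx, ht⟩
    have := (s.Gd_cont hl hr hδ x t ht).neg
    exact ((ContinuousLinearMap.toSpanSingletonCLE (𝕜 := ℝ) (E := ℝ)).continuous.continuousAt).comp this
  have hd : ∀ p ∈ {p : ℝ × ℝ | 0 < p.1 ∧ 0 < p.2}, HasFDerivAt (fun p : ℝ × ℝ => s.Sd δ p.1 p.2)
      ((Function.HasUncurry.uncurry f₁ p).coprod (Function.HasUncurry.uncurry f₂ p)) p := by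
    intro p hp
    have := hasStrictFDerivAt_uncurry_coprod (𝕜 := ℝ) (f := fun x t => s.Sd δ x t) (f₁ := f₁) (f₂ := f₂) (u := p)
      (by filter_upwards [hO.mem_nhds hp] with v hv
          exact (s.Sd_dx hl hr.cont δ v.1 v.2).hasFDerivAt)
      (by filter_upwards [hO.mem_nhds hp] with v hv
          exact (s.Sd_dt hl hr hδ hv.1.le hv.2).hasFDerivAt) (c1 p hp) (c2 p hp)
    exact this.hasFDerivAt
  rw [contDiffAt_one_iff]
  refine ⟨_, _, hO.mem_nhds ⟨hx, ht⟩, ?_, hd⟩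
  intro p hp
  refine ContinuousAt.continuousWithinAt ?_
  have e : (fun p => (Function.HasUncurry.uncurry f₁ p).coprod (Function.HasUncurry.uncurry f₂ p)) =
    fun p : ℝ × ℝ => (Function.HasUncurry.uncurry f₁ p).comp (ContinuousLinearMap.fst ℝ ℝ ℝ) + (Function.HasUncurry.uncurry f₂ p).comp (ContinuousLinearMap.snd ℝ ℝ ℝ) := by
    funext p; ext <;> simp
  rw [e]
  exact ((c1 p hp).clm_comp continuousAt_const).add ((c2 p hp).clm_comp continuousAt_const)

end ABSol
end

section
namespace ABSol
variable {fl fr : ℝ → ℝ} {A B : ℝ} {u0 : ℝ → ℝ} (s : ABSol fl fr A B u0)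

lemma Sd_path {a : ℝ} (hl : Continuous fl) (hr : UC fr a) {δ x p t t₁ : ℝ} (hδ : 0 < δ) (hx : 0 < x + p * (t - t₁)) (ht : 0 < t) :
    HasDerivAt (fun t => s.Sd δ (x + p * (t - t₁)) t) (p * s.Dd δ (x + p * (t - t₁)) t - s.Gd δ (x + p * (t - t₁)) t) t := by
  have h := ((s.Sd_C1 hl hr hδ hx ht).differentiableAt one_ne_zero).hasFDerivAt
  set F := fderiv ℝ (fun p : ℝ × ℝ => s.Sd δ p.1 p.2) (x + p * (t - t₁), t)
  have e1 : F (1, 0) = s.Dd δ (x + p * (t - t₁)) t := by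
    have hc : HasDerivAt (fun y : ℝ => (y, t)) ((1:ℝ), (0:ℝ)) (x + p * (t - t₁)) := (hasDerivAt_id _).prodMk (hasDerivAt_const _ _)
    exact (HasFDerivAt.comp_hasDerivAt (f := fun y : ℝ => (y, t)) (l := fun p : ℝ × ℝ => s.Sd δ p.1 p.2) (x + p * (t - t₁)) h hc).unique (s.Sd_dx hl hr.cont δ _ t)
  have e2 : F (0, 1) = -s.Gd δ (x + p * (t - t₁)) t := by
    have hc : HasDerivAt (fun y : ℝ => (x + p * (t - t₁), y)) ((0:ℝ), (1:ℝ)) t := (hasDerivAt_const _ _).prodMk (hasDerivAt_id _)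
    exact (HasFDerivAt.comp_hasDerivAt (f := fun y : ℝ => (x + p * (t - t₁), y)) (l := fun p : ℝ × ℝ => s.Sd δ p.1 p.2) t h hc).unique (s.Sd_dt hl hr hδ hx.le ht)
  have hc : HasDerivAt (fun t : ℝ => (x + p * (t - t₁), t)) (p, (1:ℝ)) t := by
    refine HasDerivAt.prodMk ?_ (hasDerivAt_id _)
    simpa using ((((hasDerivAt_id t).sub_const t₁).const_mul p).const_add x)
  have := HasFDerivAt.comp_hasDerivAt (f := fun t : ℝ => (x + p * (t - t₁), t)) (l := fun p : ℝ × ℝ => s.Sd δ p.1 p.2) t h hc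
  have e3 : F (p, 1) = p * s.Dd δ (x + p * (t - t₁)) t - s.Gd δ (x + p * (t - t₁)) t := by
    have : ((p, 1) : ℝ × ℝ) = p • (1, 0) + (0, 1) := by ext <;> simp
    rw [this, map_add, map_smul, e1, e2, smul_eq_mul]; ring
  rw [e3] at this
  exact this

lemma DG_le {a : ℝ} (hl : Continuous fl) (hr : UC fr a) {δ : ℝ} (hδ : 0 < δ) (x p t : ℝ) :
    p * s.Dd δ x t - s.Gd δ x t ≤ conj fr p := by
  unfold Dd Gd
  rw [s.U_space, mul_left_comm, ← mul_sub, ← intervalIntegral.integral_const_mul,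
    ← intervalIntegral.integral_sub ((s.u_int t _ _).const_mul p) (s.fr_int hl hr.cont t _ _)]
  have : (∫ a in x..(x+δ), (p * s.u a t - fr (s.u a t))) ≤ ∫ a in x..(x+δ), conj fr p :=
    intervalIntegral.integral_mono_on (by linarith) (((s.u_int t _ _).const_mul p).sub (s.fr_int hl hr.cont t _ _))
      intervalIntegrable_const (fun z _ => hr.fy p _)
  rw [intervalIntegral.integral_const, smul_eq_mul] at this
  calc _ ≤ δ⁻¹ * ((x + δ - x) * conj fr p) := mul_le_mul_of_nonneg_left this (inv_pos.2 hδ).le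
    _ = _ := by field_simp; ring

lemma Sd_close (hl : Continuous fl) (hr : Continuous fr) {M : ℝ} (hM : ∀ x y t, |s.U y t - s.U x t| ≤ M * |y - x|) {δ : ℝ} (hδ : 0 < δ) (x t : ℝ) :
    |s.Sd δ x t - s.U x t| ≤ M * δ := by
  have hM0 : 0 ≤ M := by have := (abs_nonneg _).trans (hM 0 1 0); simpa using this
  have e : s.Sd δ x t - s.U x t = δ⁻¹ * ∫ a in x..(x+δ), (s.U a t - s.U x t) := by
    unfold Sd
    rw [intervalIntegral.integral_sub ((s.U_cont hl hr t).intervalIntegrable _ _) intervalIntegrable_const, intervalIntegral.integral_const, smul_eq_mul]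
    field_simp; ring
  rw [e, abs_mul, abs_of_pos (inv_pos.2 hδ)]
  have : |∫ a in x..(x+δ), (s.U a t - s.U x t)| ≤ (M * δ) * |x + δ - x| :=
    intervalIntegral.norm_integral_le_of_norm_le_const (f := fun a => s.U a t - s.U x t) (fun a ha => by
      rw [uIoc_of_le (by linarith)] at ha
      refine (hM x a t).trans (mul_le_mul_of_nonneg_left ?_ hM0)
      rw [abs_of_pos (by linarith [ha.1])]; linarith [ha.2])
  rw [show x + δ - x = δ by ring, abs_of_pos hδ] at this
  calc _ ≤ δ⁻¹ * ((M * δ) * δ) := mul_le_mul_of_nonneg_left this (inv_pos.2 hδ).le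
    _ = _ := by field_simp

lemma A_r {a : ℝ} (hl : Continuous fl) (hr : UC fr a) {x₁ x₂ t₁ t₂ : ℝ} (h1 : 0 ≤ x₁) (h2 : 0 ≤ x₂) (ht : 0 ≤ t₁) (htt : t₁ < t₂) :
    s.U x₂ t₂ ≤ s.U x₁ t₁ + (t₂ - t₁) * conj fr ((x₂ - x₁) / (t₂ - t₁)) := by
  obtain ⟨M, L, hM, hL, hb, hf, hU1, hU2⟩ := s.U_lip hl hr.cont
  have key : ∀ x₁ x₂ t₁ t₂ : ℝ, 0 < x₁ → 0 < x₂ → 0 < t₁ → t₁ < t₂ → 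
      s.U x₂ t₂ ≤ s.U x₁ t₁ + (t₂ - t₁) * conj fr ((x₂ - x₁) / (t₂ - t₁)) := by
    intro x₁ x₂ t₁ t₂ h1 h2 ht htt
    set p := (x₂ - x₁) / (t₂ - t₁) with hp
    have hpe : p * (t₂ - t₁) = x₂ - x₁ := by rw [hp]; exact div_mul_cancel₀ _ (by linarith)
    refine le_of_forall_pos_le_add fun ε hε => ?_
    have hδ : 0 < ε / (2 * M) := by positivity
    set δ := ε / (2 * M) with hδe
    have hpos : ∀ t ∈ Icc t₁ t₂, 0 < x₁ + p * (t - t₁) := by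
      intro t ht
      have : (t₂ - t₁) * (x₁ + p * (t - t₁)) = (t₂ - t) * x₁ + (t - t₁) * x₂ := by
        have : x₂ = x₁ + p * (t₂ - t₁) := by linarith
        rw [this]; ring
      by_contra hn
      push Not at hn
      have h3 : (t₂ - t₁) * (x₁ + p * (t - t₁)) ≤ 0 := mul_nonpos_of_nonneg_of_nonpos (by linarith) hn
      rcases eq_or_lt_of_le ht.1 with h | h
      · subst h; simp at hn; linarith
      · have := mul_pos (sub_pos.2 h) h2
        have := mul_nonneg (sub_nonneg.2 ht.2) h1.le
        linarith
    have hd : ∀ t ∈ Icc t₁ t₂, HasDerivAt (fun t => s.Sd δ (x₁ + p * (t - t₁)) t) (p * s.Dd δ (x₁ + p * (t - t₁)) t - s.Gd δ (x₁ + p * (t - t₁)) t) t := 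
      fun t ht' => s.Sd_path hl hr hδ (hpos t ht') (by linarith [ht'.1])
    have := (convex_Icc t₁ t₂).image_sub_le_mul_sub_of_deriv_le (f := fun t => s.Sd δ (x₁ + p * (t - t₁)) t) (C := conj fr p)
      (fun t ht => (hd t ht).continuousAt.continuousWithinAt)
      (fun t ht => (hd t (interior_subset ht)).differentiableAt.differentiableWithinAt)
      (fun t ht => by rw [(hd t (interior_subset ht)).deriv]; exact s.DG_le hl hr hδ _ _ _) t₁ (left_mem_Icc.2 htt.le) t₂ (right_mem_Icc.2 htt.le) htt.le
    simp only [sub_self, mul_zero, add_zero, hpe] at this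
    rw [show x₁ + (x₂ - x₁) = x₂ by ring] at this
    have c1 := abs_le.1 (s.Sd_close hl hr.cont hU1 hδ x₁ t₁)
    have c2 := abs_le.1 (s.Sd_close hl hr.cont hU1 hδ x₂ t₂)
    have : M * δ = ε / 2 := by rw [hδe]; field_simp
    rw [this] at c1 c2
    linarith [c1.2, c2.1, mul_comm (conj fr p) (t₂ - t₁)]
  refine le_of_forall_pos_le_add fun ε hε => ?_
  have hη : 0 < ε / (2 * (M + L)) := by positivity
  set η := ε / (2 * (M + L)) with hηe
  have := key (x₁ + η) (x₂ + η) (t₁ + η) (t₂ + η) (by linarith) (by linarith) (by linarith) (by linarith)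
  rw [show x₂ + η - (x₁ + η) = x₂ - x₁ by ring, show t₂ + η - (t₁ + η) = t₂ - t₁ by ring] at this
  have sh : ∀ x t, 0 ≤ t → |s.U (x+η) (t+η) - s.U x t| ≤ ε / 2 := by
    intro x t ht
    have a1 := hU1 x (x+η) (t+η)
    have a2 := hU2 x t (t+η) ht (by linarith)
    rw [show x + η - x = η by ring, abs_of_pos hη] at a1
    rw [show t + η - t = η by ring, abs_of_pos hη] at a2
    have : (M + L) * η = ε / 2 := by rw [hηe]; field_simp
    calc |s.U (x+η) (t+η) - s.U x t| = |(s.U (x+η) (t+η) - s.U x (t+η)) + (s.U x (t+η) - s.U x t)| := by ring_nf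
      _ ≤ _ := abs_add_le _ _
      _ ≤ _ := by linarith
  have c1 := abs_le.1 (sh x₁ t₁ ht)
  have c2 := abs_le.1 (sh x₂ t₂ (by linarith))
  linarith [c1.2, c2.1]

lemma A_l {a : ℝ} (hl : UC fl a) (hr : Continuous fr) {x₁ x₂ t₁ t₂ : ℝ} (h1 : x₁ ≤ 0) (h2 : x₂ ≤ 0) (ht : 0 ≤ t₁) (htt : t₁ < t₂) :
    s.U x₂ t₂ ≤ s.U x₁ t₁ + (t₂ - t₁) * conj fl ((x₂ - x₁) / (t₂ - t₁)) := by
  have := s.refl.A_r (a := a) (x₁ := -x₁) (x₂ := -x₂) (hr.comp continuous_neg) hl.neg (by linarith) (by linarith) ht htt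
  rw [s.refl_U hl.cont hr, s.refl_U hl.cont hr, hl.conj_neg, neg_neg, neg_neg] at this
  rwa [show -((-x₂ - -x₁) / (t₂ - t₁)) = (x₂ - x₁) / (t₂ - t₁) by ring] at this

lemma A_i {a : ℝ} (hl : UC fl a) (hr : UC fr a) (hAB : fl A = fr B) (hA : deriv fl A ≤ 0) (hB : 0 ≤ deriv fr B)
    {t₁ t₂ : ℝ} (ht : 0 ≤ t₁) (htt : t₁ ≤ t₂) : s.U 0 t₂ ≤ s.U 0 t₁ - fl A * (t₂ - t₁) := by
  have h := s.U_time hl.cont hr.cont 0 ht htt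
  have h2 : (∫ t in t₁..t₂, fl A) ≤ ∫ t in t₁..t₂, s.Fx 0 t := by
    refine intervalIntegral.integral_mono_ae_restrict htt intervalIntegrable_const (s.Fx_int hl.cont hr.cont 0 _ _) ?_
    have h0 : ∀ᵐ t ∂(volume.restrict (Icc t₁ t₂)), t ≠ 0 := ae_restrict_of_ae (by simp [ae_iff])
    filter_upwards [ae_restrict_of_ae (s.iface hl hr hAB hA hB), ae_restrict_mem measurableSet_Icc, h0] with t h1 h2 h3
    exact (h1 (lt_of_le_of_ne (ht.trans h2.1) (Ne.symm h3))).2.2.1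
  rw [intervalIntegral.integral_const, smul_eq_mul] at h2
  linarith [mul_comm (fl A) (t₂ - t₁)]

lemma avg_lim {g : ℝ → ℝ} {M x l : ℝ} (mg : Measurable g) (_bg : ∀ y, |g y| ≤ M) (h : Tendsto g (nhdsWithin x (Ioi x)) (nhds l)) :
    Tendsto (fun δ : ℝ => δ⁻¹ * ∫ y in x..(x+δ), g y) (nhdsWithin 0 (Ioi 0)) (nhds l) := by
  have h1 : HasDerivWithinAt (fun y => ∫ z in x..y, g z) l (Ioi x) x := by
    exact (intervalIntegral.integral_hasDerivWithinAt_of_tendsto_ae_right (s := Ici x) (t := Ioi x) (by simp)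
      mg.stronglyMeasurable.stronglyMeasurableAtFilter (h.mono_left inf_le_left)).mono Ioi_subset_Ici_self
  rw [hasDerivWithinAt_iff_tendsto_slope'] at h1
  · have h2 : Tendsto (fun δ : ℝ => x + δ) (nhdsWithin 0 (Ioi 0)) (nhdsWithin x (Ioi x)) := by
      refine tendsto_nhdsWithin_iff.2 ⟨?_, ?_⟩
      · have : Continuous (fun δ : ℝ => x + δ) := by fun_prop
        exact (by simpa using this.tendsto 0 : Tendsto (fun δ : ℝ => x + δ) (nhds 0) (nhds x)).mono_left nhdsWithin_le_nhds
      · filter_upwards [self_mem_nhdsWithin] with δ hδ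
        simpa using hδ
    refine (h1.comp h2).congr fun δ => ?_
    simp [slope]
  · simp

end ABSol

def pp (w : ℝ) : ℝ := (max 0 w)^2
lemma pp_deriv (w : ℝ) : HasDerivAt pp (2 * max 0 w) w := by
  rcases lt_trichotomy w 0 with h | h | h
  · have : pp =ᶠ[nhds w] fun _ => 0 := by
      filter_upwards [Iio_mem_nhds h] with z hz
      simp [pp, max_eq_left (le_of_lt (mem_Iio.1 hz))]
    rw [max_eq_left h.le, mul_zero]
    exact (hasDerivAt_const w (0:ℝ)).congr_of_eventuallyEq this
  · subst h
    rw [hasDerivAt_iff_isLittleO]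
    simp only [pp, max_self, mul_zero, sub_zero, smul_eq_mul]
    have h1 : (fun x : ℝ => (max 0 x)^2 - 0^2) =O[nhds 0] (fun x : ℝ => x^2) := by
      refine Asymptotics.IsBigO.of_bound 1 (Eventually.of_forall fun x => ?_)
      simp only [Real.norm_eq_abs]
      rw [abs_of_nonneg (by positivity : (0:ℝ) ≤ x^2), abs_of_nonneg (by simp)]
      rcases le_total 0 x with h | h
      · simp [h]
      · simp [h]; positivity
    refine h1.trans_isLittleO ?_
    simpa using (Asymptotics.isLittleO_pow_id (𝕜 := ℝ) (n := 2) (by norm_num))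
  · have : pp =ᶠ[nhds w] fun z => z^2 := by
      filter_upwards [Ioi_mem_nhds h] with z hz
      simp [pp, max_eq_right (le_of_lt (mem_Ioi.1 hz))]
    rw [max_eq_right h.le]
    simpa using (hasDerivAt_pow 2 w).congr_of_eventuallyEq this

lemma pp_C1 : ContDiff ℝ 1 pp := by
  rw [contDiff_one_iff_deriv]
  refine ⟨fun w => (pp_deriv w).differentiableAt, ?_⟩
  have : deriv pp = fun w => 2 * max 0 w := funext fun w => (pp_deriv w).deriv
  rw [this]; fun_prop
end

section
def Bx (y0 s0 ρ : ℝ) : Set (ℝ × ℝ) := {p | |p.1 - y0| < ρ ∧ |p.2 - s0| < ρ}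

lemma Bx_open (y0 s0 ρ : ℝ) : IsOpen (Bx y0 s0 ρ) := by
  have c1 : Continuous (fun p : ℝ × ℝ => |p.1 - y0|) := by fun_prop
  have c2 : Continuous (fun p : ℝ × ℝ => |p.2 - s0|) := by fun_prop
  exact (isOpen_lt c1 continuous_const).inter (isOpen_lt c2 continuous_const)

lemma Bx_mono {y0 s0 r ρ : ℝ} (h : r ≤ ρ) : Bx y0 s0 r ⊆ Bx y0 s0 ρ := fun _ hp => ⟨hp.1.trans_le h, hp.2.trans_le h⟩

lemma Bx_sub (y0 s0 ρ : ℝ) : Bx y0 s0 ρ ⊆ Icc (y0 - ρ) (y0 + ρ) ×ˢ Icc (s0 - ρ) (s0 + ρ) := by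
  intro p hp
  have h1 := abs_lt.1 hp.1
  have h2 := abs_lt.1 hp.2
  refine ⟨⟨?_, ?_⟩, ?_, ?_⟩ <;> linarith [h1.1, h1.2, h2.1, h2.2]

lemma Bx_fin (y0 s0 ρ : ℝ) : volume (Bx y0 s0 ρ) < ⊤ :=
  (measure_mono (Bx_sub y0 s0 ρ)).trans_lt (isCompact_Icc.prod isCompact_Icc).measure_lt_top

lemma bump_ev {Q : ℝ × ℝ → ℝ} {y0 s0 r ρ : ℝ} (hrρ : r < ρ) (h0 : ∀ p ∈ Bx y0 s0 ρ, p ∉ Bx y0 s0 r → Q p ≤ 0) {p : ℝ × ℝ} (hp : p ∉ Bx y0 s0 ρ) :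
    (Bx y0 s0 ρ).indicator (fun p => pp (Q p)) =ᶠ[nhds p] fun _ => 0 := by
  have hC : IsClosed {p : ℝ × ℝ | |p.1 - y0| ≤ r ∧ |p.2 - s0| ≤ r} := by
    have c1 : Continuous (fun p : ℝ × ℝ => |p.1 - y0|) := by fun_prop
    have c2 : Continuous (fun p : ℝ × ℝ => |p.2 - s0|) := by fun_prop
    exact (isClosed_le c1 continuous_const).inter (isClosed_le c2 continuous_const)
  have hpC : p ∈ {p : ℝ × ℝ | |p.1 - y0| ≤ r ∧ |p.2 - s0| ≤ r}ᶜ := fun h => hp ⟨h.1.trans_lt hrρ, h.2.trans_lt hrρ⟩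
  filter_upwards [hC.isOpen_compl.mem_nhds hpC] with q hq
  by_cases hqB : q ∈ Bx y0 s0 ρ
  · rw [indicator_of_mem hqB]
    have := h0 q hqB (fun h => hq ⟨h.1.le, h.2.le⟩)
    simp [pp, max_eq_left this]
  · rw [indicator_of_notMem hqB]

lemma bump {Q : ℝ × ℝ → ℝ} {y0 s0 r ρ : ℝ} (hrρ : r < ρ) (hQ : ∀ p ∈ Bx y0 s0 ρ, ContDiffAt ℝ 1 Q p)
    (h0 : ∀ p ∈ Bx y0 s0 ρ, p ∉ Bx y0 s0 r → Q p ≤ 0) :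
    ContDiff ℝ 1 ((Bx y0 s0 ρ).indicator (fun p => pp (Q p))) ∧ HasCompactSupport ((Bx y0 s0 ρ).indicator (fun p => pp (Q p))) := by
  constructor
  · rw [contDiff_iff_contDiffAt]
    intro p
    by_cases hp : p ∈ Bx y0 s0 ρ
    · refine (pp_C1.contDiffAt.comp p (hQ p hp)).congr_of_eventuallyEq ?_
      filter_upwards [(Bx_open y0 s0 ρ).mem_nhds hp] with q hq
      rw [indicator_of_mem hq]; rfl
    · exact contDiffAt_const.congr_of_eventuallyEq (bump_ev hrρ h0 hp)
  · refine HasCompactSupport.intro (isCompact_Icc.prod isCompact_Icc) (fun p hp => ?_) (K := Icc (y0 - ρ) (y0 + ρ) ×ˢ Icc (s0 - ρ) (s0 + ρ))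
    exact indicator_of_notMem (fun h => hp (Bx_sub y0 s0 ρ h)) _

lemma bump_d1 {Q : ℝ × ℝ → ℝ} {y0 s0 r ρ : ℝ} (hrρ : r < ρ) 
    (h0 : ∀ p ∈ Bx y0 s0 ρ, p ∉ Bx y0 s0 r → Q p ≤ 0) {q : ℝ × ℝ → ℝ} (p : ℝ × ℝ)
    (hq : p ∈ Bx y0 s0 ρ → HasDerivAt (fun y => Q (y, p.2)) (q p) p.1) :
    deriv (fun y => (Bx y0 s0 ρ).indicator (fun p => pp (Q p)) (y, p.2)) p.1 = (Bx y0 s0 ρ).indicator (fun p => 2 * max 0 (Q p) * q p) p := by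
  have hc : Tendsto (fun y : ℝ => (y, p.2)) (nhds p.1) (nhds p) :=
    (by fun_prop : Continuous (fun y : ℝ => (y, p.2))).tendsto p.1
  by_cases hp : p ∈ Bx y0 s0 ρ
  · rw [indicator_of_mem hp]
    have h1 : HasDerivAt (fun y => pp (Q (y, p.2))) (2 * max 0 (Q p) * q p) p.1 :=
      HasDerivAt.comp (h₂ := pp) (h := fun y => Q (y, p.2)) p.1 (pp_deriv (Q (p.1, p.2))) (hq hp)
    refine (h1.congr_of_eventuallyEq ?_).deriv
    filter_upwards [hc.eventually ((Bx_open y0 s0 ρ).mem_nhds hp)] with z hz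
    have hz' : (z, p.2) ∈ Bx y0 s0 ρ := hz
    rw [indicator_of_mem hz']
  · rw [indicator_of_notMem hp]
    refine ((hasDerivAt_const p.1 (0:ℝ)).congr_of_eventuallyEq ?_).deriv
    exact hc.eventually (bump_ev hrρ h0 hp)

lemma bump_d2 {Q : ℝ × ℝ → ℝ} {y0 s0 r ρ : ℝ} (hrρ : r < ρ) 
    (h0 : ∀ p ∈ Bx y0 s0 ρ, p ∉ Bx y0 s0 r → Q p ≤ 0) {q : ℝ × ℝ → ℝ} (p : ℝ × ℝ)
    (hq : p ∈ Bx y0 s0 ρ → HasDerivAt (fun y => Q (p.1, y)) (q p) p.2) :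
    deriv (fun y => (Bx y0 s0 ρ).indicator (fun p => pp (Q p)) (p.1, y)) p.2 = (Bx y0 s0 ρ).indicator (fun p => 2 * max 0 (Q p) * q p) p := by
  have hc : Tendsto (fun y : ℝ => (p.1, y)) (nhds p.2) (nhds p) :=
    (by fun_prop : Continuous (fun y : ℝ => (p.1, y))).tendsto p.2
  by_cases hp : p ∈ Bx y0 s0 ρ
  · rw [indicator_of_mem hp]
    have h1 : HasDerivAt (fun y => pp (Q (p.1, y))) (2 * max 0 (Q p) * q p) p.2 :=
      HasDerivAt.comp (h₂ := pp) (h := fun y => Q (p.1, y)) p.2 (pp_deriv (Q (p.1, p.2))) (hq hp)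
    refine (h1.congr_of_eventuallyEq ?_).deriv
    filter_upwards [hc.eventually ((Bx_open y0 s0 ρ).mem_nhds hp)] with z hz
    have hz' : (p.1, z) ∈ Bx y0 s0 ρ := hz
    rw [indicator_of_mem hz']
  · rw [indicator_of_notMem hp]
    refine ((hasDerivAt_const p.2 (0:ℝ)).congr_of_eventuallyEq ?_).deriv
    exact hc.eventually (bump_ev hrρ h0 hp)

lemma lemV_pw {e F Fk η σ K m Λ r : ℝ} (hK : 0 ≤ K) (hr : 0 ≤ r) (hF : |F - Fk| ≤ Λ * |e|) (hη : |η| ≤ r) (hσ : |σ| ≤ r) :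
    |e| * (F + (-m - 2 * K * σ)) - Real.sign e * (F - Fk) * (e + 2 * K * η) ≤ |e| * (Fk - m + 2 * K * r + 2 * K * r * Λ) := by
  have h1 : |η * (F - Fk)| ≤ r * (Λ * |e|) := by
    rw [abs_mul]; exact mul_le_mul hη hF (abs_nonneg _) hr
  have h1' := abs_le.1 h1
  have h2 : |σ * e| ≤ r * |e| := by rw [abs_mul]; exact mul_le_mul_of_nonneg_right hσ (abs_nonneg _)
  have h2' := abs_le.1 h2
  rcases lt_trichotomy e 0 with h | h | h
  · rw [Real.sign_of_neg h, abs_of_neg h] at *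
    nlinarith [mul_le_mul_of_nonneg_left h1'.1 hK, mul_le_mul_of_nonneg_left h1'.2 hK, mul_le_mul_of_nonneg_left h2'.1 hK, mul_le_mul_of_nonneg_left h2'.2 hK]
  · subst h; simp
  · rw [Real.sign_of_pos h, abs_of_pos h] at *
    nlinarith [mul_le_mul_of_nonneg_left h1'.1 hK, mul_le_mul_of_nonneg_left h1'.2 hK, mul_le_mul_of_nonneg_left h2'.1 hK, mul_le_mul_of_nonneg_left h2'.2 hK]

def Pq (c k m K y0 s0 y t : ℝ) : ℝ := c + k * (y - y0) - m * (t - s0) - K * ((y - y0)^2 + (t - s0)^2)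

lemma Pq_d1 (c k m K y0 s0 y t : ℝ) : HasDerivAt (fun y => Pq c k m K y0 s0 y t) (k - 2 * K * (y - y0)) y := by
  unfold Pq
  have h : HasDerivAt (fun y : ℝ => y - y0) 1 y := (hasDerivAt_id y).sub_const y0
  have := (((h.const_mul k).const_add c).sub_const (m * (t - s0))).sub (((h.pow 2).add_const ((t - s0)^2)).const_mul K)
  refine (this.congr_deriv ?_)
  simp; ring

lemma Pq_d2 (c k m K y0 s0 y t : ℝ) : HasDerivAt (fun t => Pq c k m K y0 s0 y t) (-m - 2 * K * (t - s0)) t := by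
  unfold Pq
  have h : HasDerivAt (fun y : ℝ => y - s0) 1 t := (hasDerivAt_id t).sub_const s0
  have := ((h.const_mul m).const_sub (c + k * (y - y0))).sub (((h.pow 2).const_add ((y - y0)^2)).const_mul K)
  refine (this.congr_deriv ?_)
  simp; ring
end

section
namespace ABSol
variable {fl fr : ℝ → ℝ} {A B : ℝ} {u0 : ℝ → ℝ} (s : ABSol fl fr A B u0)

/-- the integrand after inserting the test function -/
def GV (fr : ℝ → ℝ) (k m K y0 s0 : ℝ) (p : ℝ × ℝ) (q u g d : ℝ) : ℝ :=
  2 * max 0 q * (|u - k| * (g + (-m - 2 * K * (p.2 - s0))) - Real.sign (u - k) * (fr u - fr k) * (d - (k - 2 * K * (p.1 - y0))))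

lemma lemV_step1 {a : ℝ} (hl : Continuous fl) (hr : UC fr a) {y0 s0 ρ r k m K κ δ c : ℝ} (hy : ρ ≤ y0) (hs : ρ ≤ s0) (hrρ : r < ρ) (hδ : 0 < δ)
    (h0 : ∀ p ∈ Bx y0 s0 ρ, p ∉ Bx y0 s0 r → κ - (s.Sd δ p.1 p.2 - Pq c k m K y0 s0 p.1 p.2) ≤ 0) :
    0 ≤ ∫ p : ℝ × ℝ, (Bx y0 s0 ρ).indicator (fun p => GV fr k m K y0 s0 p (κ - (s.Sd δ p.1 p.2 - Pq c k m K y0 s0 p.1 p.2)) (s.u p.1 p.2) (s.Gd δ p.1 p.2) (s.Dd δ p.1 p.2)) p := by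
  have hpos : ∀ p ∈ Bx y0 s0 ρ, 0 < p.1 ∧ 0 < p.2 := by
    intro p hp
    have h1 := abs_lt.1 hp.1
    have h2 := abs_lt.1 hp.2
    constructor <;> linarith [h1.1, h2.1]
  set Q : ℝ × ℝ → ℝ := fun p => κ - (s.Sd δ p.1 p.2 - Pq c k m K y0 s0 p.1 p.2) with hQd
  have hQ : ∀ p ∈ Bx y0 s0 ρ, ContDiffAt ℝ 1 Q p := by
    intro p hp
    refine contDiffAt_const.sub ((s.Sd_C1 hl hr hδ (hpos p hp).1 (hpos p hp).2).sub ?_)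
    unfold Pq
    fun_prop
  obtain ⟨b1, b2⟩ := bump hrρ hQ h0
  have := s.kruzkov_r k (fun x t => (Bx y0 s0 ρ).indicator (fun p => pp (Q p)) (x, t)) b1 b2
    (fun x t => indicator_nonneg (fun p _ => by unfold pp; positivity) _)
    (fun x t h => indicator_of_notMem (fun hp => by have := hpos _ hp; simp only at this; rcases h with h | h <;> linarith [this.1, this.2]) _)
  refine this.trans_eq (integral_congr_ae (Eventually.of_forall fun p => ?_))
  simp only
  rw [bump_d1 (q := fun p => -(s.Dd δ p.1 p.2 - (k - 2 * K * (p.1 - y0)))) hrρ h0 p (fun hp => 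
      (((s.Sd_dx hl hr.cont δ p.1 p.2).sub (Pq_d1 c k m K y0 s0 p.1 p.2)).const_sub κ)),
    bump_d2 (q := fun p => -(-s.Gd δ p.1 p.2 - (-m - 2 * K * (p.2 - s0)))) hrρ h0 p (fun hp => 
      (((s.Sd_dt hl hr hδ (hpos p hp).1.le (hpos p hp).2).sub (Pq_d2 c k m K y0 s0 p.1 p.2)).const_sub κ))]
  by_cases hp : p ∈ Bx y0 s0 ρ
  · rw [indicator_of_mem hp, indicator_of_mem hp, indicator_of_mem hp]
    simp only [GV]; ring
  · rw [indicator_of_notMem hp, indicator_of_notMem hp, indicator_of_notMem hp]; ring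

lemma Sd_tendsto (hl : Continuous fl) (hr : Continuous fr) (x t : ℝ) : Tendsto (fun δ => s.Sd δ x t) (nhdsWithin 0 (Ioi 0)) (nhds (s.U x t)) := by
  obtain ⟨M, L, hM, hL, hb, hf, hU1, hU2⟩ := s.U_lip hl hr
  have : Tendsto (fun δ => s.Sd δ x t - s.U x t) (nhdsWithin 0 (Ioi 0)) (nhds 0) := by
    refine squeeze_zero_norm' (a := fun δ => M * δ) ?_ ?_
    · filter_upwards [self_mem_nhdsWithin] with δ hδ
      exact s.Sd_close hl hr hU1 hδ x t
    · have hc : Continuous (fun δ : ℝ => M * δ) := by fun_prop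
      exact (by simpa using hc.tendsto 0 : Tendsto (fun δ : ℝ => M * δ) (nhds 0) (nhds 0)).mono_left nhdsWithin_le_nhds
  simpa using this.add_const (s.U x t)

lemma Dd_tendsto (x t : ℝ) (ht : 0 < t) : Tendsto (fun δ => s.Dd δ x t) (nhdsWithin 0 (Ioi 0)) (nhds (s.up x t)) := by
  obtain ⟨M, hM⟩ := s.bdd
  refine (avg_lim (s.mt t) (fun y => hM y t) (s.up_spec x t ht)).congr fun δ => ?_
  unfold Dd
  rw [s.U_space]

lemma Gd_tendsto (hl : Continuous fl) (hr : Continuous fr) (x t : ℝ) (ht : 0 < t) : Tendsto (fun δ => s.Gd δ x t) (nhdsWithin 0 (Ioi 0)) (nhds (fr (s.up x t))) := by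
  obtain ⟨M, L, hM, hL, hb, hf, hU1, hU2⟩ := s.U_lip hl hr
  exact avg_lim (hr.measurable.comp (s.mt t)) (fun y => (hf _ (hb y t)).2) ((hr.tendsto _).comp (s.up_spec x t ht))

lemma Dd_bd {M : ℝ} (hM : ∀ x y t, |s.U y t - s.U x t| ≤ M * |y - x|) {δ : ℝ} (hδ : 0 < δ) (x t : ℝ) : |s.Dd δ x t| ≤ M := by
  unfold Dd
  have := hM x (x+δ) t
  rw [show x + δ - x = δ by ring, abs_of_pos hδ] at this
  rw [abs_mul, abs_of_pos (inv_pos.2 hδ)]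
  calc _ ≤ δ⁻¹ * (M * δ) := mul_le_mul_of_nonneg_left this (inv_pos.2 hδ).le
    _ = _ := by field_simp

lemma Gd_bd {L : ℝ} (hL : ∀ x t, |fr (s.u x t)| ≤ L) {δ : ℝ} (hδ : 0 < δ) (x t : ℝ) : |s.Gd δ x t| ≤ L := by
  unfold Gd
  have : |∫ a in x..(x+δ), fr (s.u a t)| ≤ L * |x + δ - x| := intervalIntegral.norm_integral_le_of_norm_le_const (f := fun a => fr (s.u a t)) (fun a _ => hL a t)
  rw [show x + δ - x = δ by ring, abs_of_pos hδ] at this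
  rw [abs_mul, abs_of_pos (inv_pos.2 hδ)]
  calc _ ≤ δ⁻¹ * (L * δ) := mul_le_mul_of_nonneg_left this (inv_pos.2 hδ).le
    _ = _ := by field_simp

lemma sign_bd (x : ℝ) : |Real.sign x| ≤ 1 := by
  rcases lt_trichotomy x 0 with h | h | h
  · simp [Real.sign_of_neg h]
  · simp [h]
  · simp [Real.sign_of_pos h]

lemma GV_bd {fr : ℝ → ℝ} {k m K y0 s0 ρ M L κ : ℝ} (hK : 0 ≤ K) {p : ℝ × ℝ} (hp : p ∈ Bx y0 s0 ρ) {q u g d : ℝ} (hq : q ≤ 2 * κ) (hκ : 0 ≤ κ)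
    (hu : |u| ≤ M) (hfu : |fr u| ≤ L) (hg : |g| ≤ L) (hd : |d| ≤ M) :
    |GV fr k m K y0 s0 p q u g d| ≤ 4 * κ * ((M + |k|) * (L + (|m| + 2 * K * ρ)) + (L + |fr k|) * (M + (|k| + 2 * K * ρ))) := by
  have hρ1 := hp.1.le
  have hρ2 := hp.2.le
  have hρ : 0 ≤ ρ := (abs_nonneg _).trans hρ1
  have hM : 0 ≤ M := (abs_nonneg _).trans hu
  have hL : 0 ≤ L := (abs_nonneg _).trans hg
  have tri : ∀ a b : ℝ, |a - b| ≤ |a| + |b| := fun a b => by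
    rw [abs_le]; have := abs_le.1 (le_refl |a|); have := abs_le.1 (le_refl |b|); constructor <;> linarith
  have b1 : |u - k| ≤ M + |k| := (tri _ _).trans (by linarith)
  have b2 : |fr u - fr k| ≤ L + |fr k| := (tri _ _).trans (by linarith)
  have aux : ∀ z : ℝ, |z| ≤ ρ → |2 * K * z| ≤ 2 * K * ρ := fun z hz => by
    rw [abs_mul, abs_of_nonneg (by positivity : 0 ≤ 2 * K)]; exact mul_le_mul_of_nonneg_left hz (by positivity)
  have b3 : |g + (-m - 2 * K * (p.2 - s0))| ≤ L + (|m| + 2 * K * ρ) :=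
    (abs_add_le _ _).trans (add_le_add hg ((tri _ _).trans (add_le_add (abs_neg m).le (aux _ hρ2))))
  have b4 : |d - (k - 2 * K * (p.1 - y0))| ≤ M + (|k| + 2 * K * ρ) :=
    (tri _ _).trans (add_le_add hd ((tri _ _).trans (add_le_add le_rfl (aux _ hρ1))))
  have b5 : |2 * max 0 q| ≤ 4 * κ := by
    rw [abs_of_nonneg (by positivity)]
    have : max 0 q ≤ 2 * κ := max_le (by linarith) hq
    linarith
  unfold GV
  rw [abs_mul]
  refine mul_le_mul b5 ((tri _ _).trans (add_le_add ?_ ?_)) (abs_nonneg _) (by linarith)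
  · rw [abs_mul, abs_abs]; exact mul_le_mul b1 b3 (abs_nonneg _) (by positivity)
  · rw [abs_mul, abs_mul]
    refine mul_le_mul ?_ b4 (abs_nonneg _) (by positivity)
    calc _ ≤ 1 * (L + |fr k|) := mul_le_mul (sign_bd _) b2 (abs_nonneg _) zero_le_one
      _ = _ := one_mul _

lemma sign_meas : Measurable Real.sign := by
  unfold Real.sign
  exact Measurable.ite measurableSet_Iio measurable_const (Measurable.ite measurableSet_Ioi measurable_const measurable_const)

lemma GV_cont (fr : ℝ → ℝ) (k m K y0 s0 : ℝ) (p : ℝ × ℝ) (u : ℝ) : Continuous (fun z : ℝ × ℝ × ℝ => GV fr k m K y0 s0 p z.1 u z.2.1 z.2.2) := by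
  unfold GV; fun_prop

lemma lemV_step2 {a : ℝ} (hl : Continuous fl) (hr : UC fr a) {y0 s0 ρ r k m K c : ℝ} (hy : ρ ≤ y0) (hs : ρ ≤ s0) (hr0 : 0 < r) (hrρ : r < ρ) (hK : 0 ≤ K)
    (hD : ∀ p ∈ Bx y0 s0 ρ, (p.1 - y0)^2 + (p.2 - s0)^2 ≤ s.U p.1 p.2 - Pq c k m K y0 s0 p.1 p.2) :
    0 ≤ ∫ p : ℝ × ℝ, (Bx y0 s0 ρ).indicator (fun p => GV fr k m K y0 s0 p (r^2/4 - (s.U p.1 p.2 - Pq c k m K y0 s0 p.1 p.2)) (s.u p.1 p.2) (fr (s.up p.1 p.2)) (s.up p.1 p.2)) p := by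
  obtain ⟨M, L, hM, hL, hb, hf, hU1, hU2⟩ := s.U_lip hl hr.cont
  have hpos : ∀ p ∈ Bx y0 s0 ρ, 0 < p.1 ∧ 0 < p.2 := by
    intro p hp
    have h1 := abs_lt.1 hp.1
    have h2 := abs_lt.1 hp.2
    constructor <;> linarith [h1.1, h2.1]
  set κ := r^2/4 with hκ
  have hκ0 : 0 < κ := by positivity
  have hev : ∀ᶠ δ in nhdsWithin (0:ℝ) (Ioi 0), 0 < δ ∧ M * δ ≤ κ := by
    filter_upwards [Ioo_mem_nhdsGT (show (0:ℝ) < κ / M by positivity)] with δ hδ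
    refine ⟨hδ.1, ?_⟩
    have := (lt_div_iff₀ hM).1 hδ.2
    linarith
  refine ge_of_tendsto (x := nhdsWithin (0:ℝ) (Ioi 0)) (f := fun δ => ∫ p : ℝ × ℝ, (Bx y0 s0 ρ).indicator (fun p => GV fr k m K y0 s0 p (κ - (s.Sd δ p.1 p.2 - Pq c k m K y0 s0 p.1 p.2)) (s.u p.1 p.2) (s.Gd δ p.1 p.2) (s.Dd δ p.1 p.2)) p) ?_ ?_
  · refine tendsto_integral_filter_of_dominated_convergence ((Bx y0 s0 ρ).indicator fun _ => 4 * κ * ((M + |k|) * (L + (|m| + 2 * K * ρ)) + (L + |fr k|) * (M + (|k| + 2 * K * ρ)))) ?_ ?_ ?_ ?_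
    · filter_upwards [hev] with δ hδ
      rw [aestronglyMeasurable_indicator_iff (Bx_open _ _ _).measurableSet]
      have m1 : AEStronglyMeasurable (fun p : ℝ × ℝ => s.Sd δ p.1 p.2) (volume.restrict (Bx y0 s0 ρ)) :=
        ContinuousOn.aestronglyMeasurable (fun p hp => (s.Sd_C1 hl hr hδ.1 (hpos p hp).1 (hpos p hp).2).continuousAt.continuousWithinAt) (Bx_open _ _ _).measurableSet
      have m2 : AEStronglyMeasurable (fun p : ℝ × ℝ => s.Gd δ p.1 p.2) (volume.restrict (Bx y0 s0 ρ)) :=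
        ContinuousOn.aestronglyMeasurable (fun p hp => (s.Gd_cont hl hr hδ.1 p.1 p.2 (hpos p hp).2).continuousWithinAt) (Bx_open _ _ _).measurableSet
      have m3 : AEStronglyMeasurable (fun p : ℝ × ℝ => s.Dd δ p.1 p.2) (volume.restrict (Bx y0 s0 ρ)) :=
        ContinuousOn.aestronglyMeasurable (fun p hp => (s.Dd_cont hl hr.cont δ p.1 p.2 (hpos p hp).2).continuousWithinAt) (Bx_open _ _ _).measurableSet
      have m4 : Measurable (fun p : ℝ × ℝ => s.u p.1 p.2) := s.meas
      have m5 : Measurable (fun p : ℝ × ℝ => fr (s.u p.1 p.2)) := hr.cont.measurable.comp s.meas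
      have m6 : Measurable (fun p : ℝ × ℝ => Real.sign (s.u p.1 p.2 - k)) := sign_meas.comp (m4.sub_const k)
      have m7 : Measurable (fun p : ℝ × ℝ => Pq c k m K y0 s0 p.1 p.2) := by unfold Pq; fun_prop
      have m1' := m1.aemeasurable; have m2' := m2.aemeasurable; have m3' := m3.aemeasurable
      refine AEMeasurable.aestronglyMeasurable ?_
      have m8 : Measurable (fun p : ℝ × ℝ => -m - 2 * K * (p.2 - s0)) := by fun_prop
      have m9 : Measurable (fun p : ℝ × ℝ => k - 2 * K * (p.1 - y0)) := by fun_prop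
      have m10 : Measurable (fun p : ℝ × ℝ => |s.u p.1 p.2 - k|) := continuous_abs.measurable.comp (m4.sub_const k)
      unfold GV
      exact ((aemeasurable_const.max (aemeasurable_const.sub (m1'.sub m7.aemeasurable))).const_mul 2).mul
        ((m10.aemeasurable.mul (m2'.add m8.aemeasurable)).sub ((m6.mul (m5.sub_const _)).aemeasurable.mul (m3'.sub m9.aemeasurable)))
    · filter_upwards [hev] with δ hδ
      refine Eventually.of_forall fun p => ?_
      by_cases hp : p ∈ Bx y0 s0 ρ
      · rw [indicator_of_mem hp, indicator_of_mem hp]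
        refine GV_bd hK hp ?_ hκ0.le (hb _ _) (hf _ (hb _ _)).2 (s.Gd_bd (fun x t => (hf _ (hb _ _)).2) hδ.1 _ _) (s.Dd_bd hU1 hδ.1 _ _)
        have := (abs_le.1 (s.Sd_close hl hr.cont hU1 hδ.1 p.1 p.2)).1
        have h2 := hD p hp
        nlinarith [sq_nonneg (p.1 - y0), sq_nonneg (p.2 - s0), hδ.2]
      · rw [indicator_of_notMem hp, indicator_of_notMem hp]; simp
    · exact (integrable_indicator_iff (Bx_open _ _ _).measurableSet).2 (integrableOn_const (Bx_fin _ _ _).ne)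
    · refine Eventually.of_forall fun p => ?_
      by_cases hp : p ∈ Bx y0 s0 ρ
      · simp only [indicator_of_mem hp]
        have t1 := ((s.Sd_tendsto hl hr.cont p.1 p.2).sub_const (Pq c k m K y0 s0 p.1 p.2)).const_sub κ
        have t2 := s.Gd_tendsto hl hr.cont p.1 p.2 (hpos p hp).2
        have t3 := s.Dd_tendsto p.1 p.2 (hpos p hp).2
        exact ((GV_cont fr k m K y0 s0 p (s.u p.1 p.2)).tendsto _).comp (t1.prodMk_nhds (t2.prodMk_nhds t3))
      · simp only [indicator_of_notMem hp]; exact tendsto_const_nhds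
  · filter_upwards [hev] with δ hδ
    refine s.lemV_step1 hl hr hy hs hrρ hδ.1 fun p hp hpr => ?_
    have h1 := (abs_le.1 (s.Sd_close hl hr.cont hU1 hδ.1 p.1 p.2)).1
    have h2 := hD p hp
    have h3 : r^2 ≤ (p.1 - y0)^2 + (p.2 - s0)^2 := by
      by_contra hn
      push Not at hn
      refine hpr ⟨abs_lt_of_sq_lt_sq ?_ hr0.le, abs_lt_of_sq_lt_sq ?_ hr0.le⟩ <;> nlinarith [sq_nonneg (p.1 - y0), sq_nonneg (p.2 - s0)]
    nlinarith [hδ.2]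

end ABSol
end

section
namespace ABSol
variable {fl fr : ℝ → ℝ} {A B : ℝ} {u0 : ℝ → ℝ} (s : ABSol fl fr A B u0)

lemma lemV_step3 {a : ℝ} (hl : Continuous fl) (hr : UC fr a) {y0 s0 ρ k m K : ℝ} (hρ : 0 < ρ) (hy : ρ ≤ y0) (hs : ρ ≤ s0) (hK : 0 ≤ K) (hμ : fr k < m)
    (hD : ∀ p ∈ Bx y0 s0 ρ, (p.1 - y0)^2 + (p.2 - s0)^2 ≤ s.U p.1 p.2 - Pq (s.U y0 s0) k m K y0 s0 p.1 p.2) :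
    ∃ r, 0 < r ∧ ∀ᵐ p : ℝ × ℝ, p ∈ Bx y0 s0 r → s.u p.1 p.2 = k := by
  obtain ⟨M, L, hM, hL, hb, hf, hU1, hU2⟩ := s.U_lip hl hr.cont
  obtain ⟨Λ, hΛ0, hΛ⟩ := hr.lip_on (max M |k|)
  set μ := m - fr k with hμd
  have hμ0 : 0 < μ := sub_pos.2 hμ
  obtain ⟨r, hr0, hrρ, hrμ⟩ : ∃ r, 0 < r ∧ r < ρ ∧ 2 * K * r + 2 * K * r * Λ ≤ μ / 2 := by
    refine ⟨min (ρ/2) (μ / (4 * (K * (1 + Λ) + 1))), lt_min (by positivity) (by positivity), (min_le_left _ _).trans_lt (by linarith), ?_⟩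
    have h1 : min (ρ/2) (μ / (4 * (K * (1 + Λ) + 1))) ≤ μ / (4 * (K * (1 + Λ) + 1)) := min_le_right _ _
    rw [le_div_iff₀ (by positivity)] at h1
    have h2 : 0 < min (ρ/2) (μ / (4 * (K * (1 + Λ) + 1))) := lt_min (by positivity) (by positivity)
    nlinarith
  have hpos : ∀ p ∈ Bx y0 s0 ρ, 0 < p.1 ∧ 0 < p.2 := by
    intro p hp
    have h1 := abs_lt.1 hp.1
    have h2 := abs_lt.1 hp.2
    constructor <;> linarith [h1.1, h2.1]
  have h2 := s.lemV_step2 hl hr (c := s.U y0 s0) hy hs hr0 hrρ hK hD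
  set Q : ℝ × ℝ → ℝ := fun p => r^2/4 - (s.U p.1 p.2 - Pq (s.U y0 s0) k m K y0 s0 p.1 p.2) with hQ
  have hQc : ContinuousOn Q (Bx y0 s0 ρ) := by
    refine continuousOn_const.sub (((s.U_jcont hl hr.cont).mono fun p hp => (hpos p hp).2.le).sub ?_)
    unfold Pq; fun_prop
  have hQle : ∀ p ∈ Bx y0 s0 ρ, Q p ≤ 2 * (r^2/4) := fun p hp => by
    have := hD p hp
    simp only [hQ]
    nlinarith [sq_nonneg (p.1 - y0), sq_nonneg (p.2 - s0), sq_nonneg r]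
  set H : ℝ × ℝ → ℝ := (Bx y0 s0 ρ).indicator (fun p => max 0 (Q p) * |s.u p.1 p.2 - k|) with hH
  have hH0 : 0 ≤ H := fun p => indicator_nonneg (fun p _ => by positivity) p
  have hHi : Integrable H := by
    rw [integrable_indicator_iff (Bx_open _ _ _).measurableSet]
    refine IntegrableOn.of_bound (Bx_fin _ _ _) ?_ (2 * (r^2/4) * (M + |k|)) ?_
    · have m1 := hQc.aemeasurable (Bx_open y0 s0 ρ).measurableSet (μ := volume)
      have m10 : Measurable (fun p : ℝ × ℝ => |s.u p.1 p.2 - k|) := continuous_abs.measurable.comp (s.meas.sub_const k)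
      exact ((aemeasurable_const.max m1).mul m10.aemeasurable).aestronglyMeasurable
    · filter_upwards [ae_restrict_mem (Bx_open y0 s0 ρ).measurableSet] with p hp
      rw [Real.norm_eq_abs, abs_mul, abs_abs, abs_of_nonneg (le_max_left _ _)]
      refine mul_le_mul (max_le (by positivity) (hQle p hp)) ?_ (abs_nonneg _) (by positivity)
      have h1 := abs_le.1 (hb p.1 p.2)
      have h2 := abs_le.1 (le_refl |k|)
      rw [abs_le]; constructor <;> linarith [h1.1, h1.2, h2.1, h2.2]
  have hle : ∀ᵐ p : ℝ × ℝ, (Bx y0 s0 ρ).indicator (fun p => GV fr k m K y0 s0 p (Q p) (s.u p.1 p.2) (fr (s.up p.1 p.2)) (s.up p.1 p.2)) p ≤ -μ * H p := by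
    filter_upwards [s.up_ae2] with p hp
    by_cases hpB : p ∈ Bx y0 s0 ρ
    · rw [hH, indicator_of_mem hpB, indicator_of_mem hpB]
      have hup : s.up p.1 p.2 = s.u p.1 p.2 := by
        have := hp (hpos p hpB).2
        simpa [upt, (hpos p hpB).2] using this
      rw [hup]
      by_cases hq : Q p ≤ 0
      · simp [GV, max_eq_left hq]
      · push Not at hq
        have hDp := hD p hpB
        have hin : (p.1 - y0)^2 + (p.2 - s0)^2 < r^2 := by
          simp only [hQ] at hq
          nlinarith [sq_nonneg r]
        have hη : |p.1 - y0| ≤ r := (abs_lt_of_sq_lt_sq (by nlinarith [sq_nonneg (p.1 - y0), sq_nonneg (p.2 - s0)]) hr0.le).le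
        have hσ : |p.2 - s0| ≤ r := (abs_lt_of_sq_lt_sq (by nlinarith [sq_nonneg (p.1 - y0), sq_nonneg (p.2 - s0)]) hr0.le).le
        have hpw := lemV_pw (e := s.u p.1 p.2 - k) (m := m) hK hr0.le (hΛ _ k ((hb p.1 p.2).trans (le_max_left _ _)) (le_max_right _ _)) hη hσ
        unfold GV
        rw [max_eq_right hq.le]
        rw [show s.u p.1 p.2 - (k - 2 * K * (p.1 - y0)) = s.u p.1 p.2 - k + 2 * K * (p.1 - y0) by ring]
        have h3 : |s.u p.1 p.2 - k| * (fr k - m + 2 * K * r + 2 * K * r * Λ) ≤ |s.u p.1 p.2 - k| * (-(μ/2)) :=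
          mul_le_mul_of_nonneg_left (by rw [hμd] at *; linarith) (abs_nonneg _)
        have h4 := mul_le_mul_of_nonneg_left (hpw.trans h3) (by positivity : 0 ≤ 2 * Q p)
        linarith
    · rw [hH, indicator_of_notMem hpB, indicator_of_notMem hpB]; simp
  have hI : ∫ p, H p = 0 := by
    have hnn : 0 ≤ ∫ p, H p := integral_nonneg hH0
    have hGi : Integrable ((Bx y0 s0 ρ).indicator (fun p => GV fr k m K y0 s0 p (Q p) (s.u p.1 p.2) (fr (s.up p.1 p.2)) (s.up p.1 p.2))) := by
      obtain ⟨M', L', hM', hL', hb', hf', hp', -⟩ := s.bounds hl hr.cont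
      rw [integrable_indicator_iff (Bx_open _ _ _).measurableSet]
      have hup : ∀ p ∈ Bx y0 s0 ρ, s.upt p.1 p.2 = s.up p.1 p.2 := fun p hp => by simp [upt, (hpos p hp).2]
      refine IntegrableOn.congr_fun (f := fun p => GV fr k m K y0 s0 p (Q p) (s.u p.1 p.2) (fr (s.upt p.1 p.2)) (s.upt p.1 p.2)) ?_
        (fun p hp => by simp only [hup p hp]) (Bx_open _ _ _).measurableSet
      refine IntegrableOn.of_bound (Bx_fin _ _ _) ?_ (4 * (r^2/4) * ((M' + |k|) * (L' + (|m| + 2 * K * ρ)) + (L' + |fr k|) * (M' + (|k| + 2 * K * ρ)))) ?_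
      · have m1 := hQc.aemeasurable (Bx_open y0 s0 ρ).measurableSet (μ := volume)
        have m3 : Measurable (fun p : ℝ × ℝ => s.upt p.1 p.2) := s.upt_meas
        have m2 : Measurable (fun p : ℝ × ℝ => fr (s.upt p.1 p.2)) := hr.cont.measurable.comp s.upt_meas
        have m4 : Measurable (fun p : ℝ × ℝ => s.u p.1 p.2) := s.meas
        have m5 : Measurable (fun p : ℝ × ℝ => fr (s.u p.1 p.2)) := hr.cont.measurable.comp s.meas
        have m6 : Measurable (fun p : ℝ × ℝ => Real.sign (s.u p.1 p.2 - k)) := sign_meas.comp (m4.sub_const k)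
        have m8 : Measurable (fun p : ℝ × ℝ => -m - 2 * K * (p.2 - s0)) := by fun_prop
        have m9 : Measurable (fun p : ℝ × ℝ => k - 2 * K * (p.1 - y0)) := by fun_prop
        have m10 : Measurable (fun p : ℝ × ℝ => |s.u p.1 p.2 - k|) := continuous_abs.measurable.comp (m4.sub_const k)
        refine AEMeasurable.aestronglyMeasurable ?_
        unfold GV
        exact ((aemeasurable_const.max m1).const_mul 2).mul
          ((m10.mul (m2.add m8)).sub ((m6.mul (m5.sub_const _)).mul (m3.sub m9))).aemeasurable
      · filter_upwards [ae_restrict_mem (Bx_open y0 s0 ρ).measurableSet] with p hp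
        rw [hup p hp]
        have hq := hp' p.1 p.2 (hpos p hp).2
        exact GV_bd hK hp (hQle p hp) (by positivity) (hb' _ _) (hf' _ (hb' _ _)).2 (hf' _ hq).2 hq
    · have := integral_mono_ae hGi (hHi.const_mul (-μ)) hle
      rw [integral_const_mul] at this
      have h5 : 0 ≤ -μ * ∫ p, H p := h2.trans this
      nlinarith
  have hH00 := (integral_eq_zero_iff_of_nonneg hH0 hHi).1 hI
  have hQ0 : 0 < Q (y0, s0) := by simp only [hQ, Pq]; simp; positivity
  have h0B : ((y0, s0) : ℝ × ℝ) ∈ Bx y0 s0 ρ := by simp [Bx, hρ]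
  have hQe : ∀ᶠ p in nhds ((y0, s0) : ℝ × ℝ), 0 < Q p ∧ p ∈ Bx y0 s0 ρ :=
    (((hQc _ h0B).continuousAt ((Bx_open _ _ _).mem_nhds h0B)).eventually (lt_mem_nhds hQ0)).and ((Bx_open _ _ _).mem_nhds h0B)
  obtain ⟨ε, hε, hball⟩ := Metric.eventually_nhds_iff.1 hQe
  refine ⟨ε, hε, ?_⟩
  filter_upwards [hH00] with p hp hpB
  have hd : dist p (y0, s0) < ε := by
    rw [Prod.dist_eq]; exact max_lt hpB.1 hpB.2
  obtain ⟨q1, q2⟩ := hball hd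
  rw [hH, indicator_of_mem q2, max_eq_right q1.le] at hp
  have := (mul_eq_zero.1 hp).resolve_left q1.ne'
  linarith [abs_eq_zero.1 this]

/-- The potential is a viscosity supersolution in the open right quadrant. -/
lemma lemV {a : ℝ} (hl : Continuous fl) (hr : UC fr a) {y0 s0 ρ k m K : ℝ} (hy : 0 < y0) (hs : 0 < s0) (hρ : 0 < ρ) (hK : 0 ≤ K)
    (hP : ∀ p ∈ Bx y0 s0 ρ, Pq (s.U y0 s0) k m K y0 s0 p.1 p.2 ≤ s.U p.1 p.2) : m ≤ fr k := by
  by_contra hμ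
  push Not at hμ
  set ρ' := min ρ (min y0 s0) with hρ'
  have hρ'0 : 0 < ρ' := lt_min hρ (lt_min hy hs)
  have hsub : Bx y0 s0 ρ' ⊆ Bx y0 s0 ρ := Bx_mono (min_le_left _ _)
  obtain ⟨r, hr0, hu⟩ := s.lemV_step3 hl hr (m := m) (K := K + 1) hρ'0 ((min_le_right _ _).trans (min_le_left _ _)) ((min_le_right _ _).trans (min_le_right _ _)) (by linarith) hμ
    (fun p hp => by have := hP p (hsub hp); unfold Pq at *; linarith)
  have hms : MeasurableSet {p : ℝ × ℝ | p ∈ Bx y0 s0 r → s.u p.1 p.2 = k} := by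
    have h2 : MeasurableSet {p : ℝ × ℝ | s.u p.1 p.2 = k} := measurableSet_eq_fun s.meas measurable_const
    convert (Bx_open y0 s0 r).measurableSet.compl.union h2 using 1
    ext p; simp only [mem_ofPred_eq, mem_union, mem_compl_iff]; tauto
  have hu2 : ∀ᵐ t : ℝ, ∀ᵐ x : ℝ, (x, t) ∈ Bx y0 s0 r → s.u x t = k := by
    rw [Measure.volume_eq_prod, Measure.ae_prod_iff_ae_ae hms] at hu
    rw [Measure.ae_ae_comm] at hu
    · exact hu
    · exact hms
  have hF : ∀ᵐ t : ℝ, 0 < t → |t - s0| < r → s.Fx y0 t = fr k := by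
    filter_upwards [hu2] with t ht h0 htr
    have : s.up y0 t = k := by
      refine tendsto_nhds_unique_of_frequently_eq (s.up_spec y0 t h0) tendsto_const_nhds (g := fun _ => k) ?_
      intro hev
      obtain ⟨b, hb, hsub⟩ := (mem_nhdsGT_iff_exists_Ioo_subset).1 hev
      have hb' : y0 < min b (y0 + r) := lt_min hb (by linarith)
      have : volume (Ioo y0 (min b (y0 + r))) = 0 := by
        refine measure_mono_null ?_ ht
        intro x hx hx2
        refine hsub ⟨hx.1, hx.2.trans_le (min_le_left _ _)⟩ (hx2 ⟨?_, htr⟩)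
        have := hx.2.trans_le (min_le_right _ _)
        rw [abs_of_pos (by linarith [hx.1])]; linarith
      rw [Real.volume_Ioo, ENNReal.ofReal_eq_zero] at this
      linarith
    simp [Fx, h0, dflux, this, not_lt.2 hy.le]
  -- choose a time slightly before s0
  have key : ∀ σ, 0 < σ → σ < min r ρ' → m - K * σ ≤ fr k := by
    intro σ h1 h2
    have hσr := h2.trans_le (min_le_left _ _)
    have hσρ := h2.trans_le (min_le_right _ _)
    have hσs : σ < s0 := hσρ.trans_le ((min_le_right _ _).trans (min_le_right _ _))
    have e1 := s.U_time hl hr.cont y0 (t₁ := s0 - σ) (t₂ := s0) (by linarith) (by linarith)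
    have e2 : (∫ t in (s0-σ)..s0, s.Fx y0 t) = ∫ t in (s0-σ)..s0, fr k := by
      refine intervalIntegral.integral_congr_ae ?_
      filter_upwards [hF] with t ht h3
      rw [uIoc_of_le (by linarith)] at h3
      exact ht (by linarith [h3.1]) (by rw [abs_lt]; constructor <;> linarith [h3.1, h3.2])
    rw [e2, intervalIntegral.integral_const, smul_eq_mul] at e1
    have e3 := hP (y0, s0 - σ) (hsub ⟨by simpa using hρ'0, by simp only; rw [abs_lt]; constructor <;> linarith⟩)
    unfold Pq at e3
    simp only [sub_self] at e3
    have : σ * (m - K * σ) ≤ σ * fr k := by nlinarith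
    exact le_of_mul_le_mul_left this h1
  have hmin : 0 < min r ρ' := lt_min hr0 hρ'0
  have h1 := key (min (min r ρ' / 2) ((m - fr k) / (2 * (K + 1)))) (lt_min (by positivity) (div_pos (by linarith) (by positivity))) ((min_le_left _ _).trans_lt (by linarith))
  have h2 : min (min r ρ' / 2) ((m - fr k) / (2 * (K + 1))) ≤ (m - fr k) / (2 * (K + 1)) := min_le_right _ _
  rw [le_div_iff₀ (by positivity)] at h2
  have h3 : 0 < min (min r ρ' / 2) ((m - fr k) / (2 * (K + 1))) := lt_min (by positivity) (div_pos (by linarith) (by positivity))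
  nlinarith

end ABSol
end

section
/-- Lax cost -/
def LC (f : ℝ → ℝ) (x t y s : ℝ) : ℝ := (t - s) * conj f ((x - y)/(t - s))

lemma LC_cont {f : ℝ → ℝ} {a : ℝ} (h : UC f a) (x t : ℝ) :
    ContinuousOn (fun p : ℝ × ℝ => LC f x t p.1 p.2) {p | p.2 < t} := by
  unfold LC
  refine ContinuousOn.mul (by fun_prop) ?_
  refine h.conj_cont.comp_continuousOn ?_
  refine ContinuousOn.div (by fun_prop) (by fun_prop) ?_
  intro p hp
  have : p.2 < t := hp
  exact (sub_pos.2 this).ne'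

lemma alg1 {β σ τ : ℝ} (h : σ ≠ 0) (h' : τ ≠ 0) : β/σ = β/τ + β/τ^2*(τ-σ) + β*(τ-σ)^2/(τ^2*σ) := by
  field_simp; ring

lemma alg2 {β τ0 τ σ y d : ℝ} (hβ : 0 < β) (h0 : 0 < τ0) (h1 : 0 < τ) (h2 : τ ≤ σ) :
    β*d^2/(τ0^2*σ) ≤ β/(τ0^2*τ) * (y^2+d^2) := by
  calc β*d^2/(τ0^2*σ) ≤ β*(y^2+d^2)/(τ0^2*τ) := by
        gcongr; nlinarith [sq_nonneg y]
    _ = _ := by ring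

lemma alg3 {a p τ σ y d : ℝ} (ha : 0 < a) (h1 : 0 < τ) (h2 : τ ≤ σ) :
    (y - p*d)^2/(a*σ) ≤ 2*(1+p^2)/(a*τ) * (y^2+d^2) := by
  calc (y - p*d)^2/(a*σ) ≤ (2*(1+p^2) * (y^2+d^2))/(a*τ) := by
        gcongr
        nlinarith [sq_nonneg (p * y + d), sq_nonneg y, sq_nonneg d, mul_nonneg (sq_nonneg p) (sq_nonneg y), mul_nonneg (sq_nonneg p) (sq_nonneg d)]
    _ = _ := by ring

namespace ABSol
variable {fl fr : ℝ → ℝ} {A B : ℝ} {u0 : ℝ → ℝ} (s : ABSol fl fr A B u0)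

lemma coer {a : ℝ} (hl : Continuous fl) (hr : UC fr a) : ∃ K, 0 ≤ K ∧ ∀ x t y r, 0 ≤ r → r < t →
    s.U x t + |x - y| - K * (t - r) ≤ s.U y r + LC fr x t y r := by
  obtain ⟨M, L, hM, hL, -, -, h1, h2⟩ := s.U_lip hl hr.cont
  obtain ⟨C, hC, hc⟩ := hr.conj_coer (M+1)
  refine ⟨L + C, by positivity, fun x t y r h0 hrt => ?_⟩
  have hτ : 0 < t - r := by linarith
  have e1 := (abs_le.1 (h1 y x r)).2
  have e2 := (abs_le.1 (h2 x r t h0 (by linarith))).2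
  rw [abs_of_pos hτ] at e2
  have e3 := mul_le_mul_of_nonneg_left (hc ((x-y)/(t-r))) hτ.le
  rw [abs_div, abs_of_pos hτ] at e3
  have e4 : (t - r) * ((M + 1) * (|x - y| / (t - r)) - C) = (M+1) * |x-y| - C * (t-r) := by
    field_simp
  unfold LC
  rw [e4] at e3
  linarith

set_option maxHeartbeats 1000000 in
lemma near_bdry {a : ℝ} (hl : Continuous fl) (hr : UC fr a) {x t η : ℝ} (hx : 0 < x) (ht : 0 < t) (hη : 0 < η) :
    ∃ y r, ((0 ≤ y ∧ r = 0) ∨ (y = 0 ∧ 0 ≤ r ∧ r < t)) ∧ s.U y r + LC fr x t y r ≤ s.U x t + η := by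
  by_contra hcon
  push Not at hcon
  obtain ⟨K, hK, hco⟩ := s.coer hl hr
  obtain ⟨M, L, hM, hL, -, -, -, h2⟩ := s.U_lip hl hr.cont
  have ha := hr.pos
  -- starting time
  set D := L + |conj fr 0| with hD
  have hD0 : 0 < D := by positivity
  set δ := min t (η / (2*D)) with hδ
  have hδ0 : 0 < δ := lt_min ht (by positivity)
  have hδt : δ ≤ t := min_le_left _ _
  have hδD : δ * D ≤ η/2 := by
    have : δ ≤ η / (2*D) := min_le_right _ _
    rw [le_div_iff₀ (by positivity)] at this
    linarith
  set β := η/2 * δ with hβ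
  have hβ0 : 0 < β := by positivity
  have hst : s.U x (t-δ) + LC fr x t x (t-δ) + β / (t - (t-δ)) ≤ s.U x t + η := by
    have e1 := (abs_le.1 (h2 x t (t-δ) ht.le (by linarith))).2
    have e2 : |t - δ - t| = δ := by rw [show t - δ - t = -δ by ring, abs_neg, abs_of_pos hδ0]
    rw [e2] at e1
    have e3 : LC fr x t x (t-δ) = δ * conj fr 0 := by unfold LC; simp
    have e4 : β / (t - (t-δ)) = η/2 := by rw [hβ, sub_sub_cancel]; field_simp
    rw [e3, e4]
    nlinarith [le_abs_self (conj fr 0)]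
  set R := x + K*t + η + 1 with hR
  set τ := min δ (β/(η + K*t + 1)) with hτ
  have hKt : 0 ≤ K*t := by positivity
  have hτ0 : 0 < τ := lt_min hδ0 (by positivity)
  have hτδ : τ ≤ δ := min_le_left _ _
  have hτβ : τ * (η + K*t + 1) ≤ β := by
    have : τ ≤ β/(η + K*t + 1) := min_le_right _ _
    rwa [le_div_iff₀ (by positivity)] at this
  -- minimise
  have hcomp : IsCompact (Icc (0:ℝ) R ×ˢ Icc (0:ℝ) (t-τ)) := isCompact_Icc.prod isCompact_Icc
  have hcont : ContinuousOn (fun p : ℝ × ℝ => s.U p.1 p.2 + LC fr x t p.1 p.2 + β/(t - p.2)) (Icc (0:ℝ) R ×ˢ Icc (0:ℝ) (t-τ)) := by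
    refine ContinuousOn.add (ContinuousOn.add ?_ ?_) ?_
    · exact (s.U_jcont hl hr.cont).mono (fun p hp => hp.2.1)
    · exact (LC_cont hr x t).mono (fun p hp => by
        have := hp.2.2
        show p.2 < t
        linarith)
    · refine ContinuousOn.div (by fun_prop) (by fun_prop) ?_
      intro p hp
      have := hp.2.2
      apply ne_of_gt; linarith
  obtain ⟨⟨y0, s0⟩, hp0, hmin⟩ := hcomp.exists_isMinOn ⟨(x, t-δ), ⟨⟨hx.le, by rw [hR]; linarith⟩, ⟨by simp only; linarith, by simp only; linarith⟩⟩⟩ hcont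
  have hle : s.U y0 s0 + LC fr x t y0 s0 + β/(t-s0) ≤ s.U x t + η := by
    refine le_trans (hmin (a := (x, t-δ)) ?_) hst
    exact ⟨⟨hx.le, by rw [hR]; linarith⟩, ⟨by simp only; linarith, by simp only; linarith⟩⟩
  obtain ⟨⟨hy0, hyR⟩, ⟨hs0, hsτ⟩⟩ := hp0
  simp only at hy0 hyR hs0 hsτ
  have hts : 0 < t - s0 := by linarith
  have hβt : 0 < β/(t-s0) := by positivity
  have hy0' : 0 < y0 := by
    rcases hy0.eq_or_lt with h | h
    · have := hcon y0 s0 (Or.inr ⟨h.symm, hs0, by linarith⟩); linarith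
    · exact h
  have hs0' : 0 < s0 := by
    rcases hs0.eq_or_lt with h | h
    · have := hcon y0 s0 (Or.inl ⟨hy0, h.symm⟩); linarith
    · exact h
  have hcc := hco x t y0 s0 hs0 (by linarith)
  have hKs : K * (t - s0) ≤ K*t := by nlinarith
  have hyR' : y0 < R := by
    have := neg_abs_le (x - y0)
    linarith
  have hsτ' : s0 < t - τ := by
    rcases hsτ.eq_or_lt with h | h
    · exfalso
      have e : t - s0 = τ := by linarith
      have : η + K*t + 1 ≤ β/(t-s0) := by
        rw [e, le_div_iff₀ hτ0]; linarith
      have := abs_nonneg (x - y0)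
      linarith
    · exact h
  -- touch
  set ρ := min (min y0 (R - y0)) (min s0 (t-τ-s0)) with hρ
  have hρ0 : 0 < ρ := lt_min (lt_min hy0' (by linarith)) (lt_min hs0' (by linarith))
  have r1 : ρ ≤ y0 := (min_le_left _ _).trans (min_le_left _ _)
  have r2 : ρ ≤ R - y0 := (min_le_left _ _).trans (min_le_right _ _)
  have r3 : ρ ≤ s0 := (min_le_right _ _).trans (min_le_left _ _)
  have r4 : ρ ≤ t-τ-s0 := (min_le_right _ _).trans (min_le_right _ _)
  set τ0 := t - s0 with hτ0'
  set p0 := (x - y0)/τ0 with hp0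
  set q := ginv fr p0 with hq
  have hV := s.lemV hl hr (k := q) (m := fr q + β/τ0^2) (K := 2*(1+p0^2)/(a*τ) + β/(τ0^2*τ)) hy0' hs0' hρ0 (by positivity) ?_
  · have : 0 < β/τ0^2 := by positivity
    linarith
  rintro ⟨y, r⟩ ⟨g1, g2⟩
  simp only at g1 g2 ⊢
  rw [abs_lt] at g1 g2
  have hm : s.U y0 s0 + LC fr x t y0 s0 + β/(t-s0) ≤ s.U y r + LC fr x t y r + β/(t-r) :=
    hmin (a := (y,r)) ⟨⟨by simp only; linarith, by simp only; linarith⟩, ⟨by simp only; linarith, by simp only; linarith⟩⟩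
  have hσ : τ ≤ t - r := by linarith
  have hσ0 : 0 < t - r := by linarith
  have hpp := hr.persp (x := x) (y := y) (y0 := y0) hσ0 hts
  rw [← hp0, ← hq] at hpp
  have e1 : τ0 - (t-r) = r - s0 := by rw [hτ0']; ring
  rw [e1] at hpp
  have e2 : β/(t-r) = β/τ0 + β/τ0^2*(r-s0) + β*(r-s0)^2/(τ0^2*(t-r)) := by
    rw [← e1]; exact alg1 hσ0.ne' hts.ne'
  have e3 := alg2 (y := y - y0) (d := r - s0) hβ0 hts hτ0 hσ
  have e4 := alg3 (y := y - y0) (d := r - s0) (p := p0) ha hτ0 hσ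
  unfold Pq
  unfold LC at hm
  rw [e2] at hm
  rw [← hτ0', ← hp0] at hm
  linarith

lemma back_r {a : ℝ} (hl : Continuous fl) (hr : UC fr a) {x t : ℝ} (hx : 0 < x) (ht : 0 < t) :
    ∃ y r, ((0 ≤ y ∧ r = 0) ∨ (y = 0 ∧ 0 ≤ r ∧ r < t)) ∧ s.U y r + LC fr x t y r ≤ s.U x t := by
  obtain ⟨K, hK, hco⟩ := s.coer hl hr
  set R := x + K*t + 1 with hR
  set τ := min t (x/(2*(K+1))) with hτ
  have hτ0 : 0 < τ := lt_min ht (by positivity)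
  have hτt : τ ≤ t := min_le_left _ _
  have hτx : τ * (K+1) ≤ x/2 := by
    have : τ ≤ x/(2*(K+1)) := min_le_right _ _
    rw [le_div_iff₀ (by positivity)] at this
    linarith
  have hKt : 0 ≤ K*t := by positivity
  have hcomp : IsCompact ((Icc (0:ℝ) R ×ˢ {(0:ℝ)}) ∪ ({(0:ℝ)} ×ˢ Icc (0:ℝ) (t-τ))) :=
    (isCompact_Icc.prod isCompact_singleton).union (isCompact_singleton.prod isCompact_Icc)
  have hcont : ContinuousOn (fun p : ℝ × ℝ => s.U p.1 p.2 + LC fr x t p.1 p.2) ((Icc (0:ℝ) R ×ˢ {(0:ℝ)}) ∪ ({(0:ℝ)} ×ˢ Icc (0:ℝ) (t-τ))) := by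
    refine ContinuousOn.add ?_ ?_
    · refine (s.U_jcont hl hr.cont).mono (fun p hp => ?_)
      rcases hp with hp | hp
      · exact (hp.2 : p.2 = 0).ge
      · exact hp.2.1
    · refine (LC_cont hr x t).mono (fun p hp => ?_)
      show p.2 < t
      rcases hp with hp | hp
      · rw [(hp.2 : p.2 = 0)]; exact ht
      · have := hp.2.2; linarith
  obtain ⟨⟨y0, s0⟩, hp0, hmin⟩ := hcomp.exists_isMinOn ⟨(0,0), Or.inl ⟨⟨le_rfl, by rw [hR]; positivity⟩, rfl⟩⟩ hcont
  refine ⟨y0, s0, ?_, ?_⟩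
  · rcases hp0 with hp | hp
    · exact Or.inl ⟨hp.1.1, hp.2⟩
    · refine Or.inr ⟨hp.1, hp.2.1, ?_⟩
      have := hp.2.2
      simp only at this
      linarith
  by_contra hc
  push Not at hc
  set m := s.U y0 s0 + LC fr x t y0 s0 with hm
  obtain ⟨y, r, hyr, hle⟩ := s.near_bdry hl hr hx ht (η := min ((m - s.U x t)/2) (min (1/2) (x/4))) (by
    refine lt_min ?_ (lt_min (by norm_num) (by positivity)); linarith)
  have g1 := min_le_left ((m - s.U x t)/2) (min (1/2) (x/4))
  have g2 := (min_le_right ((m - s.U x t)/2) (min (1/2) (x/4))).trans (min_le_left _ _)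
  have g3 := (min_le_right ((m - s.U x t)/2) (min (1/2) (x/4))).trans (min_le_right _ _)
  have hin : (y, r) ∈ ((Icc (0:ℝ) R ×ˢ {(0:ℝ)}) ∪ ({(0:ℝ)} ×ˢ Icc (0:ℝ) (t-τ))) := by
    rcases hyr with ⟨h1, h2⟩ | ⟨h1, h2, h3⟩
    · left
      refine ⟨⟨h1, ?_⟩, h2⟩
      subst h2
      have := hco x t y 0 le_rfl ht
      have := neg_abs_le (x-y)
      simp only
      rw [sub_zero] at *
      linarith
    · right
      refine ⟨h1, h2, ?_⟩
      subst h1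
      by_contra h4
      simp only at h4
      have := hco x t 0 r h2 h3
      rw [sub_zero, abs_of_pos hx] at this
      nlinarith
  have := hmin hin
  have h5 : m ≤ s.U y r + LC fr x t y r := this
  linarith

end ABSol
end

section
lemma LC_neg {f : ℝ → ℝ} {a : ℝ} (h : UC f a) (x t y r : ℝ) :
    LC (fun w => f (-w)) x t y r = LC f (-x) t (-y) r := by
  unfold LC
  rw [h.conj_neg]
  congr 2; ring

namespace ABSol
variable {fl fr : ℝ → ℝ} {A B : ℝ} {u0 : ℝ → ℝ} (s : ABSol fl fr A B u0)

/-- interface point reached from the right -/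
def HR (r : ℝ) : Prop := ∃ z, 0 ≤ z ∧ s.U z 0 + LC fr 0 r z 0 ≤ s.U 0 r
/-- interface point reached from the left -/
def HL (r : ℝ) : Prop := ∃ z, z ≤ 0 ∧ s.U z 0 + LC fl 0 r z 0 ≤ s.U 0 r

lemma reach_r {a : ℝ} (hl : Continuous fl) (hr : UC fr a) {r : ℝ} (hr0 : 0 < r)
    (hd : deriv fr (s.up 0 r) < 0) : s.HR r := by
  obtain ⟨K, hK, hco⟩ := s.coer hl hr
  set θ := ginv fr 0 with hθ
  have hθ' : deriv fr θ = 0 := hr.dg 0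
  have hup : s.up 0 r < θ := by
    rw [← hr.smono.lt_iff_lt, hθ']; exact hd
  have hder := s.U_deriv_r 0 r hr0
  rw [hasDerivWithinAt_iff_tendsto_slope' (by simp)] at hder
  have hev := hder.eventually_lt_const hup
  have hsmall : ∀ᶠ y in nhdsWithin (0:ℝ) (Ioi 0), ∃ z, 0 ≤ z ∧ s.U z 0 + LC fr y r z 0 ≤ s.U y r := by
    filter_upwards [hev, self_mem_nhdsWithin] with y hy hy0
    have hy0 : 0 < y := hy0
    rw [slope_def_field, div_lt_iff₀ (by linarith)] at hy
    obtain ⟨z, q, hz, hle⟩ := s.back_r hl hr hy0 hr0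
    rcases hz with ⟨h1, h2⟩ | ⟨h1, h2, h3⟩
    · subst h2; exact ⟨z, h1, hle⟩
    · exfalso
      subst h1
      have e1 := s.A_r hl hr (x₁ := 0) (x₂ := 0) le_rfl le_rfl h2 h3
      have hq : 0 < r - q := by linarith
      have e2 := hr.fy_lt (p := (y-0)/(r-q)) (u := θ) (by rw [hθ']; exact (by rw [sub_zero]; positivity : 0 < (y-0)/(r-q)).ne)
      have e3 := mul_lt_mul_of_pos_left e2 hq
      have e4 : (r-q) * ((y-0)/(r-q) * θ - fr θ) = y*θ - (r-q) * fr θ := by field_simp; ring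
      rw [e4] at e3
      have e5 : conj fr 0 = - fr θ := by unfold conj; rw [← hθ]; ring
      rw [sub_zero, zero_div, e5] at e1
      unfold LC at hle
      nlinarith
  -- compactness
  set Z : Set (ℝ × ℝ) := {p | p ∈ Icc (0:ℝ) 1 ×ˢ Icc (0:ℝ) (K*r+1) ∧ s.U p.2 0 + LC fr p.1 r p.2 0 - s.U p.1 r ≤ 0} with hZ
  have hUc := fun t => s.U_cont hl hr.cont t
  have hcont : Continuous (fun p : ℝ × ℝ => s.U p.2 0 + LC fr p.1 r p.2 0 - s.U p.1 r) := by
    have c1 := (hUc 0).comp (continuous_snd (X := ℝ) (Y := ℝ))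
    have c2 := (hUc r).comp (continuous_fst (X := ℝ) (Y := ℝ))
    have c3 : Continuous (fun p : ℝ × ℝ => (p.1 - p.2)/(r-0)) := by fun_prop
    exact (c1.add (continuous_const.mul (hr.conj_cont.comp c3))).sub c2
  have hZc : IsCompact Z := by
    have := (isCompact_Icc (a := (0:ℝ)) (b := 1)).prod (isCompact_Icc (a := (0:ℝ)) (b := K*r+1))
    exact this.inter_right (isClosed_le hcont continuous_const)
  have hcl : IsClosed (Prod.fst '' Z) := (hZc.image continuous_fst).isClosed
  have h0 : (0:ℝ) ∈ Prod.fst '' Z := by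
    refine hcl.mem_of_frequently_of_tendsto (b := nhdsWithin (0:ℝ) (Ioi 0)) (f := fun y => y) ?_ (tendsto_id.mono_left nhdsWithin_le_nhds)
    apply Eventually.frequently
    have h1 : ∀ᶠ y in nhdsWithin (0:ℝ) (Ioi 0), y < 1 := nhdsWithin_le_nhds (Iio_mem_nhds one_pos)
    filter_upwards [hsmall, self_mem_nhdsWithin, h1] with y ⟨z, hz, hz'⟩ hy0 hy1
    have hy0 : 0 < y := hy0
    refine ⟨(y,z), ⟨⟨⟨hy0.le, hy1.le⟩, ⟨hz, ?_⟩⟩, by simp only; linarith⟩, rfl⟩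
    have := hco y r z 0 le_rfl hr0
    rw [sub_zero] at this
    have := neg_abs_le (y - z)
    simp only
    linarith
  obtain ⟨⟨y,z⟩, ⟨⟨-, hz, -⟩, h2⟩, h3⟩ := h0
  simp only at h3 hz h2
  subst h3
  exact ⟨z, hz, by linarith⟩

lemma HR_compact {a : ℝ} (hl : Continuous fl) (hr : UC fr a) {δ t : ℝ} (hδ : 0 < δ) :
    IsCompact {r | r ∈ Icc δ t ∧ s.HR r} := by
  obtain ⟨K, hK, hco⟩ := s.coer hl hr
  have hcont : ContinuousOn (fun p : ℝ × ℝ => s.U p.2 0 + LC fr 0 p.1 p.2 0 - s.U 0 p.1) (Icc δ t ×ˢ Icc (0:ℝ) (K*t)) := by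
    have c1 : Continuous (fun p : ℝ × ℝ => s.U p.2 0) := (s.U_cont hl hr.cont 0).comp continuous_snd
    have c2 : ContinuousOn (fun p : ℝ × ℝ => s.U 0 p.1) (Icc δ t ×ˢ Icc (0:ℝ) (K*t)) := by
      refine (s.U_jcont hl hr.cont).comp (f := fun p : ℝ × ℝ => ((0:ℝ), p.1)) (by fun_prop) ?_
      intro p hp
      show 0 ≤ p.1
      have := hp.1.1
      linarith
    have c3 : ContinuousOn (fun p : ℝ × ℝ => (0 - p.2)/(p.1-0)) (Icc δ t ×ˢ Icc (0:ℝ) (K*t)) := by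
      refine ContinuousOn.div (by fun_prop) (by fun_prop) ?_
      intro p hp
      have := hp.1.1
      rw [sub_zero]; apply ne_of_gt; linarith
    have c4 : ContinuousOn (fun p : ℝ × ℝ => p.1 - 0) (Icc δ t ×ˢ Icc (0:ℝ) (K*t)) := by fun_prop
    exact (c1.continuousOn.add (c4.mul (hr.conj_cont.comp_continuousOn c3))).sub c2
  have hZc : IsCompact ((Icc δ t ×ˢ Icc (0:ℝ) (K*t)) ∩ (fun p : ℝ × ℝ => s.U p.2 0 + LC fr 0 p.1 p.2 0 - s.U 0 p.1) ⁻¹' Iic 0) := by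
    have hc := (isCompact_Icc (a := δ) (b := t)).prod (isCompact_Icc (a := (0:ℝ)) (b := K*t))
    exact hc.of_isClosed_subset (hcont.preimage_isClosed_of_isClosed hc.isClosed isClosed_Iic) inter_subset_left
  convert hZc.image continuous_fst using 1
  ext r
  constructor
  · rintro ⟨h1, z, hz, hle⟩
    refine ⟨(r,z), ⟨⟨h1, hz, ?_⟩, ?_⟩, rfl⟩
    · have := hco 0 r z 0 le_rfl (by linarith [h1.1])
      have e := neg_abs_le (0 - z)
      have : K * r ≤ K * t := by nlinarith [h1.2]
      simp only
      linarith
    · show _ ≤ (0:ℝ)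
      simp only; linarith
  · rintro ⟨⟨r', z⟩, ⟨⟨h1, hz, -⟩, h2⟩, rfl⟩
    have h2 : s.U z 0 + LC fr 0 r' z 0 - s.U 0 r' ≤ 0 := h2
    exact ⟨h1, z, hz, by linarith⟩

lemma HL_iff {a : ℝ} (hl : UC fl a) (hr : Continuous fr) (r : ℝ) : s.HL r ↔ s.refl.HR r := by
  constructor
  · rintro ⟨z, hz, h⟩
    refine ⟨-z, by linarith, ?_⟩
    rw [s.refl_U hl.cont hr, s.refl_U hl.cont hr, LC_neg hl]
    simpa using h
  · rintro ⟨z, hz, h⟩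
    refine ⟨-z, by linarith, ?_⟩
    rw [s.refl_U hl.cont hr, s.refl_U hl.cont hr, LC_neg hl] at h
    simpa using h

lemma negcont {f : ℝ → ℝ} (h : Continuous f) : Continuous (fun w => f (-w)) := h.comp continuous_neg

lemma HL_compact {a : ℝ} (hl : UC fl a) (hr : Continuous fr) {δ t : ℝ} (hδ : 0 < δ) :
    IsCompact {r | r ∈ Icc δ t ∧ s.HL r} := by
  simp_rw [s.HL_iff hl hr]
  exact s.refl.HR_compact (negcont hr) hl.neg hδ

lemma reach_l {a : ℝ} (hl : UC fl a) (hr : Continuous fr) {r : ℝ} (hr0 : 0 < r)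
    (hd : 0 < deriv fl (s.um 0 r)) : s.HL r := by
  rw [s.HL_iff hl hr]
  refine s.refl.reach_r (negcont hr) hl.neg hr0 ?_
  rw [deriv_comp_neg]
  have : s.refl.up 0 r = - s.um (-0) r := rfl
  rw [this]; simpa using hd

lemma back_l {a : ℝ} (hl : UC fl a) (hr : Continuous fr) {x t : ℝ} (hx : x < 0) (ht : 0 < t) :
    ∃ y r, ((y ≤ 0 ∧ r = 0) ∨ (y = 0 ∧ 0 ≤ r ∧ r < t)) ∧ s.U y r + LC fl x t y r ≤ s.U x t := by
  obtain ⟨y, r, h1, h2⟩ := s.refl.back_r (negcont hr) hl.neg (x := -x) (by linarith) ht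
  rw [s.refl_U hl.cont hr, s.refl_U hl.cont hr, LC_neg hl, neg_neg] at h2
  refine ⟨-y, r, ?_, h2⟩
  rcases h1 with h1 | h1
  · exact Or.inl ⟨by linarith [h1.1], h1.2⟩
  · exact Or.inr ⟨by linarith [h1.1], h1.2⟩

lemma iface_back {a : ℝ} (hl : UC fl a) (hr : UC fr a) (hAB : fl A = fr B) (hA : deriv fl A ≤ 0) (hB : 0 ≤ deriv fr B)
    {t : ℝ} (ht : 0 ≤ t) :
    ∃ r0, 0 ≤ r0 ∧ r0 ≤ t ∧ s.U 0 r0 - fl A * (t - r0) ≤ s.U 0 t ∧ (r0 = 0 ∨ (0 < r0 ∧ (s.HR r0 ∨ s.HL r0))) := by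
  have key : ∀ r0, 0 ≤ r0 → r0 ≤ t → (∀ r, r0 < r → r ≤ t → ¬ (s.HR r ∨ s.HL r)) →
      s.U 0 r0 - fl A * (t - r0) ≤ s.U 0 t := by
    intro r0 h0 h1 h2
    have e1 := s.U_time hl.cont hr.cont 0 h0 h1
    have e2 : (∫ τ in r0..t, s.Fx 0 τ) = ∫ τ in r0..t, fl A := by
      refine intervalIntegral.integral_congr_ae ?_
      filter_upwards [s.iface hl hr hAB hA hB] with τ hτ h3
      rw [uIoc_of_le h1] at h3
      have hτ0 : 0 < τ := by linarith [h3.1]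
      obtain ⟨-, -, g1, g2⟩ := hτ hτ0
      rcases g1.eq_or_lt with g | g
      · exact g.symm
      · exfalso
        apply h2 τ h3.1 h3.2
        rcases g2 g with g3 | g3
        · exact Or.inr (s.reach_l hl hr.cont hτ0 g3)
        · exact Or.inl (s.reach_r hl.cont hr hτ0 g3)
    rw [e2, intervalIntegral.integral_const, smul_eq_mul] at e1
    linarith
  by_cases hS : ∃ r, 0 < r ∧ r ≤ t ∧ (s.HR r ∨ s.HL r)
  · obtain ⟨r1, h1, h2, h3⟩ := hS
    have hc := (s.HR_compact hl.cont hr (t := t) h1).union (s.HL_compact hl hr.cont (t := t) h1)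
    have hm : ∀ r, r ∈ ({r | r ∈ Icc r1 t ∧ s.HR r} ∪ {r | r ∈ Icc r1 t ∧ s.HL r}) ↔ r ∈ Icc r1 t ∧ (s.HR r ∨ s.HL r) := by
      intro r
      rw [and_or_left]; rfl
    obtain ⟨r0, hr0, hub⟩ := hc.exists_isGreatest ⟨r1, (hm r1).2 ⟨⟨le_rfl, h2⟩, h3⟩⟩
    obtain ⟨⟨g1, g2⟩, g3⟩ := (hm r0).1 hr0
    refine ⟨r0, by linarith, g2, key r0 (by linarith) g2 ?_, Or.inr ⟨by linarith, g3⟩⟩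
    intro r k1 k2 k3
    have := hub ((hm r).2 ⟨⟨by linarith, k2⟩, k3⟩)
    linarith
  · push Not at hS
    refine ⟨0, le_rfl, ht, key 0 le_rfl ht ?_, Or.inl rfl⟩
    intro r k1 k2 k3
    have := hS r k1 k2
    tauto

end ABSol
end

section
/-- both points on the same closed side, `f` being the flux of that side -/
def Side (fl fr : ℝ → ℝ) (y x : ℝ) (f : ℝ → ℝ) : Prop :=
  (0 ≤ y ∧ 0 ≤ x ∧ f = fr) ∨ (y ≤ 0 ∧ x ≤ 0 ∧ f = fl)

/-- route from `(y,0)` to `(x,T)` with cost `c` -/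
def Route (T : ℝ) (fl fr : ℝ → ℝ) (γ y x c : ℝ) : Prop :=
  (∃ f, Side fl fr y x f ∧ c = LC f x T y 0) ∨
  ∃ r0 r1 f g, 0 ≤ r0 ∧ r0 ≤ r1 ∧ r1 ≤ T ∧ Side fl fr y 0 f ∧ Side fl fr 0 x g ∧
    (r0 = 0 → y = 0) ∧ (r1 = T → x = 0) ∧
    c = LC f 0 r0 y 0 - γ * (r1 - r0) + LC g x T 0 r1

lemma Side.rev {fl fr f : ℝ → ℝ} {y x : ℝ} (h : Side fr fl y x f) : Side fl fr (-x) (-y) f := by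
  rcases h with ⟨h1, h2, h3⟩ | ⟨h1, h2, h3⟩
  · exact Or.inr ⟨by linarith, by linarith, h3⟩
  · exact Or.inl ⟨by linarith, by linarith, h3⟩

lemma LC_rev (f : ℝ → ℝ) (T x t y r : ℝ) : LC f x t y r = LC f (-y) (T - r) (-x) (T - t) := by
  unfold LC
  rw [show T - r - (T - t) = t - r by ring, show -y - -x = x - y by ring]

lemma Route.rev {T γ y x c : ℝ} {fl fr : ℝ → ℝ} (h : Route T fr fl γ y x c) :
    Route T fl fr γ (-x) (-y) c := by
  rcases h with ⟨f, hf, hc⟩ | ⟨r0, r1, f, g, h0, h1, h2, hf, hg, hy, hx, hc⟩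
  · refine Or.inl ⟨f, hf.rev, ?_⟩
    rw [hc, LC_rev f T]; simp
  · refine Or.inr ⟨T - r1, T - r0, g, f, by linarith, by linarith, by linarith, by simpa using hg.rev, by simpa using hf.rev, ?_, ?_, ?_⟩
    · intro h; rw [hx (by linarith)]; simp
    · intro h; rw [hy (by linarith)]; simp
    · rw [hc, LC_rev f T 0, LC_rev g T x]; simp; ring

lemma LC_self (f : ℝ → ℝ) (x t y : ℝ) : LC f x t y t = 0 := by simp [LC]

namespace ABSol
variable {fl fr : ℝ → ℝ} {A B : ℝ} {u0 : ℝ → ℝ} (s : ABSol fl fr A B u0)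

lemma A_leg {a : ℝ} (hl : UC fl a) (hr : UC fr a) {f : ℝ → ℝ} {y x t1 t2 : ℝ} (h : Side fl fr y x f)
    (h1 : 0 ≤ t1) (h2 : t1 ≤ t2) (h3 : t1 = t2 → y = x) : s.U x t2 ≤ s.U y t1 + LC f x t2 y t1 := by
  rcases h2.eq_or_lt with e | e
  · subst e
    rw [LC_self, h3 rfl]; simp
  rcases h with ⟨g1, g2, rfl⟩ | ⟨g1, g2, rfl⟩
  · exact s.A_r hl.cont hr g1 g2 h1 e
  · exact s.A_l hl hr.cont g1 g2 h1 e

lemma A_route {a : ℝ} (hl : UC fl a) (hr : UC fr a) (hAB : fl A = fr B) (hA : deriv fl A ≤ 0) (hB : 0 ≤ deriv fr B)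
    {T y x c : ℝ} (hT : 0 < T) (h : Route T fl fr (fl A) y x c) : s.U x T ≤ s.U y 0 + c := by
  rcases h with ⟨f, hf, rfl⟩ | ⟨r0, r1, f, g, h0, h1, h2, hf, hg, hy, hx, rfl⟩
  · exact s.A_leg hl hr hf le_rfl hT.le (fun h => absurd h hT.ne)
  · have e1 := s.A_leg hl hr hf le_rfl h0 (fun h => hy h.symm)
    have e2 := s.A_i hl hr hAB hA hB h0 h1
    have e3 := s.A_leg hl hr hg (h0.trans h1) h2 (fun h => (hx h).symm)
    linarith

lemma iface_route {a : ℝ} (hl : UC fl a) (hr : UC fr a) (hAB : fl A = fr B) (hA : deriv fl A ≤ 0) (hB : 0 ≤ deriv fr B)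
    {t : ℝ} (ht : 0 ≤ t) :
    ∃ r0 y f, 0 ≤ r0 ∧ r0 ≤ t ∧ Side fl fr y 0 f ∧ (r0 = 0 → y = 0) ∧
      s.U y 0 + (LC f 0 r0 y 0 - fl A * (t - r0)) ≤ s.U 0 t := by
  obtain ⟨r0, h0, h1, h2, h3⟩ := s.iface_back hl hr hAB hA hB ht
  rcases h3 with rfl | ⟨h3, ⟨z, hz, hle⟩ | ⟨z, hz, hle⟩⟩
  · refine ⟨0, 0, fr, le_rfl, ht, Or.inl ⟨le_rfl, le_rfl, rfl⟩, fun _ => rfl, ?_⟩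
    rw [LC_self]; linarith
  · exact ⟨r0, z, fr, h0, h1, Or.inl ⟨hz, le_rfl, rfl⟩, fun h => absurd h h3.ne', by linarith⟩
  · exact ⟨r0, z, fl, h0, h1, Or.inr ⟨hz, le_rfl, rfl⟩, fun h => absurd h h3.ne', by linarith⟩

lemma B_route {a : ℝ} (hl : UC fl a) (hr : UC fr a) (hAB : fl A = fr B) (hA : deriv fl A ≤ 0) (hB : 0 ≤ deriv fr B)
    {T : ℝ} (hT : 0 < T) (x : ℝ) : ∃ y c, Route T fl fr (fl A) y x c ∧ s.U y 0 + c ≤ s.U x T := by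
  have fin : ∀ r1 g, 0 ≤ r1 → r1 ≤ T → Side fl fr 0 x g → (r1 = T → x = 0) → s.U 0 r1 + LC g x T 0 r1 ≤ s.U x T →
      ∃ y c, Route T fl fr (fl A) y x c ∧ s.U y 0 + c ≤ s.U x T := by
    intro r1 g h0 h1 hg hx hle
    obtain ⟨r0, y, f, k0, k1, hf, hy, hle'⟩ := s.iface_route hl hr hAB hA hB h0
    exact ⟨y, _, Or.inr ⟨r0, r1, f, g, k0, k1, h1, hf, hg, hy, hx, rfl⟩, by linarith⟩
  rcases lt_trichotomy x 0 with hx | hx | hx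
  · obtain ⟨y, r, h, hle⟩ := s.back_l hl hr.cont hx hT
    rcases h with ⟨h1, rfl⟩ | ⟨rfl, h1, h2⟩
    · exact ⟨y, _, Or.inl ⟨fl, Or.inr ⟨h1, hx.le, rfl⟩, rfl⟩, hle⟩
    · exact fin r fl h1 h2.le (Or.inr ⟨le_rfl, hx.le, rfl⟩) (fun h => absurd h h2.ne) hle
  · subst hx
    exact fin T fr hT.le le_rfl (Or.inl ⟨le_rfl, le_rfl, rfl⟩) (fun _ => rfl) (by rw [LC_self]; simp)
  · obtain ⟨y, r, h, hle⟩ := s.back_r hl.cont hr hx hT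
    rcases h with ⟨h1, rfl⟩ | ⟨rfl, h1, h2⟩
    · exact ⟨y, _, Or.inl ⟨fr, Or.inl ⟨h1, hx.le, rfl⟩, rfl⟩, hle⟩
    · exact fin r fr h1 h2.le (Or.inl ⟨le_rfl, hx.le, rfl⟩) (fun h => absurd h h2.ne) hle

/-- calibrated straight legs carry the right speed -/
lemma leg_r {a : ℝ} (hl : Continuous fl) (hr : UC fr a) {y x t1 t2 t p ξ : ℝ} (hy : 0 ≤ y) (hx : 0 ≤ x) (h1 : 0 ≤ t1)
    (h3 : t1 < t) (h4 : t < t2) (hp : p = (x-y)/(t2-t1)) (hξ : ξ = y + p*(t-t1)) (hξ0 : 0 < ξ)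
    (hc : s.U y t1 + LC fr x t2 y t1 ≤ s.U x t2) :
    deriv fr (s.um ξ t) = p ∧ deriv fr (s.up ξ t) = p := by
  have ha := hr.pos
  have d1 : 0 < t - t1 := by linarith
  have d2 : 0 < t2 - t := by linarith
  have d3 : 0 < t2 - t1 := by linarith
  have hpx : x - y = p * (t2 - t1) := by rw [hp]; field_simp
  have b1 : ∀ z, (z - y)/(t-t1) = p + (z-ξ)/(t-t1) := by
    intro z; rw [hξ]; field_simp; ring
  have b2 : ∀ z, (x - z)/(t2-t) = p - (z-ξ)/(t2-t) := by
    intro z; rw [hξ]; field_simp; linarith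
  set q := ginv fr p with hq
  have up1 : ∀ z, 0 ≤ z → s.U z t ≤ s.U y t1 + (t-t1)*conj fr p + q*(z-ξ) + (z-ξ)^2/(a*(t-t1)) := by
    intro z hz
    have e1 := s.A_r hl hr hy hz h1 h3
    rw [b1] at e1
    have e2 := mul_le_mul_of_nonneg_left (hr.conj_quad p (p + (z-ξ)/(t-t1))) d1.le
    have e3 : (t-t1) * (conj fr p + ginv fr p * (p + (z-ξ)/(t-t1) - p) + (p + (z-ξ)/(t-t1) - p)^2/a) =
      (t-t1)*conj fr p + q*(z-ξ) + (z-ξ)^2/(a*(t-t1)) := by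
      rw [hq]; field_simp; ring
    linarith
  have lo1 : ∀ z, 0 ≤ z → s.U x t2 - (t2-t)*conj fr p + q*(z-ξ) - (z-ξ)^2/(a*(t2-t)) ≤ s.U z t := by
    intro z hz
    have e1 := s.A_r hl hr hz hx (by linarith) h4
    rw [b2] at e1
    have e2 := mul_le_mul_of_nonneg_left (hr.conj_quad p (p - (z-ξ)/(t2-t))) d2.le
    have e3 : (t2-t) * (conj fr p + ginv fr p * (p - (z-ξ)/(t2-t) - p) + (p - (z-ξ)/(t2-t) - p)^2/a) =
      (t2-t)*conj fr p - q*(z-ξ) + (z-ξ)^2/(a*(t2-t)) := by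
      rw [hq]; field_simp; ring
    linarith
  have hc' : s.U y t1 + (t2-t1) * conj fr p ≤ s.U x t2 := by
    unfold LC at hc; rw [← hp] at hc; exact hc
  have u0 := up1 ξ hξ0.le
  have l0 := lo1 ξ hξ0.le
  simp only [sub_self, mul_zero, ne_eq, OfNat.ofNat_ne_zero, not_false_eq_true, zero_pow, zero_div, add_zero, sub_zero] at u0 l0
  set C := 1/(a*(t-t1)) + 1/(a*(t2-t)) with hC
  have hder : HasDerivAt (fun z => s.U z t) q ξ := by
    rw [hasDerivAt_iff_isLittleO]
    have hO : (fun z => s.U z t - s.U ξ t - (z - ξ) • q) =O[nhds ξ] fun z => (z-ξ)^2 := by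
      apply Asymptotics.IsBigO.of_bound C
      filter_upwards [Ioi_mem_nhds hξ0] with z hz
      have hz : 0 < z := hz
      have e1 := up1 z hz.le
      have e2 := lo1 z hz.le
      have k1 : (z-ξ)^2/(a*(t-t1)) = 1/(a*(t-t1)) * (z-ξ)^2 := by ring
      have k2 : (z-ξ)^2/(a*(t2-t)) = 1/(a*(t2-t)) * (z-ξ)^2 := by ring
      have k3 : 0 ≤ 1/(a*(t-t1)) * (z-ξ)^2 := by positivity
      have k4 : 0 ≤ 1/(a*(t2-t)) * (z-ξ)^2 := by positivity
      rw [Real.norm_eq_abs, Real.norm_eq_abs, abs_of_nonneg (sq_nonneg (z-ξ)), smul_eq_mul, abs_le, hC]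
      constructor <;> nlinarith
    refine hO.trans_isLittleO ?_
    have := Asymptotics.isLittleO_pow_sub_sub ξ (m := 2) (by norm_num)
    simpa using this
  have r1 : s.up ξ t = q :=
    (uniqueDiffWithinAt_Ioi ξ).eq_deriv _ (s.U_deriv_r ξ t (by linarith)) hder.hasDerivWithinAt
  have r2 : s.um ξ t = q :=
    (uniqueDiffWithinAt_Iio ξ).eq_deriv _ (s.U_deriv_l ξ t (by linarith)) hder.hasDerivWithinAt
  rw [r1, r2, hq, hr.dg]
  simp

lemma leg_l {a : ℝ} (hl : UC fl a) (hr : Continuous fr) {y x t1 t2 t p ξ : ℝ} (hy : y ≤ 0) (hx : x ≤ 0) (h1 : 0 ≤ t1)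
    (h3 : t1 < t) (h4 : t < t2) (hp : p = (x-y)/(t2-t1)) (hξ : ξ = y + p*(t-t1)) (hξ0 : ξ < 0)
    (hc : s.U y t1 + LC fl x t2 y t1 ≤ s.U x t2) :
    deriv fl (s.um ξ t) = p ∧ deriv fl (s.up ξ t) = p := by
  have := s.refl.leg_r (negcont hr) hl.neg (y := -y) (x := -x) (t1 := t1) (t2 := t2) (t := t) (p := -p) (ξ := -ξ)
    (by linarith) (by linarith) h1 h3 h4 (by rw [hp]; ring) (by rw [hξ]; ring) (by linarith)
    (by rw [s.refl_U hl.cont hr, s.refl_U hl.cont hr, LC_neg hl, neg_neg, neg_neg]; exact hc)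
  have e1 : s.refl.up (-ξ) t = - s.um (- -ξ) t := rfl
  have e2 : s.refl.um (-ξ) t = - s.up (- -ξ) t := rfl
  rw [deriv_comp_neg, deriv_comp_neg, e1, e2] at this
  simp only [neg_neg, neg_inj] at this
  exact ⟨this.2, this.1⟩

lemma stay {a : ℝ} (hl : UC fl a) (hr : UC fr a) (hAB : fl A = fr B) (hA : deriv fl A ≤ 0) (hB : 0 ≤ deriv fr B)
    {t1 t2 : ℝ} (h1 : 0 ≤ t1) (h2 : t1 ≤ t2) (hc : s.U 0 t1 - fl A * (t2 - t1) ≤ s.U 0 t2) :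
    ∀ᵐ t : ℝ, t1 < t → t < t2 → fl (s.um 0 t) = fl A ∧ fr (s.up 0 t) = fl A := by
  have hif := s.iface hl hr hAB hA hB
  have e1 := s.U_time hl.cont hr.cont 0 h1 h2
  have hi := s.Fx_int hl.cont hr.cont 0 t1 t2
  have e2 : (∫ t in t1..t2, (s.Fx 0 t - fl A)) ≤ 0 := by
    rw [intervalIntegral.integral_sub hi (by simp), intervalIntegral.integral_const, smul_eq_mul]
    linarith
  have hnn : 0 ≤ᵐ[volume.restrict (Ioc t1 t2)] fun t => s.Fx 0 t - fl A := by
    rw [EventuallyLE, ae_restrict_iff' measurableSet_Ioc]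
    filter_upwards [hif] with t ht h3
    have := (ht (by linarith [h3.1])).2.2.1
    simp only [Pi.zero_apply]; linarith
  rw [intervalIntegral.integral_of_le h2] at e2
  have e3 : (∫ t in Ioc t1 t2, (s.Fx 0 t - fl A)) = 0 := le_antisymm e2 (integral_nonneg_of_ae hnn)
  rw [integral_eq_zero_iff_of_nonneg_ae hnn] at e3
  · rw [EventuallyEq, ae_restrict_iff' measurableSet_Ioc] at e3
    filter_upwards [hif, e3] with t g1 g2 g3 g4
    have := g2 ⟨g3, g4.le⟩
    simp only [Pi.zero_apply] at this
    obtain ⟨k1, k2, -⟩ := g1 (by linarith)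
    exact ⟨by linarith, by linarith⟩
  · have := hi.sub (intervalIntegrable_const (c := fl A))
    rw [intervalIntegrable_iff_integrableOn_Ioc_of_le h2] at this
    exact this

end ABSol
end

section
/-- pointwise part of the characteristic condition with speed `p` -/
def Good {fl fr : ℝ → ℝ} {A B : ℝ} {u0 : ℝ → ℝ} (s : ABSol fl fr A B u0) (ξ p t : ℝ) : Prop :=
  (ξ < 0 → deriv fl (s.um ξ t) = p ∧ deriv fl (s.up ξ t) = p) ∧
  (0 < ξ → deriv fr (s.um ξ t) = p ∧ deriv fr (s.up ξ t) = p) ∧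
  (ξ = 0 → fl (s.um 0 t) = fl A ∧ fr (s.up 0 t) = fl A)

lemma conj_zero_ge {f : ℝ → ℝ} {a : ℝ} (h : UC f a) (w : ℝ) : - f w ≤ conj f 0 := by
  have := h.fy 0 w; linarith

namespace ABSol
variable {fl fr : ℝ → ℝ} {A B : ℝ} {u0 : ℝ → ℝ} (s : ABSol fl fr A B u0)

lemma leg_good {a : ℝ} (hl : UC fl a) (hr : UC fr a) (hAB : fl A = fr B) (hA : deriv fl A ≤ 0) (hB : 0 ≤ deriv fr B)
    {f : ℝ → ℝ} {y x t1 t2 : ℝ} (h : Side fl fr y x f) (h1 : 0 ≤ t1)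
    (hc : s.U y t1 + LC f x t2 y t1 ≤ s.U x t2) :
    ∀ᵐ t : ℝ, t1 < t → t < t2 → Good s (y + (x-y)/(t2-t1)*(t-t1)) ((x-y)/(t2-t1)) t := by
  by_cases h2 : t1 < t2
  swap
  · exact Eventually.of_forall fun t g1 g2 => absurd (g1.trans g2) h2
  have d : 0 < t2 - t1 := by linarith
  by_cases h0 : y = 0 ∧ x = 0
  · obtain ⟨rfl, rfl⟩ := h0
    have := s.stay hl hr hAB hA hB h1 h2.le (by
      have e : LC f 0 t2 0 t1 = (t2 - t1) * conj f 0 := by simp [LC]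
      rw [e] at hc
      have e2 : - fl A ≤ conj f 0 := by
        rcases h with ⟨-, -, rfl⟩ | ⟨-, -, rfl⟩
        · rw [hAB]; exact conj_zero_ge hr B
        · exact conj_zero_ge hl A
      nlinarith)
    filter_upwards [this] with t ht g1 g2
    simp only [sub_self, zero_div, zero_mul, add_zero]
    exact ⟨fun h => absurd h (lt_irrefl _), fun h => absurd h (lt_irrefl _), fun _ => ht g1 g2⟩
  refine Eventually.of_forall fun t g1 g2 => ?_
  have e : y + (x-y)/(t2-t1)*(t-t1) = (y * (t2-t) + x * (t-t1))/(t2-t1) := by field_simp; ring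
  have k1 : 0 < t2 - t := by linarith
  have k2 : 0 < t - t1 := by linarith
  rcases h with ⟨hy, hx, rfl⟩ | ⟨hy, hx, rfl⟩
  · have hpos : 0 < y + (x-y)/(t2-t1)*(t-t1) := by
      rw [e]; apply div_pos _ d
      rcases hy.eq_or_lt with hy | hy
      · have hx : 0 < x := lt_of_le_of_ne hx (fun h => h0 ⟨hy.symm, h.symm⟩)
        rw [← hy]; nlinarith [mul_pos hx k2]
      · have := mul_pos hy k1
        have := mul_nonneg hx k2.le
        linarith
    exact ⟨fun h => absurd h hpos.not_gt, fun _ => s.leg_r hl.cont hr hy hx h1 g1 g2 rfl rfl hpos hc, fun h => absurd h hpos.ne'⟩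
  · have hneg : y + (x-y)/(t2-t1)*(t-t1) < 0 := by
      rw [e]; apply div_neg_of_neg_of_pos _ d
      rcases hy.eq_or_lt with hy | hy
      · have hx : x < 0 := lt_of_le_of_ne hx (fun h => h0 ⟨hy, h⟩)
        rw [hy]; nlinarith [mul_neg_of_neg_of_pos hx k2]
      · have := mul_neg_of_neg_of_pos hy k1
        have := mul_nonpos_of_nonpos_of_nonneg hx k2.le
        linarith
    exact ⟨fun _ => s.leg_l hl hr.cont hy hx h1 g1 g2 rfl rfl hneg hc, fun h => absurd h hneg.not_gt, fun h => absurd h hneg.ne⟩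

lemma good_to {ζ : ℝ → ℝ} {p t : ℝ} (h : Good s (ζ t) p t) (hd : HasDerivAt ζ p t) :
    (ζ t < 0 → HasDerivAt ζ (deriv fl (s.um (ζ t) t)) t ∧
      deriv fl (s.um (ζ t) t) = deriv fl (s.up (ζ t) t)) ∧
    (0 < ζ t → HasDerivAt ζ (deriv fr (s.um (ζ t) t)) t ∧
      deriv fr (s.um (ζ t) t) = deriv fr (s.up (ζ t) t)) ∧
    (ζ t = 0 → fl (s.um 0 t) = fl A ∧ fr (s.up 0 t) = fl A) := by
  refine ⟨fun g => ?_, fun g => ?_, h.2.2⟩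
  · obtain ⟨k1, k2⟩ := h.1 g
    rw [k1, k2]; exact ⟨hd, rfl⟩
  · obtain ⟨k1, k2⟩ := h.2.1 g
    rw [k1, k2]; exact ⟨hd, rfl⟩

lemma affine_deriv (y p t1 t : ℝ) : HasDerivAt (fun t => y + p*(t-t1)) p t := by
  have := (((hasDerivAt_id t).sub_const t1).const_mul p).const_add y
  simpa using this

lemma ae_ne (c : ℝ) : ∀ᵐ t : ℝ, t ≠ c := by
  rw [ae_iff]; simp

lemma gic {a : ℝ} (hl : UC fl a) (hr : UC fr a) (hAB : fl A = fr B) (hA : deriv fl A ≤ 0) (hB : 0 ≤ deriv fr B)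
    {T y x c : ℝ} (hT : 0 < T) (h : Route T fl fr (fl A) y x c) (hc : s.U y 0 + c ≤ s.U x T) :
    ∃ ζ, IsABgic T fl fr (fl A) s ζ ∧ ζ T = x ∧ ζ 0 = y := by
  rcases h with ⟨f, hf, rfl⟩ | ⟨r0, r1, f, g, h0, h1, h2, hf, hg, hy, hx, rfl⟩
  · refine ⟨fun t => y + (x-y)/(T-0)*(t-0), ⟨?_, ?_⟩, ?_, ?_⟩
    · refine ⟨‖(x-y)/(T-0)‖₊, ?_⟩
      apply LipschitzWith.lipschitzOnWith
      apply LipschitzWith.of_dist_le_mul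
      intro p q
      rw [Real.dist_eq, Real.dist_eq, coe_nnnorm, Real.norm_eq_abs, ← abs_mul]
      apply le_of_eq; congr 1; ring
    · rw [ae_restrict_iff' measurableSet_Icc]
      filter_upwards [s.leg_good hl hr hAB hA hB hf le_rfl hc, ae_ne 0, ae_ne T] with t ht n1 n2 hm
      exact s.good_to (ζ := fun t => y + (x-y)/(T-0)*(t-0)) (ht (lt_of_le_of_ne hm.1 n1.symm) (lt_of_le_of_ne hm.2 n2)) (affine_deriv _ _ _ _)
    · simp only [sub_zero]; field_simp; ring
    · simp
  · -- calibration of each leg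
    have e1 := s.A_leg hl hr hf le_rfl h0 (fun h => hy h.symm)
    have e2 := s.A_i hl hr hAB hA hB h0 h1
    have e3 := s.A_leg hl hr hg (h0.trans h1) h2 (fun h => (hx h).symm)
    have c1 : s.U y 0 + LC f 0 r0 y 0 ≤ s.U 0 r0 := by linarith
    have c2 : s.U 0 r0 - fl A * (r1 - r0) ≤ s.U 0 r1 := by linarith
    have c3 : s.U 0 r1 + LC g x T 0 r1 ≤ s.U x T := by linarith
    set P := (0 - y)/(r0 - 0) with hP
    set Q := (x - 0)/(T - r1) with hQ
    have P1 : P * r0 = -y := by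
      rcases h0.eq_or_lt with h | h
      · rw [hy h.symm, ← h]; simp
      · rw [hP]; field_simp; simp
    have Q1 : Q * (T - r1) = x := by
      rcases h2.eq_or_lt with h | h
      · rw [hx h, h]; simp
      · have : T - r1 ≠ 0 := by linarith
        rw [hQ]; field_simp; simp
    set ζ : ℝ → ℝ := fun t => P * min (t - r0) 0 + Q * max (t - r1) 0 with hζ
    have z1 : ∀ t, t ≤ r0 → ζ t = y + P*(t-0) := by
      intro t ht
      simp only [hζ]
      rw [min_eq_left (by linarith), max_eq_right (by linarith)]; linarith
    have z2 : ∀ t, r0 ≤ t → t ≤ r1 → ζ t = 0 := by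
      intro t ht ht'
      simp only [hζ]
      rw [min_eq_right (by linarith), max_eq_right (by linarith)]; simp
    have z3 : ∀ t, r1 ≤ t → ζ t = 0 + Q*(t-r1) := by
      intro t ht
      simp only [hζ]
      rw [min_eq_right (by linarith), max_eq_left (by linarith)]; simp
    refine ⟨ζ, ⟨?_, ?_⟩, ?_, ?_⟩
    · refine ⟨‖P‖₊ + ‖Q‖₊, ?_⟩
      apply LipschitzWith.lipschitzOnWith
      apply LipschitzWith.of_dist_le_mul
      intro p q
      rw [Real.dist_eq, Real.dist_eq, NNReal.coe_add, coe_nnnorm, coe_nnnorm, Real.norm_eq_abs, Real.norm_eq_abs, add_mul]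
      have m1 : |min (p - r0) 0 - min (q-r0) 0| ≤ |p - q| := by
        have := abs_min_sub_min_le_max (p-r0) 0 (q-r0) 0
        simpa using this
      have m2 : |max (p - r1) 0 - max (q-r1) 0| ≤ |p - q| := by
        have := abs_max_sub_max_le_abs (p-r1) (q-r1) 0
        simpa using this
      calc |ζ p - ζ q| = |P * (min (p - r0) 0 - min (q-r0) 0) + Q * (max (p - r1) 0 - max (q-r1) 0)| := by
            simp only [hζ]; congr 1; ring
        _ ≤ _ := abs_add_le _ _
        _ ≤ |P| * |p-q| + |Q| * |p-q| := by
            rw [abs_mul, abs_mul]; gcongr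
    · rw [ae_restrict_iff' measurableSet_Icc]
      filter_upwards [s.leg_good hl hr hAB hA hB hf le_rfl c1, s.stay hl hr hAB hA hB h0 h1 c2,
        s.leg_good hl hr hAB hA hB hg (h0.trans h1) c3, ae_ne 0, ae_ne r0, ae_ne r1, ae_ne T] with t k1 k2 k3 n0 n1 n2 n3 hm
      have hm0 := lt_of_le_of_ne hm.1 n0.symm
      have hm1 := lt_of_le_of_ne hm.2 n3
      rcases lt_or_gt_of_ne n1 with g1 | g1
      · refine s.good_to (p := P) ?_ ?_
        · rw [z1 t g1.le]; exact k1 hm0 g1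
        · refine (affine_deriv y P 0 t).congr_of_eventuallyEq ?_
          filter_upwards [Iio_mem_nhds g1] with z hz
          exact z1 z (le_of_lt hz)
      rcases lt_or_gt_of_ne n2 with g2 | g2
      · rw [z2 t g1.le g2.le]
        exact ⟨fun h => absurd h (lt_irrefl _), fun h => absurd h (lt_irrefl _), fun _ => k2 g1 g2⟩
      · refine s.good_to (p := Q) ?_ ?_
        · rw [z3 t g2.le]; exact k3 g2 hm1
        · refine (affine_deriv 0 Q r1 t).congr_of_eventuallyEq ?_
          filter_upwards [Ioi_mem_nhds g2] with z hz
          exact z3 z (le_of_lt hz)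
    · rw [z3 T h2, zero_add]; exact Q1
    · rw [z1 0 h0]; simp

end ABSol
end

/-- the initial positions of the AB-genuine/interface
characteristics of the backward-forward solution `u^*` cover the whole real
line (Lemma 4.5 of the paper). -/
theorem charSet0_covers_line
    {T a θl θr A B : ℝ} {fl fr : ℝ → ℝ}
    (hT : 0 < T)
    (hflC : ContDiff ℝ 2 fl) (hfrC : ContDiff ℝ 2 fr)
    (ha : 0 < a)
    (hfl2 : ∀ w : ℝ, a ≤ deriv (deriv fl) w)
    (hfr2 : ∀ w : ℝ, a ≤ deriv (deriv fr) w)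
    (hf0 : fl 0 = fr 0) (hf1 : fl 1 = fr 1)
    (hθl : deriv fl θl = 0) (hθr : deriv fr θr = 0)
    (hθl0 : 0 ≤ θl) (hθr1 : θr ≤ 1)
    (hAB : fl A = fr B) (hA' : deriv fl A ≤ 0) (hB' : 0 ≤ deriv fr B)
    {Bb Aa : ℝ} {ω : ℝ → ℝ}
    (hBb : Bb ≤ θr) (hBbf : fr Bb = fr B)
    (hAa : θl ≤ Aa) (hAaf : fl Aa = fl A)
    (hω : Attainable T fl fr A B ω)
    (v : ABSol fr fl Bb Aa (fun x => ω (-x)))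
    (ustar : ABSol fl fr A B (fun x => v.u (-x) T))
    :
    (⋃ x : ℝ, charSet0 T fl fr (fl A) ustar x) = Set.univ := by
  have hl : UC fl a := ⟨hflC, ha, hfl2⟩
  have hr : UC fr a := ⟨hfrC, ha, hfr2⟩
  have hBA : fr Bb = fl Aa := by rw [hBbf, hAaf, hAB]
  have hb1 : deriv fr Bb ≤ 0 := by rw [← hθr]; exact hr.smono.monotone hBb
  have ha1 : 0 ≤ deriv fl Aa := by rw [← hθl]; exact hl.smono.monotone hAa
  have hγ : fr Bb = fl A := by rw [hBbf, hAB]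
  have hU : ∀ y, ustar.U y 0 = v.U 0 T - v.U (-y) T := by
    intro y
    have e1 := ustar.U_space 0 y 0
    have e2 := v.U_space 0 (-y) T
    have e3 : ustar.U 0 0 = 0 := by simp [ABSol.U]
    have e4 : (∫ z in (0:ℝ)..y, ustar.u z 0) = ∫ z in (0:ℝ)..y, v.u (-z) T := by
      refine intervalIntegral.integral_congr_ae ?_
      filter_upwards [ustar.init] with z hz _ using hz
    have e5 : (∫ z in (0:ℝ)..y, v.u (-z) T) = ∫ z in (-y)..(-0), v.u z T :=
      intervalIntegral.integral_comp_neg (fun z => v.u z T)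
    rw [neg_zero, intervalIntegral.integral_symm 0 (-y)] at e5
    linarith
  rw [eq_univ_iff_forall]
  intro y
  obtain ⟨x', c, hR, hle⟩ := v.B_route hr hl hBA hb1 ha1 hT (-y)
  rw [hγ] at hR
  have hR' := hR.rev
  rw [neg_neg] at hR'
  obtain ⟨y', c', hR2, hle2⟩ := ustar.B_route hl hr hAB hA' hB' hT (-x')
  have hR3 := hR2.rev
  rw [neg_neg, ← hγ] at hR3
  have h4 := v.A_route hr hl hBA hb1 ha1 hT hR3
  have h5 := hU y
  have h6 := hU y'
  obtain ⟨ζ, h7, h8, h9⟩ := ustar.gic hl hr hAB hA' hB' hT hR' (by linarith)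
  exact mem_iUnion.2 ⟨-x', ζ, ⟨h7, h8⟩, h9⟩
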